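/- Theorem 3.2 (upper blow-up rate): Let (u,v) be a classical solution of problem (1.1) that blows up at time T < ∞. Then there exists a constant C > 0 such that for all t ∈ (0,T): u(R,t) ≤ log C − log(T−t) and v(R,t) ≤ log C − log(T−t); equivalently e^{u(R,t)} ≤ C/(T−t) and e^{v(R,t)} ≤ C/(T−t). -/

import Mathlib

/-!
A high value of the solution forces it to cease to exist soon afterwards. Let `t0` be a time at
which `e^u` or `e^v` attains its maximum `K` over the closed ball and over all earlier times. As the
solution is radial and radially nondecreasing, the maximum sits on the sphere. If `K` is large, then
`T - t0 ≤ (log (8 log K) + 1) / K²`, and applying this to the last such time before a given `t`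
yields every rate `(T - t)^{-p}` with `p > 1/2`, in particular the rate for `p = 1`.

*Closeness of the components.* At a boundary point where `u > v`, the flux of `u - v` is
`e^v - e^u < 0`, which damps the difference. Since `e^u` and `e^v` grow at most at the self-similar
rate, the boundary values at a time `t < t0` are at least of order `(t0 - t + K⁻²)^{-1/2}`, and
comparison with a self-similar barrier gives `|u - v| ≤ D K^{-γ}` at the time `t0`.

*Life time.* Along a radius, `a = (u + v) / 2` is a function of the distance `y` to the sphere with
`a_t ≥ a_yy` and flux `-a_y ≥ e^a` at `y = 0`. Its exponential mean
`E(t) = ∫ K (e^{-Ky} - e^{-Kδ}) a(y,t) dy` over `[0,δ]` satisfies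
`E' ≥ K² (e^{a(0,t) - log K} - a(0,t) + E)` up to exponentially small terms. Hence
`X = E - log K + 1` grows exponentially while it lies in `(0,1]` and at least like a multiple of
`e^X` beyond, so that the solution lives at most for the time `(log (1/X(t0)) + 1) / K²` after `t0`.

*Gain.* It remains to see that `X(t0) ≥ 1/(8 log K)`. At the time `t0`, `a(0,t0)` is almost
`L = log K`, and up to then all values are at most `L`. By convexity the flux is at most
`K (1 - ηL) + ηK a` with `η = 1/(2L)`. With `B(y,t) = e^{Ky} ∫_y^δ K (e^{-Kz} - e^{-Kδ}) a dz`, the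
function `a - (1 + η) B` then satisfies a Robin condition at `y = 0` that forces it down to `1 - ηL`
on the time scale `K⁻²`, as comparison with an explicit solution of the heat equation shows. Over
the time span `K^{-3/2}` all errors are `o(1/L)`, so that `(1 + η) E ≥ L - 1/2 - o(1/L)`, and
`(L - 1/2)/(1 + 1/(2L)) = L - 1 + 1/(2L + 1)` leaves the required gain.
-/

open Set Real Metric MeasureTheory Filter Topology

/-- The Euclidean Laplacian of `f : ℝⁿ → ℝ` at `x`, computed as the sum of second
directional derivatives along the coordinate directions. -/
noncomputable def lap {n : ℕ} (f : EuclideanSpace ℝ (Fin n) → ℝ)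
    (x : EuclideanSpace ℝ (Fin n)) : ℝ :=
  ∑ i : Fin n, iteratedDeriv 2 (fun s : ℝ => f (x + s • EuclideanSpace.single i (1 : ℝ))) 0

/-- The outward normal derivative `∇f · (x/R)` on the sphere of radius `R`. -/
noncomputable def normalDeriv {n : ℕ} (R : ℝ) (f : EuclideanSpace ℝ (Fin n) → ℝ)
    (x : EuclideanSpace ℝ (Fin n)) : ℝ :=
  deriv (fun s : ℝ => f (x + s • (R⁻¹ • x))) 0

/-- Admissible initial data for problem (1.1): nonnegative, smooth, radial with
nondecreasing radial profiles, and satisfying the compatibility conditions. -/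
structure AdmissibleData (n : ℕ) (R : ℝ)
    (u₀ v₀ : EuclideanSpace ℝ (Fin n) → ℝ) : Prop where
  u0_nonneg : ∀ x ∈ closedBall (0 : EuclideanSpace ℝ (Fin n)) R, 0 ≤ u₀ x
  v0_nonneg : ∀ x ∈ closedBall (0 : EuclideanSpace ℝ (Fin n)) R, 0 ≤ v₀ x
  u0_smooth : ContDiffOn ℝ (⊤ : ℕ∞) u₀ (closedBall (0 : EuclideanSpace ℝ (Fin n)) R)
  v0_smooth : ContDiffOn ℝ (⊤ : ℕ∞) v₀ (closedBall (0 : EuclideanSpace ℝ (Fin n)) R)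
  u0_radial_mono : ∀ x ∈ closedBall (0 : EuclideanSpace ℝ (Fin n)) R,
    ∀ y ∈ closedBall (0 : EuclideanSpace ℝ (Fin n)) R, ‖x‖ ≤ ‖y‖ → u₀ x ≤ u₀ y
  v0_radial_mono : ∀ x ∈ closedBall (0 : EuclideanSpace ℝ (Fin n)) R,
    ∀ y ∈ closedBall (0 : EuclideanSpace ℝ (Fin n)) R, ‖x‖ ≤ ‖y‖ → v₀ x ≤ v₀ y
  compat_u : ∀ x : EuclideanSpace ℝ (Fin n), ‖x‖ = R → normalDeriv R u₀ x = Real.exp (v₀ x)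
  compat_v : ∀ x : EuclideanSpace ℝ (Fin n), ‖x‖ = R → normalDeriv R v₀ x = Real.exp (u₀ x)
  compat_u' : ∀ x ∈ closedBall (0 : EuclideanSpace ℝ (Fin n)) R, 0 ≤ lap u₀ x + Real.exp (v₀ x)
  compat_v' : ∀ x ∈ closedBall (0 : EuclideanSpace ℝ (Fin n)) R, 0 ≤ lap v₀ x + Real.exp (u₀ x)

/-- A classical solution of problem (1.1) on `[0,T)` on the ball of radius `R`:
continuous on `cl(B_R) × [0,T)`, of class C²,¹ on `cl(B_R) × (0,T)`, satisfying the
equations `u_t = Δu + λ₁ e^v`, `v_t = Δv + λ₂ e^u` in `B_R × (0,T)`, the boundary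
conditions `∂u/∂η = e^v`, `∂v/∂η = e^u` on `∂B_R × (0,T)`, and the initial conditions. -/
structure IsClassicalSolution (n : ℕ) (R T lam1 lam2 : ℝ)
    (u v : EuclideanSpace ℝ (Fin n) → ℝ → ℝ)
    (u₀ v₀ : EuclideanSpace ℝ (Fin n) → ℝ) : Prop where
  cont_u : ContinuousOn (fun p : EuclideanSpace ℝ (Fin n) × ℝ => u p.1 p.2)
    ((closedBall (0 : EuclideanSpace ℝ (Fin n)) R) ×ˢ Ico (0 : ℝ) T)
  cont_v : ContinuousOn (fun p : EuclideanSpace ℝ (Fin n) × ℝ => v p.1 p.2)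
    ((closedBall (0 : EuclideanSpace ℝ (Fin n)) R) ×ˢ Ico (0 : ℝ) T)
  reg_space_u : ∀ t ∈ Ioo (0 : ℝ) T,
    ContDiffOn ℝ 2 (fun x => u x t) (closedBall (0 : EuclideanSpace ℝ (Fin n)) R)
  reg_space_v : ∀ t ∈ Ioo (0 : ℝ) T,
    ContDiffOn ℝ 2 (fun x => v x t) (closedBall (0 : EuclideanSpace ℝ (Fin n)) R)
  reg_time_u : ∀ x ∈ closedBall (0 : EuclideanSpace ℝ (Fin n)) R, ∀ t ∈ Ioo (0 : ℝ) T,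
    DifferentiableAt ℝ (u x) t
  reg_time_v : ∀ x ∈ closedBall (0 : EuclideanSpace ℝ (Fin n)) R, ∀ t ∈ Ioo (0 : ℝ) T,
    DifferentiableAt ℝ (v x) t
  pde_u : ∀ x ∈ ball (0 : EuclideanSpace ℝ (Fin n)) R, ∀ t ∈ Ioo (0 : ℝ) T,
    deriv (u x) t = lap (fun y => u y t) x + lam1 * Real.exp (v x t)
  pde_v : ∀ x ∈ ball (0 : EuclideanSpace ℝ (Fin n)) R, ∀ t ∈ Ioo (0 : ℝ) T,
    deriv (v x) t = lap (fun y => v y t) x + lam2 * Real.exp (u x t)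
  bc_u : ∀ x : EuclideanSpace ℝ (Fin n), ‖x‖ = R → ∀ t ∈ Ioo (0 : ℝ) T,
    normalDeriv R (fun y => u y t) x = Real.exp (v x t)
  bc_v : ∀ x : EuclideanSpace ℝ (Fin n), ‖x‖ = R → ∀ t ∈ Ioo (0 : ℝ) T,
    normalDeriv R (fun y => v y t) x = Real.exp (u x t)
  init_u : ∀ x ∈ closedBall (0 : EuclideanSpace ℝ (Fin n)) R, u x 0 = u₀ x
  init_v : ∀ x ∈ closedBall (0 : EuclideanSpace ℝ (Fin n)) R, v x 0 = v₀ x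

/-- `(u,v)` blows up at time `T`: `limsup_{t→T⁻} sup_{cl(B_R)} (u(·,t) + v(·,t)) = ∞`. -/
def BlowsUpAt (n : ℕ) (R T : ℝ) (u v : EuclideanSpace ℝ (Fin n) → ℝ → ℝ) : Prop :=
  ∀ M : ℝ, ∃ᶠ t in 𝓝[<] T, ∃ x ∈ closedBall (0 : EuclideanSpace ℝ (Fin n)) R, M < u x t + v x t

/-! ### First touching and derivative tests -/

lemma exists_first_zero {X ι : Type*} [TopologicalSpace X] [T2Space X] [Finite ι] {S : Set X}
    (hS : IsCompact S) {t1 t2 : ℝ} {f : ι → X → ℝ → ℝ}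
    (hc : ∀ i, ContinuousOn (fun p : X × ℝ => f i p.1 p.2) (S ×ˢ Icc t1 t2))
    (h0 : ∀ i, ∀ x ∈ S, f i x t1 < 0)
    (hpos : ∃ i, ∃ x ∈ S, ∃ t ∈ Icc t1 t2, 0 ≤ f i x t) :
    ∃ i, ∃ x ∈ S, ∃ t ∈ Ioc t1 t2, f i x t = 0 ∧ ∀ j, ∀ y ∈ S, ∀ s ∈ Icc t1 t, f j y s ≤ 0 := by
  set B : Set (X × ℝ) := ⋃ i, (S ×ˢ Icc t1 t2) ∩ (fun p : X × ℝ => f i p.1 p.2) ⁻¹' Ici 0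
  have hSt : IsCompact (S ×ˢ Icc t1 t2) := hS.prod isCompact_Icc
  have hB : IsCompact B := isCompact_iUnion fun i =>
    hSt.of_isClosed_subset ((hc i).preimage_isClosed_of_isClosed hSt.isClosed isClosed_Ici)
      inter_subset_left
  obtain ⟨i₀, x₀, hx₀, s₀, hs₀, hf₀⟩ := hpos
  obtain ⟨⟨x, t⟩, hxt, hmin⟩ := hB.exists_isMinOn
    ⟨(x₀, s₀), mem_iUnion.2 ⟨i₀, ⟨hx₀, hs₀⟩, hf₀⟩⟩ continuous_snd.continuousOn
  obtain ⟨i, ⟨hx, ht⟩, hfi⟩ := mem_iUnion.1 hxt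
  have hlt : ∀ j, ∀ y ∈ S, ∀ s ∈ Ico t1 t, f j y s < 0 := fun j y hy s hs => by
    by_contra! hneg
    exact hs.2.not_ge (isMinOn_iff.1 hmin (y, s)
      (mem_iUnion.2 ⟨j, ⟨hy, hs.1, hs.2.le.trans ht.2⟩, hneg⟩))
  have ht1 : t1 < t := ht.1.lt_of_ne fun h => (h0 i x hx).not_ge (h ▸ hfi)
  have hle : ∀ j, ∀ y ∈ S, ∀ s ∈ Icc t1 t, f j y s ≤ 0 := fun j y hy s hs => by
    have hcy : ContinuousOn (fun s => f j y s) (Icc t1 t) :=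
      ((hc j).comp (by fun_prop : ContinuousOn (fun s : ℝ => (y, s)) (Icc t1 t2))
        fun r hr => ⟨hy, hr⟩).mono (Icc_subset_Icc_right ht.2)
    rw [← closure_Ico ht1.ne] at hcy hs
    exact ((hcy s hs).mono subset_closure).closure_le hs continuousWithinAt_const
      fun r hr => (hlt j y hy r hr).le
  exact ⟨i, x, hx, t, ⟨ht1, ht.2⟩, le_antisymm (hle i x hx t ⟨ht1.le, le_rfl⟩) hfi, hle⟩

lemma hasDerivWithinAt_nonneg_of_isMaxOn_Icc_right {g : ℝ → ℝ} {d a b : ℝ} (hab : a < b)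
    (hd : HasDerivWithinAt g d (Icc a b) b) (hmax : IsMaxOn g (Icc a b) b) : 0 ≤ d := by
  have hcone : a - b ∈ posTangentConeAt (Icc a b) b :=
    mem_posTangentConeAt_of_segment_subset <| by
      rw [add_sub_cancel, segment_symm, segment_eq_Icc hab.le]
  have h := hmax.localize.hasFDerivWithinAt_nonpos hd.hasFDerivWithinAt hcone
  simp only [ContinuousLinearMap.toSpanSingleton_apply, smul_eq_mul] at h
  exact nonneg_of_mul_nonpos_right h (sub_neg.2 hab)

lemma hasDerivWithinAt_nonpos_of_isMaxOn_Icc_left {g : ℝ → ℝ} {d a b : ℝ} (hab : a < b)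
    (hd : HasDerivWithinAt g d (Icc a b) a) (hmax : IsMaxOn g (Icc a b) a) : d ≤ 0 := by
  have hcone : b - a ∈ posTangentConeAt (Icc a b) a :=
    mem_posTangentConeAt_of_segment_subset <| by rw [add_sub_cancel, segment_eq_Icc hab.le]
  have h := hmax.localize.hasFDerivWithinAt_nonpos hd.hasFDerivWithinAt hcone
  simp only [ContinuousLinearMap.toSpanSingleton_apply, smul_eq_mul] at h
  exact nonpos_of_mul_nonpos_right h (sub_pos.2 hab)

lemma second_deriv_nonpos_of_isLocalMax {g g' : ℝ → ℝ} {g'' y : ℝ}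
    (hg : ∀ᶠ z in 𝓝 y, HasDerivAt g (g' z) z) (hg' : HasDerivAt g' g'' y)
    (hmax : IsLocalMax g y) : g'' ≤ 0 := by
  by_contra! hpos
  have hderiv : deriv g =ᶠ[𝓝 y] g' := hg.mono fun z hz => hz.deriv
  have hderiv2 : deriv (deriv g) y = g'' := by rw [hderiv.deriv_eq, hg'.deriv]
  have hmin := isLocalMin_of_deriv_deriv_pos (hderiv2 ▸ hpos) hmax.deriv_eq_zero
    hg.self_of_nhds.continuousAt
  have hconst : g =ᶠ[𝓝 y] fun _ => g y := by
    filter_upwards [hmin, hmax] with z h1 h2 using le_antisymm h2 h1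
  have hzero : deriv (deriv g) y = 0 := by simp [hconst.deriv.deriv_eq]
  exact hpos.ne' (hderiv2 ▸ hzero)

/-! ### The Laplacian -/

/-- Euclidean space `ℝⁿ`. -/
abbrev Eucl (n : ℕ) := EuclideanSpace ℝ (Fin n)

section Laplacian

variable {n : ℕ} {f g : Eucl n → ℝ} {x : Eucl n}

lemma contDiffAt_line (hf : ContDiffAt ℝ 2 f x) (e : Eucl n) :
    ContDiffAt ℝ 2 (fun s : ℝ => f (x + s • e)) 0 :=
  ContDiffAt.comp (0 : ℝ) (by simpa using hf) (by fun_prop)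

lemma iteratedDeriv_two_line (hf : ContDiffAt ℝ 2 f x) (e : Eucl n) :
    iteratedDeriv 2 (fun s : ℝ => f (x + s • e)) 0 = iteratedFDeriv ℝ 2 f x ![e, e] := by
  have hline : ∀ s : ℝ, HasDerivAt (fun s : ℝ => x + s • e) e s := fun s => by
    simpa using ((hasDerivAt_id s).smul_const e).const_add x
  have hx : x + (0 : ℝ) • e = x := by simp
  have htend : Tendsto (fun s : ℝ => x + s • e) (𝓝 0) (𝓝 x) := by
    simpa only [hx] using (hline 0).continuousAt.tendsto
  have hdiff : ∀ᶠ y in 𝓝 x, DifferentiableAt ℝ f y :=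
    (hf.eventually (by simp)).mono fun y hy => hy.differentiableAt (by norm_num)
  have hderiv : deriv (fun s : ℝ => f (x + s • e)) =ᶠ[𝓝 0] fun s => fderiv ℝ f (x + s • e) e := by
    filter_upwards [htend.eventually hdiff] with s hs
    exact (hs.hasFDerivAt.comp_hasDerivAt s (hline s)).deriv
  have hfderiv : DifferentiableAt ℝ (fderiv ℝ f) (x + (0 : ℝ) • e) := by
    rw [hx]
    exact (hf.fderiv_right (m := 1) (by norm_num)).differentiableAt (by norm_num)
  have hfderiv_line := hfderiv.hasFDerivAt.comp_hasDerivAt (0 : ℝ) (hline 0)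
  have hsecond := hfderiv_line.clm_apply (hasDerivAt_const (0 : ℝ) e)
  rw [iteratedDeriv_succ, iteratedDeriv_one, iteratedFDeriv_two_apply, hderiv.deriv_eq]
  simp only [hx] at hsecond
  refine hsecond.deriv.trans ?_
  simp

lemma lap_eq_laplacian (hf : ContDiffAt ℝ 2 f x) : lap f x = Laplacian.laplacian f x := by
  rw [InnerProductSpace.laplacian_eq_iteratedFDeriv_orthonormalBasis f
    (EuclideanSpace.basisFun (Fin n) ℝ)]
  simp only [lap, iteratedDeriv_two_line hf, EuclideanSpace.basisFun_apply]

lemma lap_sub (hf : ContDiffAt ℝ 2 f x) (hg : ContDiffAt ℝ 2 g x) :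
    lap (fun y => f y - g y) x = lap f x - lap g x := by
  rw [lap_eq_laplacian hf, lap_eq_laplacian hg, ← hf.laplacian_sub hg]
  exact lap_eq_laplacian (hf.sub hg)

lemma lap_neg : lap (fun y => -f y) x = -lap f x := by
  simp only [lap, ← Finset.sum_neg_distrib, iteratedDeriv_fun_neg]

lemma lap_nonpos_of_isLocalMax (hf : ContDiffAt ℝ 2 f x) (hmax : IsLocalMax f x) :
    lap f x ≤ 0 := by
  refine Finset.sum_nonpos fun i _ => ?_
  have hline : Tendsto (fun s : ℝ => x + s • EuclideanSpace.single i (1 : ℝ)) (𝓝 0) (𝓝 x) :=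
    Continuous.tendsto' (by fun_prop) _ _ (by simp)
  have hslice := contDiffAt_line hf (EuclideanSpace.single i (1 : ℝ))
  have hderiv : DifferentiableAt ℝ (deriv fun s : ℝ => f (x + s • EuclideanSpace.single i 1)) 0 :=
    ((hslice.fderiv_right (m := 1) (by norm_num)).differentiableAt (by norm_num)).clm_apply
      (differentiableAt_const 1)
  rw [iteratedDeriv_succ, iteratedDeriv_one]
  refine second_deriv_nonpos_of_isLocalMax
    ((hslice.eventually (by simp)).mono fun s hs => (hs.differentiableAt (by simp)).hasDerivAt)
    hderiv.hasDerivAt ?_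
  simpa [IsLocalMax, IsMaxFilter] using hline.eventually hmax

lemma lap_comp_linearIsometryEquiv (Q : Eucl n ≃ₗᵢ[ℝ] Eucl n) (hf : ContDiffAt ℝ 2 f (Q x)) :
    lap (fun y => f (Q y)) x = lap f (Q x) := by
  rw [lap_eq_laplacian hf, InnerProductSpace.laplacian_eq_iteratedFDeriv_orthonormalBasis f
    ((EuclideanSpace.basisFun (Fin n) ℝ).map Q)]
  simp [lap, ← iteratedDeriv_two_line hf]

lemma exists_abs_lap_le {R : ℝ} (hR : 0 < R)
    (hg : ContDiffOn ℝ 2 g (closedBall (0 : Eucl n) R)) :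
    ∃ F, ∀ x ∈ ball (0 : Eucl n) R, |lap g x| ≤ F := by
  have hU : UniqueDiffOn ℝ (closedBall (0 : Eucl n) R) :=
    uniqueDiffOn_convex (convex_closedBall _ _) (by simp [interior_closedBall _ hR.ne', hR])
  obtain ⟨K, hK⟩ := (isCompact_closedBall (0 : Eucl n) R).exists_bound_of_continuousOn
    (hg.continuousOn_iteratedFDerivWithin (m := 2) le_rfl hU)
  refine ⟨∑ _ : Fin n, K, fun x hx => ?_⟩
  have hc : ContDiffAt ℝ 2 g x :=
    hg.contDiffAt (mem_of_superset (isOpen_ball.mem_nhds hx) ball_subset_closedBall)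
  have hKx := hK x (ball_subset_closedBall hx)
  rw [iteratedFDerivWithin_eq_iteratedFDeriv hU hc (ball_subset_closedBall hx)] at hKx
  refine (Finset.abs_sum_le_sum_abs _ _).trans (Finset.sum_le_sum fun i _ => ?_)
  rw [iteratedDeriv_two_line hc]
  refine ((iteratedFDeriv ℝ 2 g x).le_opNorm _).trans ?_
  simpa [Fin.prod_univ_two] using hKx

lemma lap_comp_norm_sq {Φ Φ' : ℝ → ℝ} {Φ'' : ℝ}
    (h : ∀ᶠ q in 𝓝 (‖x‖ ^ 2), HasDerivAt Φ (Φ' q) q) (h' : HasDerivAt Φ' Φ'' (‖x‖ ^ 2)) :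
    lap (fun y => Φ (‖y‖ ^ 2)) x = 4 * ‖x‖ ^ 2 * Φ'' + 2 * n * Φ' (‖x‖ ^ 2) := by
  have hslice : ∀ i : Fin n, iteratedDeriv 2
      (fun s : ℝ => Φ (‖x + s • EuclideanSpace.single i (1 : ℝ)‖ ^ 2)) 0
        = 4 * x i ^ 2 * Φ'' + 2 * Φ' (‖x‖ ^ 2) := fun i => by
    set q : ℝ → ℝ := fun s => ‖x‖ ^ 2 + 2 * s * x i + s ^ 2
    have hq : ∀ s : ℝ, ‖x + s • EuclideanSpace.single i (1 : ℝ)‖ ^ 2 = q s := fun s => by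
      rw [norm_add_sq_real, inner_smul_right, norm_smul]
      simp [q, EuclideanSpace.inner_single_right]
      ring
    have hq' : ∀ s, HasDerivAt q (2 * x i + 2 * s) s := fun s => by
      have := ((((hasDerivAt_id s).const_mul 2).mul_const (x i)).const_add (‖x‖ ^ 2)).add
        (hasDerivAt_pow 2 s)
      exact this.congr_deriv (by simp)
    have hq0 : q 0 = ‖x‖ ^ 2 := by simp [q]
    have hderiv : deriv (fun s => Φ (q s)) =ᶠ[𝓝 0] fun s => Φ' (q s) * (2 * x i + 2 * s) :=
      ((hq' 0).continuousAt.eventually (hq0 ▸ h)).mono fun s hs => (hs.comp s (hq' s)).deriv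
    have hq'' : HasDerivAt (fun s : ℝ => 2 * x i + 2 * s) 2 0 := by
      simpa using ((hasDerivAt_id (0 : ℝ)).const_mul 2).const_add (2 * x i)
    simp_rw [hq]
    rw [iteratedDeriv_succ, iteratedDeriv_one, hderiv.deriv_eq]
    refine ((HasDerivAt.comp (0 : ℝ) (hq0 ▸ h') (hq' 0)).mul hq'').deriv.trans ?_
    simp only [Function.comp, hq0]
    ring
  rw [lap, Finset.sum_congr rfl fun i _ => hslice i, Finset.sum_add_distrib, ← Finset.sum_mul,
    ← Finset.mul_sum, EuclideanSpace.real_norm_sq_eq, Finset.sum_const, Finset.card_univ,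
    Fintype.card_fin, nsmul_eq_mul]
  ring

lemma lap_of_radial {φ φ' : ℝ → ℝ} {φ'' : ℝ} (hx : 0 < ‖x‖)
    (hf : ∀ᶠ z in 𝓝 x, f z = φ ‖z‖) (h : ∀ᶠ ρ in 𝓝 ‖x‖, HasDerivAt φ (φ' ρ) ρ)
    (h' : HasDerivAt φ' φ'' ‖x‖) : lap f x = φ'' + (n - 1) / ‖x‖ * φ' ‖x‖ := by
  have hlap : lap f x = lap (fun z => φ √(‖z‖ ^ 2)) x := by
    simp only [lap, Real.sqrt_sq (norm_nonneg _)]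
    refine Finset.sum_congr rfl fun i _ => EventuallyEq.iteratedDeriv_eq 2 ?_
    have hline : Tendsto (fun s : ℝ => x + s • EuclideanSpace.single i (1 : ℝ)) (𝓝 0) (𝓝 x) :=
      Continuous.tendsto' (by fun_prop) _ _ (by simp)
    exact hline.eventually hf
  have hx2 : 0 < ‖x‖ ^ 2 := by positivity
  have hsqrt : √(‖x‖ ^ 2) = ‖x‖ := Real.sqrt_sq hx.le
  have hφ : ∀ᶠ q in 𝓝 (‖x‖ ^ 2), HasDerivAt (fun q => φ √q) (φ' √q * (1 / (2 * √q))) q := by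
    have hcont : Tendsto Real.sqrt (𝓝 (‖x‖ ^ 2)) (𝓝 ‖x‖) := by
      have := Real.continuous_sqrt.tendsto (‖x‖ ^ 2)
      rwa [hsqrt] at this
    filter_upwards [hcont.eventually h, lt_mem_nhds hx2] with q hq hq0
    exact hq.comp q (Real.hasDerivAt_sqrt hq0.ne')
  have hs := Real.hasDerivAt_sqrt hx2.ne'
  have hinv : HasDerivAt (fun q => 1 / (2 * √q)) _ (‖x‖ ^ 2) :=
    (hasDerivAt_const _ (1 : ℝ)).div (hs.const_mul 2) (by rw [hsqrt]; positivity)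
  have hφ' := (HasDerivAt.comp (‖x‖ ^ 2) (hsqrt.symm ▸ h') hs).mul hinv
  rw [hlap, lap_comp_norm_sq hφ hφ']
  simp only [Function.comp, hsqrt]
  field_simp
  ring

end Laplacian

/-! ### Comparison with radial barriers -/

section Barriers

variable {n : ℕ} {R t1 t2 : ℝ}

lemma norm_add_smul_inv_smul (hR : 0 < R) {x : Eucl n} (hx : ‖x‖ = R) {s : ℝ} (hs : -R ≤ s) :
    ‖x + s • (R⁻¹ • x)‖ = R + s := by
  have hfactor : 1 + s * R⁻¹ = (R + s) / R := by field_simp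
  have hray : x + s • (R⁻¹ • x) = ((R + s) / R) • x := by
    rw [← hfactor, add_smul, one_smul, smul_smul]
  rw [hray, norm_smul, hx, Real.norm_of_nonneg (div_nonneg (by linarith) hR.le),
    div_mul_cancel₀ _ hR.ne']

lemma hasDerivAt_normal_comp_norm_sq (hR : 0 < R) {Φ : ℝ → ℝ} {d : ℝ}
    (hΦ : HasDerivAt Φ d (R ^ 2)) {x : Eucl n} (hx : ‖x‖ = R) :
    HasDerivAt (fun s : ℝ => Φ (‖x + s • (R⁻¹ • x)‖ ^ 2)) (2 * R * d) 0 := by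
  have hsq : HasDerivAt (fun s : ℝ => (R + s) ^ 2) (2 * R) 0 := by
    simpa using ((hasDerivAt_id (0 : ℝ)).const_add R).fun_pow 2
  have hcomp := HasDerivAt.comp (0 : ℝ) (h₂ := Φ) (h := fun s : ℝ => (R + s) ^ 2)
    (by simpa using hΦ) hsq
  refine (hcomp.congr_deriv (mul_comm _ _)).congr_of_eventuallyEq ?_
  filter_upwards [lt_mem_nhds (neg_lt_zero.2 hR)] with s hs
  simp [norm_add_smul_inv_smul hR hx hs.le]

lemma normal_deriv_nonneg_of_forall_le (hR : 0 < R) {f : Eucl n → ℝ} {x : Eucl n} {d : ℝ}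
    (hx : ‖x‖ = R) (hmax : ∀ y ∈ closedBall (0 : Eucl n) R, f y ≤ f x)
    (hd : HasDerivAt (fun s : ℝ => f (x + s • (R⁻¹ • x))) d 0) : 0 ≤ d := by
  refine hasDerivWithinAt_nonneg_of_isMaxOn_Icc_right (neg_lt_zero.2 hR) hd.hasDerivWithinAt
    fun s hs => ?_
  simpa using hmax (x + s • (R⁻¹ • x)) (by
    rw [mem_closedBall_zero_iff, norm_add_smul_inv_smul hR hx hs.1]
    linarith [hs.2])

/-- A barrier `(x, t) ↦ Φ t (‖x‖ ^ 2)` on the time interval `[t1, t2]`, together with its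
derivatives. It is parametrised by `q = ‖x‖ ^ 2`, which is smooth at the origin. -/
structure RadialBarrier (t1 t2 : ℝ) where
  toFun : ℝ → ℝ → ℝ
  dt : ℝ → ℝ → ℝ
  dq : ℝ → ℝ → ℝ
  dqq : ℝ → ℝ → ℝ
  continuousOn : ContinuousOn (fun p : ℝ × ℝ => toFun p.1 p.2) (Icc t1 t2 ×ˢ univ)
  contDiff : ∀ t ∈ Ioc t1 t2, ContDiff ℝ 2 (toFun t)
  hasDerivAt_dt : ∀ t ∈ Ioc t1 t2, ∀ q, HasDerivAt (fun s => toFun s q) (dt t q) t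
  hasDerivAt_dq : ∀ t ∈ Ioc t1 t2, ∀ q, HasDerivAt (toFun t) (dq t q) q
  hasDerivAt_dqq : ∀ t ∈ Ioc t1 t2, ∀ q, HasDerivAt (dq t) (dqq t q) q

instance : CoeFun (RadialBarrier t1 t2) fun _ => ℝ → ℝ → ℝ := ⟨RadialBarrier.toFun⟩

/-- The value of `∂ₜ - Δ` on a radial barrier in dimension `n`, as a function of `t` and
`q = ‖x‖ ^ 2`. -/
def RadialBarrier.heat (Φ : RadialBarrier t1 t2) (n : ℕ) (t q : ℝ) : ℝ :=
  Φ.dt t q - (4 * q * Φ.dqq t q + 2 * n * Φ.dq t q)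

/-- `w` starts strictly below the barrier `Φ`, and wherever `w` meets `Φ` while the companion
function `z` does not exceed it, `w` is a strict subsolution relative to `Φ`, in the interior and
for the flux at the boundary. -/
structure IsStrictSubsolution (R : ℝ) (Φ : RadialBarrier t1 t2) (w z : Eucl n → ℝ → ℝ) :
    Prop where
  continuousOn : ContinuousOn (fun p : Eucl n × ℝ => w p.1 p.2)
    (closedBall (0 : Eucl n) R ×ˢ Icc t1 t2)
  contDiffAt : ∀ t ∈ Ioc t1 t2, ∀ x ∈ ball (0 : Eucl n) R, ContDiffAt ℝ 2 (fun y => w y t) x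
  initial : ∀ x ∈ closedBall (0 : Eucl n) R, w x t1 < Φ t1 (‖x‖ ^ 2)
  interior : ∀ t ∈ Ioc t1 t2, ∀ x ∈ ball (0 : Eucl n) R, w x t = Φ t (‖x‖ ^ 2) →
    z x t ≤ Φ t (‖x‖ ^ 2) →
    ∃ d, HasDerivAt (w x) d t ∧ d - lap (fun y => w y t) x < Φ.heat n t (‖x‖ ^ 2)
  boundary : ∀ t ∈ Ioc t1 t2, ∀ x : Eucl n, ‖x‖ = R → w x t = Φ t (R ^ 2) → z x t ≤ Φ t (R ^ 2) →
    ∃ d, HasDerivAt (fun s : ℝ => w (x + s • (R⁻¹ • x)) t) d 0 ∧ d < 2 * R * Φ.dq t (R ^ 2)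

namespace IsStrictSubsolution

variable {Φ : RadialBarrier t1 t2} {w z : Eucl n → ℝ → ℝ}

lemma continuousOn_sub (h : IsStrictSubsolution R Φ w z) :
    ContinuousOn (fun p : Eucl n × ℝ => w p.1 p.2 - Φ p.2 (‖p.1‖ ^ 2))
      (closedBall (0 : Eucl n) R ×ˢ Icc t1 t2) :=
  h.continuousOn.sub (Φ.continuousOn.comp (f := fun p : Eucl n × ℝ => (p.2, ‖p.1‖ ^ 2))
    (by fun_prop) fun _ hp => ⟨hp.2, mem_univ _⟩)

lemma ne_of_forall_le (hR : 0 < R) (h : IsStrictSubsolution R Φ w z) {x : Eucl n}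
    (hx : x ∈ closedBall (0 : Eucl n) R) {t : ℝ} (ht : t ∈ Ioc t1 t2)
    (hw : ∀ y ∈ closedBall (0 : Eucl n) R, ∀ s ∈ Icc t1 t, w y s ≤ Φ s (‖y‖ ^ 2))
    (hz : z x t ≤ Φ t (‖x‖ ^ 2)) : w x t ≠ Φ t (‖x‖ ^ 2) := by
  intro heq
  have hmax : ∀ y ∈ closedBall (0 : Eucl n) R,
      w y t - Φ t (‖y‖ ^ 2) ≤ w x t - Φ t (‖x‖ ^ 2) := fun y hy => by
    rw [heq, sub_self, sub_nonpos]
    exact hw y hy t ⟨ht.1.le, le_rfl⟩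
  rcases (mem_closedBall_zero_iff.1 hx).lt_or_eq with hlt | hxR
  · have hxb : x ∈ ball (0 : Eucl n) R := by simpa using hlt
    obtain ⟨d, hd, hsub⟩ := h.interior t ht x hxb heq hz
    have htime : 0 ≤ d - Φ.dt t (‖x‖ ^ 2) := by
      refine hasDerivWithinAt_nonneg_of_isMaxOn_Icc_right ht.1
        (hd.sub (Φ.hasDerivAt_dt t ht (‖x‖ ^ 2))).hasDerivWithinAt fun s hs => ?_
      simpa [heq] using hw x hx s hs
    have hΦ2 : ContDiffAt ℝ 2 (fun y : Eucl n => Φ t (‖y‖ ^ 2)) x :=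
      ((Φ.contDiff t ht).comp (contDiff_norm_sq ℝ)).contDiffAt
    have hlap := lap_nonpos_of_isLocalMax ((h.contDiffAt t ht x hxb).sub hΦ2)
      (mem_of_superset (isOpen_ball.mem_nhds hxb) fun y hy => hmax y (ball_subset_closedBall hy))
    rw [lap_sub (h.contDiffAt t ht x hxb) hΦ2, lap_comp_norm_sq
      (Eventually.of_forall (Φ.hasDerivAt_dq t ht)) (Φ.hasDerivAt_dqq t ht _)] at hlap
    rw [RadialBarrier.heat] at hsub
    linarith
  · rw [hxR] at heq hz
    obtain ⟨d, hd, hsub⟩ := h.boundary t ht x hxR heq hz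
    have hflux := normal_deriv_nonneg_of_forall_le hR (f := fun y => w y t - Φ t (‖y‖ ^ 2)) hxR hmax
      (hd.sub (hasDerivAt_normal_comp_norm_sq hR (Φ.hasDerivAt_dq t ht _) hxR))
    linarith

lemma lt_barrier (hR : 0 < R) (h : IsStrictSubsolution R Φ w z) (h' : IsStrictSubsolution R Φ z w)
    {x : Eucl n} (hx : x ∈ closedBall (0 : Eucl n) R) {t : ℝ} (ht : t ∈ Icc t1 t2) :
    w x t < Φ t (‖x‖ ^ 2) := by
  by_contra! hcon
  obtain ⟨i, y, hy, s, hs, hzero, hle⟩ := exists_first_zero (isCompact_closedBall (0 : Eucl n) R)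
    (f := fun (i : Bool) y s => cond i (w y s) (z y s) - Φ s (‖y‖ ^ 2))
    (Bool.rec h'.continuousOn_sub h.continuousOn_sub)
    (Bool.rec (fun y hy => sub_neg.2 (h'.initial y hy)) fun y hy => sub_neg.2 (h.initial y hy))
    ⟨true, x, hx, t, ht, sub_nonneg.2 hcon⟩
  have hw : ∀ y ∈ closedBall (0 : Eucl n) R, ∀ r ∈ Icc t1 s, w y r ≤ Φ r (‖y‖ ^ 2) :=
    fun y hy r hr => sub_nonpos.1 (hle true y hy r hr)
  have hz : ∀ y ∈ closedBall (0 : Eucl n) R, ∀ r ∈ Icc t1 s, z y r ≤ Φ r (‖y‖ ^ 2) :=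
    fun y hy r hr => sub_nonpos.1 (hle false y hy r hr)
  have hss : s ∈ Icc t1 s := ⟨hs.1.le, le_rfl⟩
  cases i
  · exact h'.ne_of_forall_le hR hy hs hz (hw y hy s hss) (sub_eq_zero.1 hzero)
  · exact h.ne_of_forall_le hR hy hs hw (hz y hy s hss) (sub_eq_zero.1 hzero)

end IsStrictSubsolution

/-- The spatially constant barrier `c + ε (1 + t - t1)`. -/
def affineBarrier (t1 t2 c ε : ℝ) : RadialBarrier t1 t2 where
  toFun t _ := c + ε * (1 + (t - t1))
  dt _ _ := ε
  dq _ _ := 0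
  dqq _ _ := 0
  continuousOn := by fun_prop
  contDiff _ _ := contDiff_const
  hasDerivAt_dt t _ _ := by
    simpa using ((((hasDerivAt_id t).sub_const t1).const_add 1).const_mul ε).const_add c
  hasDerivAt_dq _ _ _ := hasDerivAt_const _ _
  hasDerivAt_dqq _ _ _ := hasDerivAt_const _ _

lemma le_const_of_subsolution_above (hR : 0 < R) {c : ℝ} {w : Eucl n → ℝ → ℝ}
    (hc : ContinuousOn (fun p : Eucl n × ℝ => w p.1 p.2) (closedBall (0 : Eucl n) R ×ˢ Icc t1 t2))
    (hC2 : ∀ t ∈ Ioc t1 t2, ∀ x ∈ ball (0 : Eucl n) R, ContDiffAt ℝ 2 (fun y => w y t) x)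
    (hi : ∀ x ∈ closedBall (0 : Eucl n) R, w x t1 ≤ c)
    (hint : ∀ t ∈ Ioc t1 t2, ∀ x ∈ ball (0 : Eucl n) R, c < w x t →
      ∃ d, HasDerivAt (w x) d t ∧ d ≤ lap (fun y => w y t) x)
    (hbdry : ∀ t ∈ Ioc t1 t2, ∀ x : Eucl n, ‖x‖ = R → c < w x t →
      ∃ d < 0, HasDerivAt (fun s : ℝ => w (x + s • (R⁻¹ • x)) t) d 0)
    {x : Eucl n} (hx : x ∈ closedBall (0 : Eucl n) R) {t : ℝ} (ht : t ∈ Icc t1 t2) :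
    w x t ≤ c := by
  have hlt : ∀ ε > 0, w x t < c + ε * (1 + (t - t1)) := fun ε hε => by
    have habove : ∀ s ∈ Ioc t1 t2, c < affineBarrier t1 t2 c ε s 0 := fun s hs =>
      lt_add_of_pos_right c (mul_pos hε (by linarith [hs.1]))
    have h : IsStrictSubsolution R (affineBarrier t1 t2 c ε) w w :=
      { continuousOn := hc
        contDiffAt := hC2
        initial := fun y hy => (hi y hy).trans_lt (lt_add_of_pos_right c (by simpa using hε))
        interior := fun s hs y hy heq _ => by
          obtain ⟨d, hd, hle⟩ := hint s hs y hy ((habove s hs).trans_eq heq.symm)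
          exact ⟨d, hd, by simp only [RadialBarrier.heat, affineBarrier]; linarith⟩
        boundary := fun s hs y hy heq _ => by
          obtain ⟨d, hd, hflux⟩ := hbdry s hs y hy ((habove s hs).trans_eq heq.symm)
          exact ⟨d, hflux, by simpa [affineBarrier] using hd⟩ }
    exact h.lt_barrier hR h hx ht
  have hpos : 0 < 1 + (t - t1) := by linarith [ht.1]
  refine le_of_forall_pos_lt_add fun δ hδ => ?_
  simpa [hpos.ne'] using hlt (δ / (1 + (t - t1))) (div_pos hδ hpos)

end Barriers

/-! ### Linear cooperative systems -/

section LinearSystems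

variable {n : ℕ} {R B t1 t2 e e0 F : ℝ} {w z : Eucl n → ℝ → ℝ}

/-- One component of a linear cooperative parabolic system on the ball, with coupling coefficients
at most `B`, forcing at most `F` and initial value at most `e0`. -/
structure IsLinearSubsolution (R B t1 t2 e0 F : ℝ) (w z : Eucl n → ℝ → ℝ) : Prop where
  continuousOn : ContinuousOn (fun p : Eucl n × ℝ => w p.1 p.2)
    (closedBall (0 : Eucl n) R ×ˢ Icc t1 t2)
  contDiffAt : ∀ t ∈ Ioc t1 t2, ∀ x ∈ ball (0 : Eucl n) R, ContDiffAt ℝ 2 (fun y => w y t) x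
  initial : ∀ x ∈ closedBall (0 : Eucl n) R, w x t1 ≤ e0
  interior : ∀ t ∈ Ioc t1 t2, ∀ x ∈ ball (0 : Eucl n) R, ∃ c f : ℝ, 0 ≤ c ∧ c ≤ B ∧ f ≤ F ∧
    HasDerivAt (w x) (lap (fun y => w y t) x + c * z x t + f) t
  boundary : ∀ t ∈ Ioc t1 t2, ∀ x : Eucl n, ‖x‖ = R → ∃ β : ℝ, 0 ≤ β ∧ β ≤ B ∧
    HasDerivAt (fun s : ℝ => w (x + s • (R⁻¹ • x)) t) (β * z x t) 0

lemma hasDerivAt_exp_mul (κ q : ℝ) : HasDerivAt (fun q => exp (κ * q)) (κ * exp (κ * q)) q := by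
  simpa [mul_comm] using ((hasDerivAt_id q).const_mul κ).exp

/-- The barrier `(e + F (t - t1)) exp (Λ (t - t1)) exp (κ ‖x‖ ^ 2)`. -/
noncomputable def expBarrier (t1 t2 κ Λ e F : ℝ) : RadialBarrier t1 t2 where
  toFun t q := (e + F * (t - t1)) * exp (Λ * (t - t1)) * exp (κ * q)
  dt t q := (F + Λ * (e + F * (t - t1))) * exp (Λ * (t - t1)) * exp (κ * q)
  dq t q := (e + F * (t - t1)) * exp (Λ * (t - t1)) * (κ * exp (κ * q))
  dqq t q := (e + F * (t - t1)) * exp (Λ * (t - t1)) * (κ * (κ * exp (κ * q)))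
  continuousOn := by fun_prop
  contDiff _ _ := by fun_prop
  hasDerivAt_dt t _ q := by
    have hlin : HasDerivAt (fun t => e + F * (t - t1)) F t := by
      simpa using (((hasDerivAt_id t).sub_const t1).const_mul F).const_add e
    have hexp : HasDerivAt (fun t => exp (Λ * (t - t1))) (Λ * exp (Λ * (t - t1))) t := by
      simpa using (hasDerivAt_exp_mul Λ (t - t1)).comp_sub_const t t1
    exact ((hlin.mul hexp).mul_const _).congr_deriv (by ring)
  hasDerivAt_dq _ _ q := (hasDerivAt_exp_mul κ q).const_mul _
  hasDerivAt_dqq _ _ q := ((hasDerivAt_exp_mul κ q).const_mul κ).const_mul _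

/-- The spatial rate of the comparison barrier for a linear system with coupling bound `B`. -/
noncomputable def linearSpaceRate (R B : ℝ) : ℝ := (B + 1) / (2 * R)

/-- The temporal rate of the comparison barrier for a linear system with coupling bound `B`. -/
noncomputable def linearTimeRate (n : ℕ) (R B : ℝ) : ℝ :=
  4 * linearSpaceRate R B ^ 2 * R ^ 2 + 2 * n * linearSpaceRate R B + B + 1

/-- The factor by which the data of a linear system can be amplified during a time `τ`. -/
noncomputable def linearGrowth (n : ℕ) (R B τ : ℝ) : ℝ :=
  exp (linearTimeRate n R B * τ) * exp (linearSpaceRate R B * R ^ 2)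

lemma linearGrowth_pos (n : ℕ) (R B τ : ℝ) : 0 < linearGrowth n R B τ := by
  unfold linearGrowth; positivity

lemma linearSpaceRate_pos (hR : 0 < R) (hB : 0 ≤ B) : 0 < linearSpaceRate R B := by
  unfold linearSpaceRate; positivity

lemma linearTimeRate_pos (hR : 0 < R) (hB : 0 ≤ B) : 0 < linearTimeRate n R B := by
  have := linearSpaceRate_pos hR hB
  unfold linearTimeRate; positivity

lemma expBarrier_pos (he : 0 < e) (hF : 0 ≤ F) {t : ℝ} (ht : t1 ≤ t) (κ Λ q : ℝ) :
    0 < expBarrier t1 t2 κ Λ e F t q := by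
  have := sub_nonneg.2 ht
  simp only [expBarrier]
  positivity

lemma linear_add_lt_expBarrier_heat (hR : 0 < R) (hB : 0 ≤ B) (he : 0 < e) (hF : 0 ≤ F)
    {t q : ℝ} (ht : t1 ≤ t) (hq : q ∈ Icc 0 (R ^ 2)) :
    B * expBarrier t1 t2 (linearSpaceRate R B) (linearTimeRate n R B) e F t q + F <
      (expBarrier t1 t2 (linearSpaceRate R B) (linearTimeRate n R B) e F).heat n t q := by
  set κ := linearSpaceRate R B
  set Λ := linearTimeRate n R B
  set Φ := expBarrier t1 t2 κ Λ e F
  have := sub_nonneg.2 ht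
  have hκ : 0 < κ := linearSpaceRate_pos hR hB
  have hΛ : 0 < Λ := linearTimeRate_pos hR hB
  have hΦ : 0 < Φ t q := expBarrier_pos he hF ht κ Λ q
  have hforce : F ≤ F * (exp (Λ * (t - t1)) * exp (κ * q)) :=
    le_mul_of_one_le_right hF (one_le_mul_of_one_le_of_one_le
      (one_le_exp (by positivity)) (one_le_exp (mul_nonneg hκ.le hq.1)))
  have hdiffusion : (4 * κ ^ 2 * q + 2 * n * κ) * Φ t q ≤
      (4 * κ ^ 2 * R ^ 2 + 2 * n * κ) * Φ t q := by
    have := hq.2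
    gcongr
  have hheat : Φ.heat n t q = F * (exp (Λ * (t - t1)) * exp (κ * q))
      + (Λ - (4 * κ ^ 2 * q + 2 * n * κ)) * Φ t q := by
    simp only [RadialBarrier.heat, Φ, expBarrier]; ring
  have hΛ_eq : Λ * Φ t q = (4 * κ ^ 2 * R ^ 2 + 2 * n * κ) * Φ t q + B * Φ t q + Φ t q := by
    simp only [Λ, linearTimeRate]; ring
  rw [hheat, sub_mul]
  linarith

lemma expBarrier_flux (hR : 0 < R) (t Λ q : ℝ) :
    2 * R * (expBarrier t1 t2 (linearSpaceRate R B) Λ e F).dq t q =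
      (B + 1) * expBarrier t1 t2 (linearSpaceRate R B) Λ e F t q := by
  simp only [expBarrier, linearSpaceRate]
  field_simp

lemma IsLinearSubsolution.isStrictSubsolution (hR : 0 < R) (hB : 0 ≤ B) (hF : 0 ≤ F)
    (he : 0 < e) (he0 : e0 < e) (h : IsLinearSubsolution R B t1 t2 e0 F w z) :
    IsStrictSubsolution R
      (expBarrier t1 t2 (linearSpaceRate R B) (linearTimeRate n R B) e F) w z := by
  have hpos : ∀ t ∈ Ioc t1 t2, ∀ q,
      0 < expBarrier t1 t2 (linearSpaceRate R B) (linearTimeRate n R B) e F t q :=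
    fun t ht => expBarrier_pos he hF ht.1.le _ _
  refine ⟨h.continuousOn, h.contDiffAt, fun x hx => ?_, fun t ht x hx _ hz => ?_,
    fun t ht x hx _ hz => ?_⟩
  · refine (h.initial x hx).trans_lt (he0.trans_le ?_)
    simpa [expBarrier] using le_mul_of_one_le_right he.le
      (one_le_exp (mul_nonneg (linearSpaceRate_pos hR hB).le (sq_nonneg ‖x‖)))
  · obtain ⟨c, f, hc, hcB, hfF, hd⟩ := h.interior t ht x hx
    have hxR : ‖x‖ ^ 2 ≤ R ^ 2 := by
      have := (mem_ball_zero_iff.1 hx).le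
      gcongr
    have hheat := linear_add_lt_expBarrier_heat (n := n) (t2 := t2) hR hB he hF ht.1.le
      ⟨sq_nonneg ‖x‖, hxR⟩
    have hcz := mul_le_mul_of_nonneg_left hz hc
    have hcB := mul_le_mul_of_nonneg_right hcB (hpos t ht (‖x‖ ^ 2)).le
    exact ⟨_, hd, by linarith⟩
  · obtain ⟨β, hβ, hβB, hd⟩ := h.boundary t ht x hx
    have hβz := mul_le_mul_of_nonneg_left hz hβ
    have hβB := mul_le_mul_of_nonneg_right hβB (hpos t ht (R ^ 2)).le
    refine ⟨_, hd, ?_⟩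
    rw [expBarrier_flux hR]
    linarith [hpos t ht (R ^ 2)]

lemma IsLinearSubsolution.le_linearGrowth (hR : 0 < R) (hB : 0 ≤ B) (he : 0 ≤ e0) (hF : 0 ≤ F)
    (h : IsLinearSubsolution R B t1 t2 e0 F w z) (h' : IsLinearSubsolution R B t1 t2 e0 F z w)
    {x : Eucl n} (hx : x ∈ closedBall (0 : Eucl n) R) {t : ℝ} (ht : t ∈ Icc t1 t2) {τ : ℝ}
    (hτ : t - t1 ≤ τ) : w x t ≤ (e0 + F * (t - t1)) * linearGrowth n R B τ := by
  have hκ := linearSpaceRate_pos hR hB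
  have hΛ : 0 < linearTimeRate n R B := linearTimeRate_pos hR hB
  have hs : 0 ≤ t - t1 := sub_nonneg.2 ht.1
  have hle : ∀ e ∈ Ioi e0, w x t ≤ (e + F * (t - t1)) * linearGrowth n R B τ := fun e he' => by
    have hepos := he.trans_lt he'
    refine ((h.isStrictSubsolution hR hB hF hepos he').lt_barrier hR
      (h'.isStrictSubsolution hR hB hF hepos he') hx ht).le.trans ?_
    have hxR : ‖x‖ ≤ R := mem_closedBall_zero_iff.1 hx
    simp only [expBarrier, linearGrowth, mul_assoc]
    gcongr
  have hcont : Continuous fun e => (e + F * (t - t1)) * linearGrowth n R B τ := by fun_prop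
  exact ge_of_tendsto ((hcont.tendsto e0).mono_left nhdsWithin_le_nhds)
    (eventually_nhdsWithin_of_forall hle)

end LinearSystems

/-! ### Solutions and their comparison -/

lemma exists_exp_sub_exp_eq_mul_sub {a b M : ℝ} (ha : a ≤ M) (hb : b ≤ M) :
    ∃ c, 0 ≤ c ∧ c ≤ exp M ∧ exp a - exp b = c * (a - b) := by
  wlog hab : a < b generalizing a b
  · rcases (not_lt.1 hab).eq_or_lt with rfl | hba
    · exact ⟨0, le_rfl, (exp_pos M).le, by simp⟩
    · obtain ⟨c, hc, hcM, heq⟩ := this hb ha hba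
      exact ⟨c, hc, hcM, by linarith⟩
  · obtain ⟨ξ, hξ, hslope⟩ := exists_hasDerivAt_eq_slope exp exp hab continuous_exp.continuousOn
      fun z _ => Real.hasDerivAt_exp z
    refine ⟨exp ξ, (exp_pos ξ).le, exp_le_exp.2 (hξ.2.le.trans hb), ?_⟩
    rw [eq_div_iff (sub_pos.2 hab).ne'] at hslope
    linarith

lemma hasDerivAt_of_deriv_eq_of_ne_zero {f : ℝ → ℝ} {d x : ℝ} (h : deriv f x = d) (hd : d ≠ 0) :
    HasDerivAt f d x :=
  h ▸ (differentiableAt_of_deriv_ne_zero (h.symm ▸ hd)).hasDerivAt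

/-- The problem solved by one component `u` when the other component `v` is given: equation,
boundary condition, and sign and monotonicity of the initial value. -/
structure HalfSolution {n : ℕ} (R T l : ℝ) (u v : Eucl n → ℝ → ℝ) : Prop where
  radius_pos : 0 < R
  coeff_pos : 0 < l
  continuousOn : ContinuousOn (fun p : Eucl n × ℝ => u p.1 p.2)
    (closedBall (0 : Eucl n) R ×ˢ Ico (0 : ℝ) T)
  contDiffOn : ∀ t ∈ Ioo (0 : ℝ) T, ContDiffOn ℝ 2 (fun x => u x t) (closedBall (0 : Eucl n) R)
  interior : ∀ x ∈ ball (0 : Eucl n) R, ∀ t ∈ Ioo (0 : ℝ) T,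
    HasDerivAt (u x) (lap (fun y => u y t) x + l * exp (v x t)) t
  boundary : ∀ x : Eucl n, ‖x‖ = R → ∀ t ∈ Ioo (0 : ℝ) T,
    HasDerivAt (fun s : ℝ => u (x + s • (R⁻¹ • x)) t) (exp (v x t)) 0
  initial_nonneg : ∀ x ∈ closedBall (0 : Eucl n) R, 0 ≤ u x 0
  initial_mono : ∀ x ∈ closedBall (0 : Eucl n) R, ∀ y ∈ closedBall (0 : Eucl n) R,
    ‖x‖ ≤ ‖y‖ → u x 0 ≤ u y 0

/-- A solution of the system, in a form symmetric in the two components. -/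
structure SolutionPair {n : ℕ} (R T l1 l2 : ℝ) (u v : Eucl n → ℝ → ℝ) : Prop where
  fst : HalfSolution R T l1 u v
  snd : HalfSolution R T l2 v u

section Solutions

variable {n : ℕ} {R T l l1 l2 t1 t2 : ℝ} {u v : Eucl n → ℝ → ℝ}

lemma SolutionPair.symm (h : SolutionPair R T l1 l2 u v) : SolutionPair R T l2 l1 v u :=
  ⟨h.snd, h.fst⟩

lemma IsClassicalSolution.solutionPair (hR : 0 < R) (hl1 : 0 < l1) (hl2 : 0 < l2)
    {u₀ v₀ : Eucl n → ℝ} (hd : AdmissibleData n R u₀ v₀)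
    (hs : IsClassicalSolution n R T l1 l2 u v u₀ v₀) : SolutionPair R T l1 l2 u v where
  fst :=
    { radius_pos := hR
      coeff_pos := hl1
      continuousOn := hs.cont_u
      contDiffOn := hs.reg_space_u
      interior := fun x hx t ht => by
        rw [← hs.pde_u x hx t ht]
        exact (hs.reg_time_u x (ball_subset_closedBall hx) t ht).hasDerivAt
      boundary := fun x hx t ht =>
        hasDerivAt_of_deriv_eq_of_ne_zero (hs.bc_u x hx t ht) (exp_ne_zero _)
      initial_nonneg := fun x hx => (hs.init_u x hx).symm ▸ hd.u0_nonneg x hx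
      initial_mono := fun x hx y hy hxy => by
        rw [hs.init_u x hx, hs.init_u y hy]
        exact hd.u0_radial_mono x hx y hy hxy }
  snd :=
    { radius_pos := hR
      coeff_pos := hl2
      continuousOn := hs.cont_v
      contDiffOn := hs.reg_space_v
      interior := fun x hx t ht => by
        rw [← hs.pde_v x hx t ht]
        exact (hs.reg_time_v x (ball_subset_closedBall hx) t ht).hasDerivAt
      boundary := fun x hx t ht =>
        hasDerivAt_of_deriv_eq_of_ne_zero (hs.bc_v x hx t ht) (exp_ne_zero _)
      initial_nonneg := fun x hx => (hs.init_v x hx).symm ▸ hd.v0_nonneg x hx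
      initial_mono := fun x hx y hy hxy => by
        rw [hs.init_v x hx, hs.init_v y hy]
        exact hd.v0_radial_mono x hx y hy hxy }

namespace HalfSolution

lemma contDiffAt (h : HalfSolution R T l u v) {t : ℝ} (ht : t ∈ Ioo (0 : ℝ) T) {x : Eucl n}
    (hx : x ∈ ball (0 : Eucl n) R) : ContDiffAt ℝ 2 (fun y => u y t) x :=
  (h.contDiffOn t ht).contDiffAt (mem_of_superset (isOpen_ball.mem_nhds hx) ball_subset_closedBall)

lemma continuousOn_Icc (h : HalfSolution R T l u v) (h1 : 0 ≤ t1) (h2 : t2 < T) :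
    ContinuousOn (fun p : Eucl n × ℝ => u p.1 p.2) (closedBall (0 : Eucl n) R ×ˢ Icc t1 t2) :=
  h.continuousOn.mono (prod_mono le_rfl fun _ hs => ⟨h1.trans hs.1, hs.2.trans_lt h2⟩)

lemma exists_le (h : HalfSolution R T l u v) (h2 : t2 < T) :
    ∃ M, ∀ x ∈ closedBall (0 : Eucl n) R, ∀ t ∈ Icc 0 t2, u x t ≤ M := by
  obtain ⟨M, hM⟩ := ((isCompact_closedBall (0 : Eucl n) R).prod isCompact_Icc).bddAbove_image
    (h.continuousOn_Icc le_rfl h2)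
  exact ⟨M, fun x hx t ht => hM ⟨(x, t), ⟨hx, ht⟩, rfl⟩⟩

lemma nonneg (h : HalfSolution R T l u v) {x : Eucl n} (hx : x ∈ closedBall (0 : Eucl n) R)
    {t : ℝ} (ht : t ∈ Ico 0 T) : 0 ≤ u x t := by
  have hIoo : ∀ s ∈ Ioc 0 t, s ∈ Ioo 0 T := fun s hs => ⟨hs.1, hs.2.trans_lt ht.2⟩
  refine neg_nonpos.1 (le_const_of_subsolution_above h.radius_pos (w := fun y s => -u y s)
    (h.continuousOn_Icc le_rfl ht.2).neg (fun s hs y hy => (h.contDiffAt (hIoo s hs) hy).neg)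
    (fun y hy => neg_nonpos.2 (h.initial_nonneg y hy)) (fun s hs y hy _ => ?_)
    (fun s hs y hy _ => ⟨_, neg_lt_zero.2 (exp_pos (v y s)), (h.boundary y hy s (hIoo s hs)).neg⟩)
    hx (right_mem_Icc.2 ht.1))
  refine ⟨_, (h.interior y hy s (hIoo s hs)).neg, ?_⟩
  rw [lap_neg, neg_le_neg_iff]
  exact le_add_of_nonneg_right (mul_nonneg h.coeff_pos.le (exp_pos _).le)

lemma exists_lt_of_norm_eq (h : HalfSolution R T l u v) {t : ℝ} (ht : t ∈ Ioo 0 T) {y : Eucl n}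
    (hy : ‖y‖ = R) {ρ : ℝ} (hρ : 0 ≤ ρ) (hρR : ρ < R) :
    ∃ z : Eucl n, ρ ≤ ‖z‖ ∧ ‖z‖ ≤ R ∧ u z t < u y t := by
  by_contra! hcon
  have hmax : IsMaxOn (fun s : ℝ => -u (y + s • (R⁻¹ • y)) t) (Icc (ρ - R) 0) 0 := fun s hs => by
    have hnorm := norm_add_smul_inv_smul h.radius_pos hy (by linarith [hs.1] : -R ≤ s)
    simpa using hcon _ (by linarith [hs.1]) (by linarith [hs.2])
  have := hasDerivWithinAt_nonneg_of_isMaxOn_Icc_right (sub_neg.2 hρR)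
    (h.boundary y hy t ht).neg.hasDerivWithinAt hmax
  linarith [exp_pos (v y t)]

end HalfSolution

lemma SolutionPair.exists_le (h : SolutionPair R T l1 l2 u v) (h2 : t2 < T) :
    ∃ M, ∀ x ∈ closedBall (0 : Eucl n) R, ∀ t ∈ Icc 0 t2, u x t ≤ M ∧ v x t ≤ M := by
  obtain ⟨M₁, hM₁⟩ := h.fst.exists_le h2
  obtain ⟨M₂, hM₂⟩ := h.snd.exists_le h2
  exact ⟨max M₁ M₂, fun x hx t ht =>
    ⟨le_max_of_le_left (hM₁ x hx t ht), le_max_of_le_right (hM₂ x hx t ht)⟩⟩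

/-- At a boundary point where `u > v` the flux of `u - v` is negative: this is why the difference of
the components stays bounded. -/
lemma SolutionPair.sub_le (h : SolutionPair R T l1 l2 u v) {c : ℝ} (hc : 0 ≤ c)
    (hl : l1 ≤ l2 * exp c) (hi : ∀ x ∈ closedBall (0 : Eucl n) R, u x 0 - v x 0 ≤ c)
    {x : Eucl n} (hx : x ∈ closedBall (0 : Eucl n) R) {t : ℝ} (ht : t ∈ Ico 0 T) :
    u x t - v x t ≤ c := by
  have hIoo : ∀ s ∈ Ioc 0 t, s ∈ Ioo 0 T := fun s hs => ⟨hs.1, hs.2.trans_lt ht.2⟩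
  refine le_const_of_subsolution_above h.fst.radius_pos (w := fun y s => u y s - v y s)
    ((h.fst.continuousOn_Icc le_rfl ht.2).sub (h.snd.continuousOn_Icc le_rfl ht.2))
    (fun s hs y hy => (h.fst.contDiffAt (hIoo s hs) hy).sub (h.snd.contDiffAt (hIoo s hs) hy))
    hi (fun s hs y hy hlt => ?_) (fun s hs y hy hlt => ?_) hx (right_mem_Icc.2 ht.1)
  · refine ⟨_, (h.fst.interior y hy s (hIoo s hs)).sub (h.snd.interior y hy s (hIoo s hs)), ?_⟩
    rw [lap_sub (h.fst.contDiffAt (hIoo s hs) hy) (h.snd.contDiffAt (hIoo s hs) hy)]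
    have hsource : l1 * exp (v y s) ≤ l2 * exp (u y s) := calc
      l1 * exp (v y s) ≤ l2 * exp c * exp (v y s) := by gcongr
      _ = l2 * exp (c + v y s) := by rw [exp_add, mul_assoc]
      _ ≤ l2 * exp (u y s) := by
        have := h.snd.coeff_pos
        gcongr
        linarith
    linarith
  · exact ⟨_, sub_neg.2 (exp_lt_exp.2 (by linarith)),
      (h.fst.boundary y hy s (hIoo s hs)).sub (h.snd.boundary y hy s (hIoo s hs))⟩

end Solutions

/-! ### Dependence on the data, radial symmetry and monotonicity -/

/-- `U` solves the equation of a component with an additional forcing term `f` on `(t1, t2]`. -/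
structure ForcedHalf {n : ℕ} (R t1 t2 l : ℝ) (U V f : Eucl n → ℝ → ℝ) : Prop where
  continuousOn : ContinuousOn (fun p : Eucl n × ℝ => U p.1 p.2)
    (closedBall (0 : Eucl n) R ×ˢ Icc t1 t2)
  contDiffAt : ∀ t ∈ Ioc t1 t2, ∀ x ∈ ball (0 : Eucl n) R, ContDiffAt ℝ 2 (fun y => U y t) x
  interior : ∀ t ∈ Ioc t1 t2, ∀ x ∈ ball (0 : Eucl n) R,
    HasDerivAt (U x) (lap (fun y => U y t) x + l * exp (V x t) + f x t) t
  boundary : ∀ t ∈ Ioc t1 t2, ∀ x : Eucl n, ‖x‖ = R →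
    HasDerivAt (fun s : ℝ => U (x + s • (R⁻¹ • x)) t) (exp (V x t)) 0

/-- A solution of the system on `(t1, t2]` with forcing terms `f`, `g` and values at most `M`. -/
structure ForcedPair {n : ℕ} (R t1 t2 l1 l2 M : ℝ) (U V f g : Eucl n → ℝ → ℝ) : Prop where
  fst : ForcedHalf R t1 t2 l1 U V f
  snd : ForcedHalf R t1 t2 l2 V U g
  fst_le : ∀ x ∈ closedBall (0 : Eucl n) R, ∀ t ∈ Ioc t1 t2, U x t ≤ M
  snd_le : ∀ x ∈ closedBall (0 : Eucl n) R, ∀ t ∈ Ioc t1 t2, V x t ≤ M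

/-- A bound for the coefficients of the linear system satisfied by differences of solutions
below the level `M`. -/
noncomputable def couplingBound (l1 l2 M : ℝ) : ℝ := (1 + l1 + l2) * exp M

section Differences

variable {n : ℕ} {R T l l1 l2 t1 t2 M F e0 : ℝ} {u v U U' V V' f f' g g' : Eucl n → ℝ → ℝ}

lemma ForcedHalf.isLinearSubsolution_sub {B : ℝ} (hl : 0 ≤ l) (h : ForcedHalf R t1 t2 l U V f)
    (h' : ForcedHalf R t1 t2 l U' V' f')
    (hV : ∀ x ∈ closedBall (0 : Eucl n) R, ∀ t ∈ Ioc t1 t2, V x t ≤ M)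
    (hV' : ∀ x ∈ closedBall (0 : Eucl n) R, ∀ t ∈ Ioc t1 t2, V' x t ≤ M)
    (hF : ∀ x ∈ ball (0 : Eucl n) R, ∀ t ∈ Ioc t1 t2, f x t - f' x t ≤ F)
    (hB : exp M ≤ B) (hlB : l * exp M ≤ B)
    (hi : ∀ x ∈ closedBall (0 : Eucl n) R, U x t1 - U' x t1 ≤ e0) :
    IsLinearSubsolution R B t1 t2 e0 F (fun x t => U x t - U' x t) (fun x t => V x t - V' x t) where
  continuousOn := h.continuousOn.sub h'.continuousOn
  contDiffAt t ht x hx := (h.contDiffAt t ht x hx).sub (h'.contDiffAt t ht x hx)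
  initial := hi
  interior t ht x hx := by
    have hx' := ball_subset_closedBall hx
    obtain ⟨c, hc, hcM, heq⟩ := exists_exp_sub_exp_eq_mul_sub (hV x hx' t ht) (hV' x hx' t ht)
    refine ⟨l * c, f x t - f' x t, by positivity, (by gcongr : l * c ≤ l * exp M).trans hlB,
      hF x hx t ht, ((h.interior t ht x hx).sub (h'.interior t ht x hx)).congr_deriv ?_⟩
    rw [lap_sub (h.contDiffAt t ht x hx) (h'.contDiffAt t ht x hx)]
    linear_combination l * heq
  boundary t ht x hx := by
    have hx' : x ∈ closedBall (0 : Eucl n) R := mem_closedBall_zero_iff.2 hx.le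
    obtain ⟨c, hc, hcM, heq⟩ := exists_exp_sub_exp_eq_mul_sub (hV x hx' t ht) (hV' x hx' t ht)
    exact ⟨c, hc, hcM.trans hB,
      ((h.boundary t ht x hx).sub (h'.boundary t ht x hx)).congr_deriv heq⟩

lemma ForcedPair.sub_le (hR : 0 < R) (hl1 : 0 < l1) (hl2 : 0 < l2)
    (h : ForcedPair R t1 t2 l1 l2 M U V f g) (h' : ForcedPair R t1 t2 l1 l2 M U' V' f' g')
    (he : 0 ≤ e0) (hF : 0 ≤ F)
    (hf : ∀ x ∈ ball (0 : Eucl n) R, ∀ t ∈ Ioc t1 t2, f x t - f' x t ≤ F)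
    (hg : ∀ x ∈ ball (0 : Eucl n) R, ∀ t ∈ Ioc t1 t2, g x t - g' x t ≤ F)
    (hU : ∀ x ∈ closedBall (0 : Eucl n) R, U x t1 - U' x t1 ≤ e0)
    (hV : ∀ x ∈ closedBall (0 : Eucl n) R, V x t1 - V' x t1 ≤ e0)
    {x : Eucl n} (hx : x ∈ closedBall (0 : Eucl n) R) {t τ : ℝ} (ht : t ∈ Icc t1 t2)
    (hτ : t - t1 ≤ τ) :
    U x t - U' x t ≤ (e0 + F * (t - t1)) * linearGrowth n R (couplingBound l1 l2 M) τ := by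
  have hB : exp M ≤ couplingBound l1 l2 M := le_mul_of_one_le_left (exp_pos M).le (by linarith)
  have hl1B : l1 * exp M ≤ couplingBound l1 l2 M := by unfold couplingBound; gcongr; linarith
  have hl2B : l2 * exp M ≤ couplingBound l1 l2 M := by unfold couplingBound; gcongr; linarith
  have hfst := h.fst.isLinearSubsolution_sub hl1.le h'.fst h.snd_le h'.snd_le hf hB hl1B hU
  have hsnd := h.snd.isLinearSubsolution_sub hl2.le h'.snd h.fst_le h'.fst_le hg hB hl2B hV
  exact hfst.le_linearGrowth hR ((exp_pos M).le.trans hB) he hF hsnd hx ht hτ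

lemma ForcedPair.abs_sub_le (hR : 0 < R) (hl1 : 0 < l1) (hl2 : 0 < l2)
    (h : ForcedPair R t1 t2 l1 l2 M U V f g) (h' : ForcedPair R t1 t2 l1 l2 M U' V' f' g')
    (he : 0 ≤ e0) (hF : 0 ≤ F)
    (hf : ∀ x ∈ ball (0 : Eucl n) R, ∀ t ∈ Ioc t1 t2, |f x t - f' x t| ≤ F)
    (hg : ∀ x ∈ ball (0 : Eucl n) R, ∀ t ∈ Ioc t1 t2, |g x t - g' x t| ≤ F)
    (hU : ∀ x ∈ closedBall (0 : Eucl n) R, |U x t1 - U' x t1| ≤ e0)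
    (hV : ∀ x ∈ closedBall (0 : Eucl n) R, |V x t1 - V' x t1| ≤ e0)
    {x : Eucl n} (hx : x ∈ closedBall (0 : Eucl n) R) {t τ : ℝ} (ht : t ∈ Icc t1 t2)
    (hτ : t - t1 ≤ τ) :
    |U x t - U' x t| ≤ (e0 + F * (t - t1)) * linearGrowth n R (couplingBound l1 l2 M) τ := by
  rw [abs_sub_le_iff]
  exact ⟨h.sub_le hR hl1 hl2 h' he hF (fun x hx t ht => (abs_sub_le_iff.1 (hf x hx t ht)).1)
      (fun x hx t ht => (abs_sub_le_iff.1 (hg x hx t ht)).1)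
      (fun x hx => (abs_sub_le_iff.1 (hU x hx)).1) (fun x hx => (abs_sub_le_iff.1 (hV x hx)).1)
      hx ht hτ,
    h'.sub_le hR hl1 hl2 h he hF (fun x hx t ht => (abs_sub_le_iff.1 (hf x hx t ht)).2)
      (fun x hx t ht => (abs_sub_le_iff.1 (hg x hx t ht)).2)
      (fun x hx => (abs_sub_le_iff.1 (hU x hx)).2) (fun x hx => (abs_sub_le_iff.1 (hV x hx)).2)
      hx ht hτ⟩

namespace HalfSolution

lemma forcedHalf_shift (h : HalfSolution R T l u v) {p : ℝ} (h1 : 0 ≤ t1 + p) (h2 : t2 + p < T) :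
    ForcedHalf R t1 t2 l (fun x t => u x (t + p)) (fun x t => v x (t + p)) (fun _ _ => 0) where
  continuousOn := h.continuousOn.comp (f := fun q : Eucl n × ℝ => (q.1, q.2 + p)) (by fun_prop)
    fun q hq => ⟨hq.1, by dsimp only; linarith [hq.2.1], by dsimp only; linarith [hq.2.2]⟩
  contDiffAt t ht x hx := h.contDiffAt ⟨by linarith [ht.1], by linarith [ht.2]⟩ hx
  interior t ht x hx := by
    have htp : t + p ∈ Ioo 0 T := ⟨by linarith [ht.1], by linarith [ht.2]⟩
    simpa using (h.interior x hx (t + p) htp).comp_add_const t p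
  boundary t ht x hx := h.boundary x hx (t + p) ⟨by linarith [ht.1], by linarith [ht.2]⟩

lemma forcedHalf_rotate (h : HalfSolution R T l u v) (h2 : t2 < T) (Q : Eucl n ≃ₗᵢ[ℝ] Eucl n) :
    ForcedHalf R 0 t2 l (fun x t => u (Q x) t) (fun x t => v (Q x) t) (fun _ _ => 0) where
  continuousOn := h.continuousOn.comp (f := fun q : Eucl n × ℝ => (Q q.1, q.2)) (by fun_prop)
    fun q hq => ⟨by simpa using hq.1, hq.2.1, hq.2.2.trans_lt h2⟩
  contDiffAt t ht x hx :=
    (h.contDiffAt ⟨ht.1, ht.2.trans_lt h2⟩ (x := Q x) (by simpa using hx)).comp x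
      Q.contDiff.contDiffAt
  interior t ht x hx := by
    have hQx : Q x ∈ ball (0 : Eucl n) R := by simpa using hx
    have ht' : t ∈ Ioo 0 T := ⟨ht.1, ht.2.trans_lt h2⟩
    rw [lap_comp_linearIsometryEquiv (f := fun y => u y t) Q (h.contDiffAt ht' hQx)]
    simpa using h.interior (Q x) hQx t ht'
  boundary t ht x hx := by
    simpa using h.boundary (Q x) (by simpa using hx) t ⟨ht.1, ht.2.trans_lt h2⟩

lemma forcedHalf_freeze (h : HalfSolution R T l u v) {a : ℝ} (ha : a ∈ Ioo 0 T) (t1 t2 : ℝ) :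
    ForcedHalf R t1 t2 l (fun x _ => u x a) (fun x _ => v x a)
      (fun x _ => -(lap (fun y => u y a) x + l * exp (v x a))) where
  continuousOn := h.continuousOn.comp (f := fun q : Eucl n × ℝ => (q.1, a)) (by fun_prop)
    fun q hq => ⟨hq.1, ha.1.le, ha.2⟩
  contDiffAt _ _ _ hx := h.contDiffAt ha hx
  interior t _ x _ := (hasDerivAt_const t (u x a)).congr_deriv (by ring)
  boundary _ _ x hx := h.boundary x hx a ha

lemma exists_abs_lap_add_le (h : HalfSolution R T l u v) {a : ℝ} (ha : a ∈ Ioo 0 T)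
    (hM : ∀ x ∈ closedBall (0 : Eucl n) R, v x a ≤ M) :
    ∃ F, 0 ≤ F ∧ ∀ x ∈ ball (0 : Eucl n) R, |lap (fun y => u y a) x + l * exp (v x a)| ≤ F := by
  obtain ⟨F, hF⟩ := exists_abs_lap_le h.radius_pos (h.contDiffOn a ha)
  have hl := h.coeff_pos
  refine ⟨|F| + l * exp M, by positivity, fun x hx => (abs_add_le _ _).trans ?_⟩
  rw [abs_of_pos (a := l * _) (by positivity)]
  have hlap := (hF x hx).trans (le_abs_self F)
  have hv := hM x (ball_subset_closedBall hx)
  exact add_le_add hlap (by gcongr)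

end HalfSolution

namespace SolutionPair

lemma forcedPair_shift (h : SolutionPair R T l1 l2 u v) {p : ℝ} (h1 : 0 ≤ t1 + p)
    (h2 : t2 + p < T)
    (hM : ∀ x ∈ closedBall (0 : Eucl n) R, ∀ t ∈ Icc 0 (t2 + p), u x t ≤ M ∧ v x t ≤ M) :
    ForcedPair R t1 t2 l1 l2 M (fun x t => u x (t + p)) (fun x t => v x (t + p))
      (fun _ _ => 0) (fun _ _ => 0) where
  fst := h.fst.forcedHalf_shift h1 h2
  snd := h.snd.forcedHalf_shift h1 h2
  fst_le x hx t ht := (hM x hx _ ⟨by linarith [ht.1], by linarith [ht.2]⟩).1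
  snd_le x hx t ht := (hM x hx _ ⟨by linarith [ht.1], by linarith [ht.2]⟩).2

lemma apply_linearIsometryEquiv (h : SolutionPair R T l1 l2 u v) (Q : Eucl n ≃ₗᵢ[ℝ] Eucl n)
    {x : Eucl n} (hx : x ∈ closedBall (0 : Eucl n) R) {t : ℝ} (ht : t ∈ Ico 0 T) :
    u (Q x) t = u x t := by
  obtain ⟨M, hM⟩ := h.exists_le ht.2
  have hQ : ∀ y ∈ closedBall (0 : Eucl n) R, Q y ∈ closedBall (0 : Eucl n) R := by simp
  have hrot : ForcedPair R 0 t l1 l2 M (fun x t => u (Q x) t) (fun x t => v (Q x) t)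
      (fun _ _ => 0) (fun _ _ => 0) :=
    ⟨h.fst.forcedHalf_rotate ht.2 Q, h.snd.forcedHalf_rotate ht.2 Q,
      fun y hy s hs => (hM _ (hQ y hy) s ⟨hs.1.le, hs.2⟩).1,
      fun y hy s hs => (hM _ (hQ y hy) s ⟨hs.1.le, hs.2⟩).2⟩
  have hself := h.forcedPair_shift (t1 := 0) (t2 := t) (p := 0) (by simp) (by simpa using ht.2)
    (by simpa using hM)
  have hinit : ∀ {w z : Eucl n → ℝ → ℝ} {l : ℝ}, HalfSolution R T l w z →
      ∀ y ∈ closedBall (0 : Eucl n) R, |w (Q y) 0 - w y (0 + 0)| ≤ 0 := fun hw y hy => by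
    rw [add_zero, hw.initial_mono _ (hQ y hy) y hy (by simp) |>.antisymm
      (hw.initial_mono y hy _ (hQ y hy) (by simp)), sub_self, abs_zero]
  have := hrot.abs_sub_le h.fst.radius_pos h.fst.coeff_pos h.snd.coeff_pos hself le_rfl le_rfl
    (by simp) (by simp) (hinit h.fst) (hinit h.snd) hx ⟨ht.1, le_rfl⟩ le_rfl
  simpa [sub_eq_zero] using this

lemma eq_of_norm_eq (h : SolutionPair R T l1 l2 u v) {x y : Eucl n}
    (hx : x ∈ closedBall (0 : Eucl n) R) (hxy : ‖x‖ = ‖y‖) {t : ℝ} (ht : t ∈ Ico 0 T) :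
    u x t = u y t := by
  rw [← h.apply_linearIsometryEquiv (Submodule.reflection (ℝ ∙ (x - y))ᗮ) hx ht,
    Submodule.reflection_sub hxy]

lemma exists_abs_sub_freeze_le (h : SolutionPair R T l1 l2 u v) {a : ℝ} (ha : a ∈ Ioo 0 T)
    (h2 : t2 < T) : ∃ C, 0 ≤ C ∧ ∀ x ∈ closedBall (0 : Eucl n) R, ∀ t ∈ Icc a t2,
      |u x t - u x a| ≤ C * (t - a) := by
  obtain ⟨M, hM⟩ := h.exists_le (max_lt ha.2 h2)
  have hMa : ∀ x ∈ closedBall (0 : Eucl n) R, u x a ≤ M ∧ v x a ≤ M :=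
    fun x hx => hM x hx a ⟨ha.1.le, le_max_left _ _⟩
  obtain ⟨Fu, hFu, hu⟩ := h.fst.exists_abs_lap_add_le ha fun x hx => (hMa x hx).2
  obtain ⟨Fv, hFv, hv⟩ := h.snd.exists_abs_lap_add_le ha fun x hx => (hMa x hx).1
  have hself := h.forcedPair_shift (t1 := a) (t2 := t2) (p := 0) (by simpa using ha.1.le)
    (by simpa using h2) fun x hx t ht =>
      hM x hx t ⟨ht.1, (ht.2.trans_eq (add_zero _)).trans (le_max_right _ _)⟩
  have hfreeze : ForcedPair R a t2 l1 l2 M (fun x _ => u x a) (fun x _ => v x a) _ _ :=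
    ⟨h.fst.forcedHalf_freeze ha a t2, h.snd.forcedHalf_freeze ha a t2,
      fun x hx _ _ => (hMa x hx).1, fun x hx _ _ => (hMa x hx).2⟩
  refine ⟨(Fu + Fv) * linearGrowth n R (couplingBound l1 l2 M) (t2 - a),
    mul_nonneg (by positivity) (linearGrowth_pos _ _ _ _).le, fun x hx t ht => ?_⟩
  have := hself.abs_sub_le (e0 := 0) (F := Fu + Fv) h.fst.radius_pos h.fst.coeff_pos h.snd.coeff_pos
    hfreeze le_rfl (by positivity)
    (fun y hy _ _ => by simpa using (hu y hy).trans (le_add_of_nonneg_right hFv))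
    (fun y hy _ _ => by simpa using (hv y hy).trans (le_add_of_nonneg_left hFu))
    (by simp) (by simp) hx ht (sub_le_sub_right ht.2 a)
  simp only [add_zero, zero_add] at this
  linarith

lemma exists_abs_sub_le (h : SolutionPair R T l1 l2 u v) {a : ℝ} (ha : a ∈ Ioo 0 T)
    (h2 : t2 < T) : ∃ C, 0 ≤ C ∧ ∀ x ∈ closedBall (0 : Eucl n) R, ∀ s ∈ Icc a t2, ∀ t ∈ Icc a t2,
      s ≤ t → |u x t - u x s| ≤ C * (t - s) := by
  obtain ⟨Cu, hCu, hu⟩ := h.exists_abs_sub_freeze_le ha h2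
  obtain ⟨Cv, hCv, hv⟩ := h.symm.exists_abs_sub_freeze_le ha h2
  obtain ⟨M, hM⟩ := h.exists_le h2
  refine ⟨(Cu + Cv) * linearGrowth n R (couplingBound l1 l2 M) (t2 - a),
    mul_nonneg (by positivity) (linearGrowth_pos _ _ _ _).le, fun x hx s hs t ht hst => ?_⟩
  set δ := t - s
  have : 0 ≤ δ := sub_nonneg.2 hst
  have hs' : s + δ = t := add_sub_cancel s t
  have haδ : a + δ ∈ Icc a t2 := ⟨by linarith, by linarith [hs.1, ht.2]⟩
  have hlate := h.forcedPair_shift (t1 := a) (t2 := s) (p := δ) (by linarith [ha.1])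
    (by linarith [ht.2]) fun x hx r hr => hM x hx r ⟨hr.1, by linarith [hr.2, ht.2]⟩
  have hearly := h.forcedPair_shift (t1 := a) (t2 := s) (p := 0) (by linarith [ha.1])
    (by linarith [hs.2]) fun x hx r hr => hM x hx r ⟨hr.1, by linarith [hr.2, hs.2]⟩
  have hinit : ∀ {w : Eucl n → ℝ → ℝ} {C : ℝ}, C ≤ Cu + Cv →
      (∀ x ∈ closedBall (0 : Eucl n) R, ∀ t ∈ Icc a t2, |w x t - w x a| ≤ C * (t - a)) →
      ∀ x ∈ closedBall (0 : Eucl n) R, |w x (a + δ) - w x (a + 0)| ≤ (Cu + Cv) * δ :=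
    fun hC hw x hx => by
      have := (hw x hx (a + δ) haδ).trans
        (mul_le_mul_of_nonneg_right hC (sub_nonneg.2 haδ.1))
      simpa only [add_zero, add_sub_cancel_left] using this
  have := hlate.abs_sub_le (e0 := (Cu + Cv) * δ) (F := 0) h.fst.radius_pos h.fst.coeff_pos
    h.snd.coeff_pos hearly (by positivity) le_rfl (by simp) (by simp)
    (hinit (le_add_of_nonneg_right hCv) hu) (hinit (le_add_of_nonneg_left hCu) hv) hx
    ⟨hs.1, le_rfl⟩ (sub_le_sub_right hs.2 a)
  simp only [add_zero, zero_mul, hs'] at this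
  linarith

end SolutionPair

/-- Pairs of points of the closed ball, the second one being at least as far from the centre. -/
def orderedPairs (n : ℕ) (R : ℝ) : Set (Eucl n × Eucl n) := {p | ‖p.1‖ ≤ ‖p.2‖ ∧ ‖p.2‖ ≤ R}

lemma mem_closedBall_of_mem_orderedPairs {p : Eucl n × Eucl n} (hp : p ∈ orderedPairs n R) :
    p.1 ∈ closedBall (0 : Eucl n) R ∧ p.2 ∈ closedBall (0 : Eucl n) R :=
  ⟨mem_closedBall_zero_iff.2 (hp.1.trans hp.2), mem_closedBall_zero_iff.2 hp.2⟩

lemma isCompact_orderedPairs : IsCompact (orderedPairs n R) := by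
  refine ((isCompact_closedBall (0 : Eucl n) R).prod
    (isCompact_closedBall (0 : Eucl n) R)).of_isClosed_subset ?_
    fun p hp => mem_closedBall_of_mem_orderedPairs hp
  exact (isClosed_le continuous_fst.norm continuous_snd.norm).inter
    (isClosed_le continuous_snd.norm continuous_const)

lemma lap_le_zero_le_lap_of_isMaxOn_orderedPairs {φ : Eucl n → ℝ} {x y : Eucl n}
    (hx : ContDiffAt ℝ 2 φ x) (hy : ContDiffAt ℝ 2 φ y) (hxy : ‖x‖ < ‖y‖) (hyR : ‖y‖ < R)
    (hmax : IsMaxOn (fun p : Eucl n × Eucl n => φ p.1 - φ p.2) (orderedPairs n R) (x, y)) :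
    lap φ x ≤ 0 ∧ 0 ≤ lap φ y := by
  constructor
  · refine lap_nonpos_of_isLocalMax hx ?_
    filter_upwards [continuous_norm.continuousAt.eventually_lt_const hxy] with z hz
    exact (sub_le_sub_iff_right _).1 (isMaxOn_iff.1 hmax (z, y) ⟨hz.le, hyR.le⟩)
  · rw [← neg_nonpos, ← lap_neg]
    refine lap_nonpos_of_isLocalMax hy.neg ?_
    filter_upwards [continuous_norm.continuousAt.eventually_const_lt hxy,
      continuous_norm.continuousAt.eventually_lt_const hyR] with z hz hzR
    exact neg_le_neg ((sub_le_sub_iff_left _).1 (isMaxOn_iff.1 hmax (x, z) ⟨hz.le, hzR.le⟩))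

namespace HalfSolution

lemma sub_ne_exp_of_norm_lt (h : HalfSolution R T l u v) {t ε Λ : ℝ} (ht : t ∈ Ioo 0 T)
    (hM : ∀ x ∈ closedBall (0 : Eucl n) R, v x t ≤ M) (hε : 0 < ε) (hΛ : l * exp M < Λ)
    {x y : Eucl n} (hxy : ‖x‖ < ‖y‖) (hyR : ‖y‖ < R)
    (hu : ∀ p ∈ orderedPairs n R, ∀ s ∈ Icc 0 t, u p.1 s - u p.2 s ≤ ε * exp (Λ * s))
    (hv : v x t - v y t ≤ ε * exp (Λ * t)) : u x t - u y t ≠ ε * exp (Λ * t) := by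
  intro heq
  have hx : x ∈ ball (0 : Eucl n) R := mem_ball_zero_iff.2 (hxy.trans hyR)
  have hy : y ∈ ball (0 : Eucl n) R := mem_ball_zero_iff.2 hyR
  have : 0 < ε * exp (Λ * t) := by positivity
  obtain ⟨hlapx, hlapy⟩ := lap_le_zero_le_lap_of_isMaxOn_orderedPairs (φ := fun z => u z t)
    (h.contDiffAt ht hx) (h.contDiffAt ht hy) hxy hyR
    fun p hp => (hu p hp t (right_mem_Icc.2 ht.1.le)).trans_eq heq.symm
  have htime := hasDerivWithinAt_nonneg_of_isMaxOn_Icc_right ht.1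
    (((h.interior x hx t ht).sub (h.interior y hy t ht)).sub
      ((hasDerivAt_exp_mul Λ t).const_mul ε)).hasDerivWithinAt fun s hs => by
        simpa [heq] using hu (x, y) ⟨hxy.le, hyR.le⟩ s hs
  obtain ⟨c, hc, hcM, hsecant⟩ := exists_exp_sub_exp_eq_mul_sub
    (hM x (ball_subset_closedBall hx)) (hM y (ball_subset_closedBall hy))
  have hsource : l * (exp (v x t) - exp (v y t)) < Λ * (ε * exp (Λ * t)) := by
    have hl := h.coeff_pos
    rw [hsecant]
    calc l * (c * (v x t - v y t)) ≤ l * (c * (ε * exp (Λ * t))) := by gcongr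
      _ ≤ l * (exp M * (ε * exp (Λ * t))) := by gcongr
      _ = l * exp M * (ε * exp (Λ * t)) := by ring
      _ < Λ * (ε * exp (Λ * t)) := by gcongr
  linarith

lemma continuousOn_sub_orderedPairs (h : HalfSolution R T l u v) (h2 : t2 < T) {φ : ℝ → ℝ}
    (hφ : Continuous φ) :
    ContinuousOn (fun q : (Eucl n × Eucl n) × ℝ => u q.1.1 q.2 - u q.1.2 q.2 - φ q.2)
      (orderedPairs n R ×ˢ Icc 0 t2) := by
  have hc := h.continuousOn_Icc (t1 := 0) le_rfl h2
  refine ((hc.comp (f := fun q : (Eucl n × Eucl n) × ℝ => (q.1.1, q.2)) (by fun_prop) ?_).sub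
    (hc.comp (f := fun q : (Eucl n × Eucl n) × ℝ => (q.1.2, q.2)) (by fun_prop) ?_)).sub
    (by fun_prop)
  · exact fun q hq => ⟨(mem_closedBall_of_mem_orderedPairs hq.1).1, hq.2⟩
  · exact fun q hq => ⟨(mem_closedBall_of_mem_orderedPairs hq.1).2, hq.2⟩

end HalfSolution

namespace SolutionPair

lemma sub_ne_exp (h : SolutionPair R T l1 l2 u v) {t ε Λ : ℝ} (ht : t ∈ Ioo 0 T)
    (hM : ∀ x ∈ closedBall (0 : Eucl n) R, v x t ≤ M) (hε : 0 < ε) (hΛ : l1 * exp M < Λ)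
    {p : Eucl n × Eucl n} (hp : p ∈ orderedPairs n R)
    (hu : ∀ p ∈ orderedPairs n R, ∀ s ∈ Icc 0 t, u p.1 s - u p.2 s ≤ ε * exp (Λ * s))
    (hv : v p.1 t - v p.2 t ≤ ε * exp (Λ * t)) : u p.1 t - u p.2 t ≠ ε * exp (Λ * t) := by
  have ht' : t ∈ Ico 0 T := ⟨ht.1.le, ht.2⟩
  rcases hp.1.lt_or_eq with hlt | heq
  · rcases hp.2.lt_or_eq with hltR | heqR
    · exact h.fst.sub_ne_exp_of_norm_lt ht hM hε hΛ hlt hltR hu hv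
    · obtain ⟨z, hz, hzR, huz⟩ :=
        h.fst.exists_lt_of_norm_eq ht heqR (norm_nonneg p.1) (hlt.trans_eq heqR)
      have := hu (p.1, z) ⟨hz, hzR⟩ t (right_mem_Icc.2 ht.1.le)
      dsimp only at this
      linarith
  · rw [h.eq_of_norm_eq (mem_closedBall_of_mem_orderedPairs hp).1 heq ht', sub_self]
    positivity

lemma mono_norm (h : SolutionPair R T l1 l2 u v) {x y : Eucl n} (hxy : ‖x‖ ≤ ‖y‖)
    (hy : ‖y‖ ≤ R) {t : ℝ} (ht : t ∈ Ico 0 T) : u x t ≤ u y t := by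
  obtain ⟨M, hM⟩ := h.exists_le ht.2
  have hl1 := mul_pos h.fst.coeff_pos (exp_pos M)
  have hl2 := mul_pos h.snd.coeff_pos (exp_pos M)
  set Λ := l1 * exp M + l2 * exp M
  have hlt : ∀ ε > 0, u x t - u y t < ε * exp (Λ * t) := fun ε hε => by
    by_contra! hcon
    have hinit : ∀ {w z : Eucl n → ℝ → ℝ} {l : ℝ}, HalfSolution R T l w z →
        ∀ p ∈ orderedPairs n R, w p.1 0 - w p.2 0 - ε * exp (Λ * 0) < 0 := fun hw p hp => by
      have hmem := mem_closedBall_of_mem_orderedPairs hp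
      have := hw.initial_mono _ hmem.1 _ hmem.2 hp.1
      simp only [mul_zero, exp_zero]
      linarith
    obtain ⟨i, p, hp, s, hs, hzero, hle⟩ := exists_first_zero (isCompact_orderedPairs (R := R))
      (f := fun (i : Bool) p s =>
        cond i (u p.1 s) (v p.1 s) - cond i (u p.2 s) (v p.2 s) - ε * exp (Λ * s))
      (Bool.rec (h.snd.continuousOn_sub_orderedPairs ht.2 (φ := fun s => ε * exp (Λ * s))
          (by fun_prop))
        (h.fst.continuousOn_sub_orderedPairs ht.2 (φ := fun s => ε * exp (Λ * s)) (by fun_prop)))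
      (Bool.rec (hinit h.snd) (hinit h.fst)) ⟨true, (x, y), ⟨hxy, hy⟩, t, right_mem_Icc.2 ht.1,
        sub_nonneg.2 hcon⟩
    have hs' : s ∈ Ioo 0 T := ⟨hs.1, hs.2.trans_lt ht.2⟩
    have hMs := fun z hz => hM z hz s ⟨hs.1.le, hs.2⟩
    have hu := fun q hq r hr => sub_nonpos.1 (hle true q hq r hr)
    have hv := fun q hq r hr => sub_nonpos.1 (hle false q hq r hr)
    have hss : s ∈ Icc 0 s := right_mem_Icc.2 hs.1.le
    cases i
    · exact h.symm.sub_ne_exp hs' (fun z hz => (hMs z hz).1) hε (by linarith) hp hv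
        (hu p hp s hss) (sub_eq_zero.1 hzero)
    · exact h.sub_ne_exp hs' (fun z hz => (hMs z hz).2) hε (by linarith) hp hu
        (hv p hp s hss) (sub_eq_zero.1 hzero)
  refine sub_nonpos.1 (le_of_forall_pos_lt_add fun δ hδ => ?_)
  simpa [exp_ne_zero] using hlt (δ / exp (Λ * t)) (by positivity)

end SolutionPair

end Differences

/-! ### Growth over one time scale -/

section Growth

variable {n : ℕ} {R T l L l1 l2 t1 t2 k : ℝ} {u v : Eucl n → ℝ → ℝ}

lemma hasDerivAt_exp_mul_sub_const (κ a q : ℝ) :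
    HasDerivAt (fun q => exp (κ * (q - a))) (κ * exp (κ * (q - a))) q :=
  (hasDerivAt_exp_mul κ (q - a)).comp_sub_const q a

/-- The barrier `b + c (t - t1) + exp (κ (‖x‖ ^ 2 - R ^ 2)) / 2`. -/
noncomputable def growthBarrier (R t1 t2 b c κ : ℝ) : RadialBarrier t1 t2 where
  toFun t q := b + c * (t - t1) + 1 / 2 * exp (κ * (q - R ^ 2))
  dt _ _ := c
  dq _ q := 1 / 2 * (κ * exp (κ * (q - R ^ 2)))
  dqq _ q := 1 / 2 * (κ * (κ * exp (κ * (q - R ^ 2))))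
  continuousOn := by fun_prop
  contDiff _ _ := by fun_prop
  hasDerivAt_dt t _ q := by
    simpa using ((((hasDerivAt_id t).sub_const t1).const_mul c).const_add b).add_const
      (1 / 2 * exp (κ * (q - R ^ 2)))
  hasDerivAt_dq _ _ q := ((hasDerivAt_exp_mul_sub_const κ (R ^ 2) q).const_mul _).const_add _
  hasDerivAt_dqq _ _ q := ((hasDerivAt_exp_mul_sub_const κ (R ^ 2) q).const_mul κ).const_mul _

/-- The speed at which, in units of `k ^ 2`, a solution of size `log k` can grow; `L` bounds the
coefficients of the two sources. -/
noncomputable def growthSpeed (n : ℕ) (R L : ℝ) : ℝ := 19 + 3 * n / R + 3 * L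

lemma growthSpeed_pos (hR : 0 < R) (hL : 0 < L) : 0 < growthSpeed n R L := by
  unfold growthSpeed; positivity

lemma growthSpeed_mul_sub_le (hR : 0 < R) (hL : 0 < L) (hk : 1 ≤ k) {t : ℝ}
    (ht : t ≤ t2) (hτ : t2 - t1 ≤ 1 / (2 * growthSpeed n R L * k ^ 2)) :
    growthSpeed n R L * k ^ 2 * (t - t1) ≤ 1 / 2 := by
  have := growthSpeed_pos (n := n) hR hL
  calc growthSpeed n R L * k ^ 2 * (t - t1)
      ≤ growthSpeed n R L * k ^ 2 * (1 / (2 * growthSpeed n R L * k ^ 2)) := by gcongr; linarith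
    _ = 1 / 2 := by field_simp

lemma growthBarrier_le {b c κ t : ℝ} (hκ : 0 ≤ κ) (hc : c * (t - t1) ≤ 1 / 2) {x : Eucl n}
    (hx : x ∈ closedBall (0 : Eucl n) R) : growthBarrier R t1 t2 b c κ t (‖x‖ ^ 2) ≤ b + 1 := by
  have hxR : ‖x‖ ^ 2 ≤ R ^ 2 := by
    have := mem_closedBall_zero_iff.1 hx
    gcongr
  have hexp : exp (κ * (‖x‖ ^ 2 - R ^ 2)) ≤ 1 :=
    exp_le_one_iff.2 (mul_nonpos_of_nonneg_of_nonpos hκ (sub_nonpos.2 hxR))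
  simp only [growthBarrier]
  linarith

lemma three_mul_lt_growthBarrier_heat (hR : 0 < R) (hL : 0 < L) (hl : l ≤ L) (hk : 1 ≤ k) {t q : ℝ}
    (hq : q ≤ R ^ 2) : l * (3 * k) <
      (growthBarrier R t1 t2 (log k) (growthSpeed n R L * k ^ 2) (3 * k / R)).heat n t q := by
  have : 0 < k := one_pos.trans_le hk
  have hexp : exp (3 * k / R * (q - R ^ 2)) ≤ 1 :=
    exp_le_one_iff.2 (mul_nonpos_of_nonneg_of_nonpos (by positivity) (sub_nonpos.2 hq))
  have hkk : k ≤ k ^ 2 := le_self_pow₀ hk two_ne_zero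
  have hdiffusion : 4 * q * (1 / 2 * (3 * k / R * (3 * k / R * exp (3 * k / R * (q - R ^ 2)))))
      + 2 * n * (1 / 2 * (3 * k / R * exp (3 * k / R * (q - R ^ 2))))
      ≤ 18 * k ^ 2 + 3 * n / R * k ^ 2 := calc
    _ ≤ 4 * R ^ 2 * (1 / 2 * (3 * k / R * (3 * k / R * 1)))
        + 2 * n * (1 / 2 * (3 * k / R * 1)) := by gcongr
    _ = 18 * k ^ 2 + 3 * n / R * k := by field_simp; ring
    _ ≤ 18 * k ^ 2 + 3 * n / R * k ^ 2 := by gcongr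
  have hsource : l * (3 * k) ≤ 3 * L * k ^ 2 := by nlinarith
  simp only [RadialBarrier.heat, growthBarrier, growthSpeed]
  nlinarith

lemma HalfSolution.isStrictSubsolution_growthBarrier (h : HalfSolution R T l u v) (hl : l ≤ L)
    (hk : 1 ≤ k) (h1 : 0 ≤ t1) (h2 : t2 < T)
    (hτ : t2 - t1 ≤ 1 / (2 * growthSpeed n R L * k ^ 2))
    (hi : ∀ x ∈ closedBall (0 : Eucl n) R, u x t1 ≤ log k) :
    IsStrictSubsolution R
      (growthBarrier R t1 t2 (log k) (growthSpeed n R L * k ^ 2) (3 * k / R)) u v := by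
  have hR := h.radius_pos
  have hL : 0 < L := h.coeff_pos.trans_le hl
  have hk0 : 0 < k := one_pos.trans_le hk
  set Φ := growthBarrier R t1 t2 (log k) (growthSpeed n R L * k ^ 2) (3 * k / R)
  have hIoo : ∀ t ∈ Ioc t1 t2, t ∈ Ioo 0 T := fun t ht => ⟨h1.trans_lt ht.1, ht.2.trans_lt h2⟩
  have hexp : ∀ t ∈ Ioc t1 t2, ∀ x ∈ closedBall (0 : Eucl n) R, v x t ≤ Φ t (‖x‖ ^ 2) →
      exp (v x t) < 3 * k := fun t ht x hx hle => calc
    exp (v x t) ≤ exp (log k + 1) := exp_le_exp.2 <| hle.trans <|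
      growthBarrier_le (by positivity) (growthSpeed_mul_sub_le hR hL hk ht.2 hτ) hx
    _ = k * exp 1 := by rw [exp_add, exp_log hk0]
    _ < 3 * k := by linarith [mul_lt_mul_of_pos_left exp_one_lt_three hk0]
  refine ⟨h.continuousOn_Icc h1 h2, fun t ht x hx => h.contDiffAt (hIoo t ht) hx,
    fun x hx => (hi x hx).trans_lt ?_, fun t ht x hx _ hv => ⟨_, h.interior x hx t (hIoo t ht), ?_⟩,
    fun t ht x hx _ hv => ⟨_, h.boundary x hx t (hIoo t ht), ?_⟩⟩
  · simp [Φ, growthBarrier, exp_pos]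
  · have hxR : ‖x‖ ^ 2 ≤ R ^ 2 := by
      have := (mem_ball_zero_iff.1 hx).le
      gcongr
    have hheat : l * (3 * k) < Φ.heat n t (‖x‖ ^ 2) :=
      three_mul_lt_growthBarrier_heat hR hL hl hk hxR
    have hsource := mul_lt_mul_of_pos_left (hexp t ht x (ball_subset_closedBall hx) hv) h.coeff_pos
    linarith
  · have hflux : 2 * R * Φ.dq t (R ^ 2) = 3 * k := by
      simp only [Φ, growthBarrier, sub_self, mul_zero, exp_zero]
      field_simp
    rw [hflux]
    exact hexp t ht x (mem_closedBall_zero_iff.2 hx.le) (by rwa [hx])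

lemma SolutionPair.le_log_add_one (h : SolutionPair R T l1 l2 u v) (hk : 1 ≤ k) (h1 : 0 ≤ t1)
    (h2 : t2 < T) (hτ : t2 - t1 ≤ 1 / (2 * growthSpeed n R (max l1 l2) * k ^ 2))
    (hi : ∀ x ∈ closedBall (0 : Eucl n) R, u x t1 ≤ log k ∧ v x t1 ≤ log k)
    {x : Eucl n} (hx : x ∈ closedBall (0 : Eucl n) R) {t : ℝ} (ht : t ∈ Icc t1 t2) :
    u x t ≤ log k + 1 := by
  have hR := h.fst.radius_pos
  have hL : 0 < max l1 l2 := lt_max_of_lt_left h.fst.coeff_pos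
  refine ((h.fst.isStrictSubsolution_growthBarrier (le_max_left _ _) hk h1 h2 hτ
    fun y hy => (hi y hy).1).lt_barrier hR (h.snd.isStrictSubsolution_growthBarrier
      (le_max_right _ _) hk h1 h2 hτ fun y hy => (hi y hy).2) hx ht).le.trans
    (growthBarrier_le (by positivity) (growthSpeed_mul_sub_le hR hL hk ht.2 hτ) hx)

end Growth

/-! ### A self-similar barrier for the difference of the components -/

section SelfSimilar

variable {n : ℕ} {R T l1 l2 a A τ t1 t2 : ℝ} {u v : Eucl n → ℝ → ℝ}

lemma hasDerivAt_mul_rpow_sub {t : ℝ} (ht : t < τ) (A γ : ℝ) :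
    HasDerivAt (fun t => A * (τ - t) ^ γ) (-γ * (A * (τ - t) ^ γ) * (√(τ - t))⁻¹ ^ 2) t := by
  have h0 : 0 < τ - t := sub_pos.2 ht
  have hbase : HasDerivAt (fun t => τ - t) (-1) t := by simpa using (hasDerivAt_id t).const_sub τ
  refine ((hbase.rpow_const (Or.inl h0.ne')).const_mul A).congr_deriv ?_
  rw [inv_pow, sq_sqrt h0.le, rpow_sub_one h0.ne']
  field_simp

lemma hasDerivAt_inv_sqrt_sub {t : ℝ} (ht : t < τ) :
    HasDerivAt (fun t => (√(τ - t))⁻¹) (1 / 2 * (√(τ - t))⁻¹ ^ 3) t := by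
  have h0 : 0 < τ - t := sub_pos.2 ht
  have hsqrt : √(τ - t) ≠ 0 := (sqrt_pos.2 h0).ne'
  have hbase : HasDerivAt (fun t => τ - t) (-1) t := by simpa using (hasDerivAt_id t).const_sub τ
  refine ((hbase.sqrt h0.ne').fun_inv hsqrt).congr_deriv ?_
  field_simp

/-- The spatial profile of the self-similar barrier, in the similarity variable. -/
noncomputable def cubicProfile (a ξ : ℝ) : ℝ := 1 + a * ξ - a / 10 * ξ ^ 2 + a / 24 * ξ ^ 3

lemma hasDerivAt_cubicProfile (a ξ : ℝ) :
    HasDerivAt (cubicProfile a) (a - a / 5 * ξ + a / 8 * ξ ^ 2) ξ := by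
  have := ((((hasDerivAt_id ξ).const_mul a).const_add 1).fun_sub
    (((hasDerivAt_id ξ).fun_pow 2).const_mul (a / 10))).fun_add
    (((hasDerivAt_id ξ).fun_pow 3).const_mul (a / 24))
  exact this.congr_deriv (by simp; ring)

lemma one_le_cubicProfile (ha : 0 < a) {ξ : ℝ} (hξ : 0 ≤ ξ) : 1 ≤ cubicProfile a ξ := by
  have hquad : 0 ≤ 1 - 1 / 10 * ξ + 1 / 24 * ξ ^ 2 := by nlinarith [sq_nonneg (ξ - 1)]
  have := mul_nonneg (mul_nonneg ha.le hξ) hquad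
  unfold cubicProfile
  linarith

/-- The factor `μ = ‖x‖ ^ 2 / R ^ 2` comes from the variable coefficient of the radial Laplacian
in the similarity variable `ξ`. -/
lemma cubicProfile_supersolution {ξ μ : ℝ} (ha : 0 < a) (ha2 : a ≤ 1 / 2) (hξ : 0 ≤ ξ)
    (hμ1 : μ ≤ 1) (hμ : ξ ≤ 4 / 5 → 19 / 25 ≤ μ) :
    a / 20 ≤ -(a / 10) * cubicProfile a ξ + 1 / 2 * ξ * (a - a / 5 * ξ + a / 8 * ξ ^ 2)
      - μ * (-(a / 5) + a / 4 * ξ) := by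
  have hfac : 1 / 20 ≤ -(1 / 10) * (1 + a * ξ - a / 10 * ξ ^ 2 + a / 24 * ξ ^ 3)
      + 1 / 2 * ξ * (1 - 1 / 5 * ξ + 1 / 8 * ξ ^ 2) - μ * (-(1 / 5) + 1 / 4 * ξ) := by
    have hξ2 : 0 ≤ a * ξ ^ 2 := by positivity
    have hξ1 : a * ξ ≤ 1 / 2 * ξ := by gcongr
    have hξ3 : a * ξ ^ 3 ≤ 1 / 2 * ξ ^ 3 := by gcongr
    have : 0 ≤ ξ ^ 3 := by positivity
    rcases le_total ξ (4 / 5) with hsmall | hlarge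
    · have : μ * (-(1 / 5) + 1 / 4 * ξ) ≤ 19 / 25 * (-(1 / 5) + 1 / 4 * ξ) := by
        have := hμ hsmall
        nlinarith
      nlinarith
    · have : μ * (-(1 / 5) + 1 / 4 * ξ) ≤ -(1 / 5) + 1 / 4 * ξ := by nlinarith
      nlinarith [sq_nonneg (ξ - 5 / 6), mul_nonneg hξ (sq_nonneg (ξ - 5 / 6))]
  have := mul_le_mul_of_nonneg_left hfac ha.le
  unfold cubicProfile
  linarith

/-- The similarity variable `(R ^ 2 - q) / (2 R √(τ - t))`, where `q = ‖x‖ ^ 2`: the numerator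
`(R ^ 2 - q) / (2 R)` is a smooth substitute for the distance to the boundary. -/
noncomputable def similarityVar (R τ t q : ℝ) : ℝ := (√(τ - t))⁻¹ * ((R ^ 2 - q) / (2 * R))

lemma similarityVar_nonneg (hR : 0 < R) {t q : ℝ} (hq : q ≤ R ^ 2) : 0 ≤ similarityVar R τ t q :=
  mul_nonneg (by positivity) (div_nonneg (sub_nonneg.2 hq) (by positivity))

@[simp] lemma similarityVar_boundary (R τ t : ℝ) : similarityVar R τ t (R ^ 2) = 0 := by
  simp [similarityVar]

lemma hasDerivAt_similarityVar (R τ t q : ℝ) :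
    HasDerivAt (similarityVar R τ t) ((√(τ - t))⁻¹ * (-1 / (2 * R))) q :=
  (((hasDerivAt_id q).const_sub (R ^ 2)).div_const (2 * R)).const_mul _

/-- The barrier `A (τ - t) ^ (a / 10) f (ξ)`, with the cubic profile `f` and the similarity
variable `ξ`. -/
noncomputable def similarityBarrier (R a A : ℝ) (hτ : t2 < τ) : RadialBarrier t1 t2 where
  toFun t q := A * (τ - t) ^ (a / 10) * cubicProfile a (similarityVar R τ t q)
  dt t q := A * (τ - t) ^ (a / 10) * (√(τ - t))⁻¹ ^ 2 *
    (-(a / 10) * cubicProfile a (similarityVar R τ t q) + 1 / 2 * similarityVar R τ t q *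
      (a - a / 5 * similarityVar R τ t q + a / 8 * similarityVar R τ t q ^ 2))
  dq t q := -(1 / (2 * R)) * (A * (τ - t) ^ (a / 10) * (√(τ - t))⁻¹) *
    (a - a / 5 * similarityVar R τ t q + a / 8 * similarityVar R τ t q ^ 2)
  dqq t q := 1 / (4 * R ^ 2) * (A * (τ - t) ^ (a / 10) * (√(τ - t))⁻¹ ^ 2) *
    (-(a / 5) + a / 4 * similarityVar R τ t q)
  continuousOn := by
    have hne : ∀ p ∈ Icc t1 t2 ×ˢ (univ : Set ℝ), 0 < τ - p.1 := fun p hp =>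
      sub_pos.2 (hp.1.2.trans_lt hτ)
    have hbase : ContinuousOn (fun p : ℝ × ℝ => τ - p.1) (Icc t1 t2 ×ˢ univ) := by fun_prop
    have hξ : ContinuousOn (fun p : ℝ × ℝ => similarityVar R τ p.1 p.2) (Icc t1 t2 ×ˢ univ) :=
      (hbase.sqrt.inv₀ fun p hp => (sqrt_pos.2 (hne p hp)).ne').mul (by fun_prop)
    have hf : Continuous (cubicProfile a) := by unfold cubicProfile; fun_prop
    exact ((hbase.rpow_const fun p hp => Or.inl (hne p hp).ne').const_mul A).mul
      (hf.comp_continuousOn hξ)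
  contDiff _ _ := by unfold cubicProfile similarityVar; fun_prop
  hasDerivAt_dt t ht q := by
    have htτ : t < τ := ht.2.trans_lt hτ
    have hξ : HasDerivAt (fun s => similarityVar R τ s q)
        (1 / 2 * (√(τ - t))⁻¹ ^ 3 * ((R ^ 2 - q) / (2 * R))) t :=
      (hasDerivAt_inv_sqrt_sub htτ).mul_const _
    refine ((hasDerivAt_mul_rpow_sub htτ A (a / 10)).fun_mul
      ((hasDerivAt_cubicProfile a _).comp t hξ)).congr_deriv ?_
    simp only [Function.comp_apply, similarityVar]
    ring
  hasDerivAt_dq t _ q := by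
    refine (((hasDerivAt_cubicProfile a _).comp q (hasDerivAt_similarityVar R τ t q)).const_mul
      (A * (τ - t) ^ (a / 10))).congr_deriv ?_
    ring
  hasDerivAt_dqq t _ q := by
    have hξ := hasDerivAt_similarityVar R τ t q
    refine (((((hξ.const_mul (a / 5)).const_sub a).fun_add
      ((hξ.fun_pow 2).const_mul (a / 8)))).const_mul _).congr_deriv ?_
    push_cast
    ring

lemma nineteen_div_le_norm_sq_div (hR : 0 < R) {t q : ℝ} (ht : t < τ) (hτR : √(τ - t) ≤ 3 / 20 * R)
    (hξ : similarityVar R τ t q ≤ 4 / 5) : 19 / 25 ≤ q / R ^ 2 := by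
  have hdist : (R ^ 2 - q) / (2 * R) ≤ 3 / 25 * R := by
    rw [similarityVar, inv_mul_eq_div, div_le_iff₀ (sqrt_pos.2 (sub_pos.2 ht))] at hξ
    linarith
  rw [div_le_iff₀ (by positivity)] at hdist
  rw [le_div_iff₀ (by positivity)]
  linarith

lemma lt_similarityBarrier_heat (hR : 0 < R) (ha : 0 < a) (ha2 : a ≤ 1 / 2) (hA : 0 < A)
    (hτ : t2 < τ) {t q S : ℝ} (ht : t ∈ Icc t1 t2) (hq : q ≤ R ^ 2)
    (hτR : √(τ - t) ≤ 3 / 20 * R) (hS : S < a / 20 * (A * (τ - t) ^ (a / 10)) / (τ - t)) :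
    S < (similarityBarrier (t1 := t1) R a A hτ).heat n t q := by
  have htτ : t < τ := ht.2.trans_lt hτ
  have h0 : 0 < τ - t := sub_pos.2 htτ
  set ξ := similarityVar R τ t q
  set P := A * (τ - t) ^ (a / 10)
  set ρ := (√(τ - t))⁻¹
  have : 0 < P := by positivity
  have : 0 < ρ := by positivity
  have hρ2 : ρ ^ 2 = (τ - t)⁻¹ := by rw [inv_pow, sq_sqrt h0.le]
  have hξ0 : 0 ≤ ξ := similarityVar_nonneg hR hq
  have hslope : 0 ≤ a - a / 5 * ξ + a / 8 * ξ ^ 2 := by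
    have hquad : 0 ≤ 1 - 1 / 5 * ξ + 1 / 8 * ξ ^ 2 := by nlinarith [sq_nonneg (ξ - 4 / 5)]
    linarith [mul_nonneg ha.le hquad]
  have hdrift : 0 ≤ n / R * (P * ρ) * (a - a / 5 * ξ + a / 8 * ξ ^ 2) := by positivity
  have hsuper := mul_le_mul_of_nonneg_left (cubicProfile_supersolution ha ha2 hξ0
    ((div_le_one (by positivity)).2 hq) (nineteen_div_le_norm_sq_div hR htτ hτR))
    (by positivity : 0 ≤ P * ρ ^ 2)
  have hheat : (similarityBarrier (t1 := t1) R a A hτ).heat n t q =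
      P * ρ ^ 2 * (-(a / 10) * cubicProfile a ξ + 1 / 2 * ξ * (a - a / 5 * ξ + a / 8 * ξ ^ 2)
        - q / R ^ 2 * (-(a / 5) + a / 4 * ξ))
      + n / R * (P * ρ) * (a - a / 5 * ξ + a / 8 * ξ ^ 2) := by
    simp only [RadialBarrier.heat, similarityBarrier, ξ, P, ρ]
    field_simp
    ring
  have hS' : S < P * ρ ^ 2 * (a / 20) := by
    rw [hρ2]
    exact hS.trans_eq (by ring)
  linarith

lemma similarityBarrier_flux_boundary (hR : 0 < R) (a A : ℝ) {t : ℝ} (hτ : t2 < τ) :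
    2 * R * (similarityBarrier (t1 := t1) R a A hτ).dq t (R ^ 2) =
      -(A * (τ - t) ^ (a / 10) * (a / √(τ - t))) := by
  simp only [similarityBarrier, similarityVar_boundary]
  field_simp
  ring

lemma exp_mul_one_add_sub_le (a b : ℝ) : exp b * (1 + (a - b)) ≤ exp a := by
  calc exp b * (1 + (a - b)) ≤ exp b * exp (a - b) := by
        gcongr
        linarith [add_one_le_exp (a - b)]
    _ = exp a := by rw [← exp_add, add_sub_cancel]

/-- The damping comes from the flux `exp v - exp u` at a boundary point where `u > v`. -/
lemma SolutionPair.sub_lt_of_selfSimilar (h : SolutionPair R T l1 l2 u v) (ha : 0 < a)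
    (ha2 : a ≤ 1 / 2) (hA : 0 < A) (h1 : 0 ≤ t1) (h2 : t2 < T) (hτ : t2 < τ)
    (hτR : √(τ - t1) ≤ 3 / 20 * R)
    (hi : ∀ x ∈ closedBall (0 : Eucl n) R, u x t1 - v x t1 < A * (τ - t1) ^ (a / 10))
    (hsource : ∀ x ∈ ball (0 : Eucl n) R, ∀ t ∈ Ioc t1 t2,
      l1 * exp (v x t) < a / 20 * (A * (τ - t) ^ (a / 10)) / (τ - t))
    (hflux : ∀ x : Eucl n, ‖x‖ = R → ∀ t ∈ Ioc t1 t2, a / √(τ - t) < exp (v x t))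
    {x : Eucl n} (hx : ‖x‖ = R) {t : ℝ} (ht : t ∈ Icc t1 t2) :
    u x t - v x t < A * (τ - t) ^ (a / 10) := by
  have hR := h.fst.radius_pos
  set Φ : RadialBarrier t1 t2 := similarityBarrier R a A hτ
  have hIoo : ∀ s ∈ Ioc t1 t2, s ∈ Ioo 0 T := fun s hs => ⟨h1.trans_lt hs.1, hs.2.trans_lt h2⟩
  have hΦR : ∀ s, Φ s (R ^ 2) = A * (τ - s) ^ (a / 10) := fun s => by
    simp [Φ, similarityBarrier, cubicProfile]
  have hsq : ∀ {y : Eucl n}, ‖y‖ ≤ R → ‖y‖ ^ 2 ≤ R ^ 2 := fun hy => by gcongr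
  have hsub : IsStrictSubsolution R Φ (fun y s => u y s - v y s) fun y s => u y s - v y s := by
    refine ⟨(h.fst.continuousOn_Icc h1 h2).sub (h.snd.continuousOn_Icc h1 h2),
      fun s hs y hy => (h.fst.contDiffAt (hIoo s hs) hy).sub (h.snd.contDiffAt (hIoo s hs) hy),
      fun y hy => (hi y hy).trans_le ?_, fun s hs y hy _ _ => ⟨_,
        (h.fst.interior y hy s (hIoo s hs)).sub (h.snd.interior y hy s (hIoo s hs)), ?_⟩,
      fun s hs y hy heq _ => ⟨_,
        (h.fst.boundary y hy s (hIoo s hs)).sub (h.snd.boundary y hy s (hIoo s hs)), ?_⟩⟩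
    · have : 0 < τ - t1 := by linarith [ht.1, ht.2]
      exact le_mul_of_one_le_right (by positivity)
        (one_le_cubicProfile ha (similarityVar_nonneg hR (hsq (mem_closedBall_zero_iff.1 hy))))
    · have hheat : l1 * exp (v y s) < Φ.heat n s (‖y‖ ^ 2) := lt_similarityBarrier_heat hR ha ha2 hA
        hτ ⟨hs.1.le, hs.2⟩ (hsq (mem_ball_zero_iff.1 hy).le)
        ((sqrt_le_sqrt (by linarith [hs.1])).trans hτR) (hsource y hy s hs)
      have := mul_pos h.snd.coeff_pos (exp_pos (u y s))
      rw [lap_sub (h.fst.contDiffAt (hIoo s hs) hy) (h.snd.contDiffAt (hIoo s hs) hy)]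
      linarith
    · set P := A * (τ - s) ^ (a / 10)
      have hP : 0 < P := by
        have : 0 < τ - s := by linarith [hs.2]
        positivity
      have hexp := exp_mul_one_add_sub_le (u y s) (v y s)
      rw [heq.trans (hΦR s)] at hexp
      have := mul_lt_mul_of_pos_left (hflux y hy s hs) hP
      rw [similarityBarrier_flux_boundary hR]
      linarith
  simpa [hx, hΦR] using hsub.lt_barrier hR hsub (mem_closedBall_zero_iff.2 hx.le) ht

end SelfSimilar

/-! ### Closeness of the components at the times of a new maximum -/

section Peaks

variable {n : ℕ} {R T l1 l2 a C t0 K : ℝ} {u v : Eucl n → ℝ → ℝ} {x0 : Eucl n}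

/-- `K` is the largest value of `exp u` and `exp v` up to the time `t0 ≥ T / 2`, and one of the two
attains it at time `t0` and at the boundary point `x0`. -/
structure Peak {n : ℕ} (R T : ℝ) (u v : Eucl n → ℝ → ℝ) (x0 : Eucl n) (t0 K : ℝ) : Prop where
  norm_eq : ‖x0‖ = R
  half_le : T / 2 ≤ t0
  lt : t0 < T
  le : ∀ x ∈ closedBall (0 : Eucl n) R, ∀ t ∈ Icc 0 t0, exp (u x t) ≤ K ∧ exp (v x t) ≤ K
  eq : exp (u x0 t0) = K ∨ exp (v x0 t0) = K

namespace Peak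

lemma symm (p : Peak R T u v x0 t0 K) : Peak R T v u x0 t0 K :=
  ⟨p.norm_eq, p.half_le, p.lt, fun x hx t ht => (p.le x hx t ht).symm, p.eq.symm⟩

lemma time_pos (p : Peak R T u v x0 t0 K) : 0 < t0 := by linarith [p.half_le, p.lt]

lemma mem_closedBall (p : Peak R T u v x0 t0 K) : x0 ∈ closedBall (0 : Eucl n) R :=
  mem_closedBall_zero_iff.2 p.norm_eq.le

lemma pos (p : Peak R T u v x0 t0 K) : 0 < K := by
  rcases p.eq with h | h <;> exact h ▸ exp_pos _

end Peak

/-- The constant in the lower bound for the boundary values before a peak. -/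
noncomputable def peakConst (n : ℕ) (R L : ℝ) : ℝ :=
  min (exp (-1)) √(1 / (2 * growthSpeed n R L))

lemma peakConst_pos (hR : 0 < R) {L : ℝ} (hL : 0 < L) : 0 < peakConst n R L := by
  have := growthSpeed_pos (n := n) hR hL
  exact lt_min (exp_pos _) (sqrt_pos.2 (by positivity))

lemma peakConst_sq_le (hR : 0 < R) {L : ℝ} (hL : 0 < L) :
    peakConst n R L ^ 2 ≤ 1 / (2 * growthSpeed n R L) := by
  have := growthSpeed_pos (n := n) hR hL
  calc peakConst n R L ^ 2 ≤ √(1 / (2 * growthSpeed n R L)) ^ 2 := by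
        gcongr
        · exact (peakConst_pos hR hL).le
        · exact min_le_right _ _
    _ = 1 / (2 * growthSpeed n R L) := sq_sqrt (by positivity)

namespace SolutionPair

lemma le_log_max_of_norm_eq (h : SolutionPair R T l1 l2 u v) (hx0 : ‖x0‖ = R) {x : Eucl n}
    (hx : x ∈ closedBall (0 : Eucl n) R) {t : ℝ} (ht : t ∈ Ico 0 T) :
    u x t ≤ log (max (exp (u x0 t)) (exp (v x0 t))) := by
  rw [le_log_iff_exp_le (lt_max_of_lt_left (exp_pos _))]
  refine le_max_of_le_left (exp_le_exp.2 (h.mono_norm ?_ hx0.le ht))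
  rw [hx0]
  exact mem_closedBall_zero_iff.1 hx

lemma peak_le_mul_exp_one (h : SolutionPair R T l1 l2 u v) (p : Peak R T u v x0 t0 K) {t : ℝ}
    (ht : t ∈ Icc 0 t0) (hτ : t0 - t ≤
      1 / (2 * growthSpeed n R (max l1 l2) * max (exp (u x0 t)) (exp (v x0 t)) ^ 2)) :
    K ≤ max (exp (u x0 t)) (exp (v x0 t)) * exp 1 := by
  have htT : t ∈ Ico 0 T := ⟨ht.1, ht.2.trans_lt p.lt⟩
  have hk : 1 ≤ max (exp (u x0 t)) (exp (v x0 t)) :=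
    le_max_of_le_left (one_le_exp (h.fst.nonneg p.mem_closedBall htT))
  have hi : ∀ x ∈ closedBall (0 : Eucl n) R, u x t ≤ log (max (exp (u x0 t)) (exp (v x0 t))) ∧
      v x t ≤ log (max (exp (u x0 t)) (exp (v x0 t))) := fun x hx =>
    ⟨h.le_log_max_of_norm_eq p.norm_eq hx htT,
      max_comm (exp (v x0 t)) _ ▸ h.symm.le_log_max_of_norm_eq p.norm_eq hx htT⟩
  rw [← exp_log (one_pos.trans_le hk), ← exp_add]
  rcases p.eq with heq | heq <;> rw [← heq, exp_le_exp]
  · exact h.le_log_add_one hk ht.1 p.lt hτ hi p.mem_closedBall ⟨ht.2, le_rfl⟩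
  · exact h.symm.le_log_add_one hk ht.1 p.lt (by rwa [max_comm l2]) (fun x hx => (hi x hx).symm)
      p.mem_closedBall ⟨ht.2, le_rfl⟩

lemma peakConst_div_sqrt_le (h : SolutionPair R T l1 l2 u v) (p : Peak R T u v x0 t0 K) {t : ℝ}
    (ht : t ∈ Icc 0 t0) : peakConst n R (max l1 l2) / √(t0 + 1 / K ^ 2 - t) ≤
      max (exp (u x0 t)) (exp (v x0 t)) := by
  have hR := h.fst.radius_pos
  have hL : 0 < max l1 l2 := lt_max_of_lt_left h.fst.coeff_pos
  have hA := growthSpeed_pos (n := n) hR hL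
  have hK := p.pos
  have hK2 : 0 < 1 / K ^ 2 := by positivity
  have hδ : 1 / K ^ 2 ≤ t0 + 1 / K ^ 2 - t := by linarith [ht.2]
  rw [div_le_iff₀ (sqrt_pos.2 (hK2.trans_le hδ))]
  set k := max (exp (u x0 t)) (exp (v x0 t))
  have hk : 0 < k := lt_max_of_lt_left (exp_pos _)
  by_cases hτ : t0 - t ≤ 1 / (2 * growthSpeed n R (max l1 l2) * k ^ 2)
  · have hKinv : 1 / K ≤ √(t0 + 1 / K ^ 2 - t) := le_sqrt_of_sq_le (by rwa [one_div_pow])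
    calc peakConst n R (max l1 l2) ≤ exp (-1) := min_le_left _ _
      _ = K * exp (-1) * (1 / K) := by field_simp
      _ ≤ k * exp 1 * exp (-1) * (1 / K) := by
        have := h.peak_le_mul_exp_one p ht hτ
        gcongr
      _ = k * (1 / K) := by rw [mul_assoc k, ← exp_add]; simp
      _ ≤ k * √(t0 + 1 / K ^ 2 - t) := by gcongr
  · refine le_of_sq_le_sq ?_ (by positivity)
    rw [mul_pow, sq_sqrt (hK2.le.trans hδ)]
    calc peakConst n R (max l1 l2) ^ 2 ≤ 1 / (2 * growthSpeed n R (max l1 l2)) :=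
          peakConst_sq_le hR hL
      _ = k ^ 2 * (1 / (2 * growthSpeed n R (max l1 l2) * k ^ 2)) := by field_simp
      _ ≤ k ^ 2 * (t0 + 1 / K ^ 2 - t) := by
        gcongr
        linarith

lemma exists_abs_fst_sub_snd_le (h : SolutionPair R T l1 l2 u v) (hT : 0 < T) :
    ∃ C, 0 ≤ C ∧ ∀ x ∈ closedBall (0 : Eucl n) R, ∀ t ∈ Ico 0 T, |u x t - v x t| ≤ C := by
  obtain ⟨M, hM⟩ := h.exists_le hT
  have hl1 := h.fst.coeff_pos
  have hl2 := h.snd.coeff_pos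
  have hlarge : ∀ᶠ C in atTop, 0 ≤ C ∧ M ≤ C ∧ l1 / l2 ≤ exp C ∧ l2 / l1 ≤ exp C := by
    filter_upwards [eventually_ge_atTop 0, eventually_ge_atTop M,
      tendsto_exp_atTop.eventually_ge_atTop (l1 / l2),
      tendsto_exp_atTop.eventually_ge_atTop (l2 / l1)] with C h0 h1 h2 h3 using ⟨h0, h1, h2, h3⟩
  obtain ⟨C, hC, hMC, h12, h21⟩ := hlarge.exists
  rw [div_le_iff₀' (by assumption)] at h12 h21
  refine ⟨C, hC, fun x hx t ht => abs_sub_le_iff.2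
    ⟨h.sub_le hC h12 (fun y hy => ?_) hx ht, h.symm.sub_le hC h21 (fun y hy => ?_) hx ht⟩⟩
  · linarith [(hM y hy 0 (left_mem_Icc.2 le_rfl)).1, h.snd.initial_nonneg y hy]
  · linarith [(hM y hy 0 (left_mem_Icc.2 le_rfl)).2, h.fst.initial_nonneg y hy]

lemma peakConst_mul_exp_div_sqrt_le (h : SolutionPair R T l1 l2 u v)
    (hC : ∀ x ∈ closedBall (0 : Eucl n) R, ∀ t ∈ Ico 0 T, |u x t - v x t| ≤ C)
    (p : Peak R T u v x0 t0 K) {x : Eucl n} (hx : ‖x‖ = R) {t : ℝ} (ht : t ∈ Icc 0 t0) :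
    peakConst n R (max l1 l2) * exp (-C) / √(t0 + 1 / K ^ 2 - t) ≤ exp (v x t) := by
  have htT : t ∈ Ico 0 T := ⟨ht.1, ht.2.trans_lt p.lt⟩
  have hlower := h.peakConst_div_sqrt_le p ht
  have hxx : ‖x0‖ = ‖x‖ := p.norm_eq.trans hx.symm
  have hx0R : ‖x0‖ ≤ R := p.norm_eq.le
  rw [h.eq_of_norm_eq p.mem_closedBall hxx htT, h.symm.eq_of_norm_eq p.mem_closedBall hxx htT]
    at hlower
  have hdiff := abs_le.1 (hC x (mem_closedBall_zero_iff.2 hx.le) t htT)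
  have hmax : max (exp (u x t)) (exp (v x t)) ≤ exp (v x t) * exp C := by
    rw [← exp_add]
    exact max_le (exp_le_exp.2 (by linarith)) (exp_le_exp.2 (by linarith))
  calc peakConst n R (max l1 l2) * exp (-C) / √(t0 + 1 / K ^ 2 - t)
      = peakConst n R (max l1 l2) / √(t0 + 1 / K ^ 2 - t) * exp (-C) := by ring
    _ ≤ exp (v x t) * exp C * exp (-C) := by gcongr; exact hlower.trans hmax
    _ = exp (v x t) := by rw [mul_assoc, ← exp_add]; simp

end SolutionPair

lemma inv_le_rpow_neg_mul_rpow_div {σ δ γ : ℝ} (hδ : 0 < δ) (hδσ : δ ≤ σ) (hγ : γ ≤ 1) :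
    σ⁻¹ ≤ σ ^ (-γ) * δ ^ γ / δ := by
  have hσ : 0 < σ := hδ.trans_le hδσ
  have hpow : σ ^ (-γ) * δ ^ γ = (δ / σ) ^ γ := by
    rw [div_rpow hδ.le hσ.le, rpow_neg hσ.le, div_eq_inv_mul]
  have hle : δ / σ ≤ (δ / σ) ^ γ := by
    simpa using rpow_le_rpow_of_exponent_ge (by positivity) ((div_le_one hσ).2 hδσ) hγ
  rw [hpow, le_div_iff₀ hδ, ← div_eq_inv_mul]
  exact hle

namespace SolutionPair

lemma peak_sub_le (h : SolutionPair R T l1 l2 u v)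
    (hC : ∀ x ∈ closedBall (0 : Eucl n) R, ∀ t ∈ Ico 0 T, |u x t - v x t| ≤ C)
    (ha : 0 < a) (ha2 : a ≤ 1 / 2) (haC : a < peakConst n R (max l1 l2) * exp (-C))
    (p : Peak R T u v x0 t0 K) {σ : ℝ} (hσK : 1 / K ^ 2 ≤ σ) (hσT : σ ≤ T / 2)
    (hσR : √σ ≤ 3 / 20 * R) (hσa : l1 * K < a / 20 * σ⁻¹) :
    u x0 t0 - v x0 t0 ≤ (C + 1) * σ ^ (-(a / 10)) * (1 / K ^ 2) ^ (a / 10) := by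
  have hK := p.pos
  have hK2 : 0 < 1 / K ^ 2 := by positivity
  have hσ : 0 < σ := hK2.trans_le hσK
  have ht1 : 0 ≤ t0 + 1 / K ^ 2 - σ := by linarith [p.half_le]
  have hC0 : 0 ≤ C := (abs_nonneg _).trans (hC x0 p.mem_closedBall t0 ⟨p.time_pos.le, p.lt⟩)
  have htime : ∀ t ∈ Ioc (t0 + 1 / K ^ 2 - σ) t0, t ∈ Icc 0 t0 := fun t ht =>
    ⟨ht1.trans ht.1.le, ht.2⟩
  have key := h.sub_lt_of_selfSimilar (A := (C + 1) * σ ^ (-(a / 10))) (τ := t0 + 1 / K ^ 2) ha ha2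
    (by positivity) ht1 p.lt (by linarith) (by rwa [sub_sub_cancel]) (fun x hx => ?_)
    (fun x hx t ht => ?_) (fun x hx t ht => ?_) p.norm_eq (t := t0) ⟨by linarith, le_rfl⟩
  · rw [add_sub_cancel_left] at key
    exact key.le
  · rw [sub_sub_cancel, mul_assoc, ← rpow_add hσ, neg_add_cancel, rpow_zero, mul_one]
    have := le_of_abs_le (hC x hx _ ⟨ht1, by linarith [p.lt]⟩)
    linarith
  · have hδ : 0 < t0 + 1 / K ^ 2 - t := by linarith [ht.2]
    have hpow := inv_le_rpow_neg_mul_rpow_div hδ (by linarith [ht.1] : _ ≤ σ)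
      (by linarith : a / 10 ≤ 1)
    calc l1 * exp (v x t) ≤ l1 * K := by
          have := h.fst.coeff_pos
          gcongr
          exact (p.le x (ball_subset_closedBall hx) t (htime t ht)).2
      _ < a / 20 * σ⁻¹ := hσa
      _ ≤ a / 20 * ((C + 1) * (σ ^ (-(a / 10)) * (t0 + 1 / K ^ 2 - t) ^ (a / 10)
          / (t0 + 1 / K ^ 2 - t))) := by
        gcongr
        exact hpow.trans (le_mul_of_one_le_left (by positivity) (by linarith))
      _ = _ := by ring
  · refine (div_lt_div_of_pos_right haC (sqrt_pos.2 (by linarith [ht.2]))).trans_le ?_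
    exact h.peakConst_mul_exp_div_sqrt_le hC p hx (htime t ht)

lemma eventually_peak_sub_le (h : SolutionPair R T l1 l2 u v) (hT : 0 < T)
    (hC : ∀ x ∈ closedBall (0 : Eucl n) R, ∀ t ∈ Ico 0 T, |u x t - v x t| ≤ C)
    (ha : 0 < a) (ha2 : a ≤ 1 / 2) (haC : a < peakConst n R (max l1 l2) * exp (-C)) :
    ∀ᶠ K : ℝ in atTop, ∀ x0 t0, Peak R T u v x0 t0 K →
      u x0 t0 - v x0 t0 ≤ (C + 1) * (a / (40 * max l1 l2)) ^ (-(a / 10)) * K ^ (-(a / 10)) := by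
  have hR := h.fst.radius_pos
  have hL : 0 < max l1 l2 := lt_max_of_lt_left h.fst.coeff_pos
  set c := a / (40 * max l1 l2) with hc
  have hc0 : 0 < c := by positivity
  have hσ : Tendsto (fun K => c / K) atTop (𝓝 0) := tendsto_const_nhds.div_atTop tendsto_id
  filter_upwards [eventually_gt_atTop 0, eventually_ge_atTop (1 / c),
    hσ.eventually_le_const (by positivity : 0 < T / 2),
    hσ.eventually_le_const (by positivity : 0 < (3 / 20 * R) ^ 2)] with K hK hcK hσT hσR x0 t0 p
  refine (h.peak_sub_le hC ha ha2 haC p ?_ hσT ((sqrt_le_left (by positivity)).2 hσR) ?_).trans_eq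
    ?_
  · rw [div_le_iff₀ hc0] at hcK
    rw [div_le_div_iff₀ (by positivity) hK]
    nlinarith
  · calc l1 * K ≤ max l1 l2 * K := by gcongr; exact le_max_left _ _
      _ < 2 * max l1 l2 * K := by linarith [mul_pos hL hK]
      _ = a / 20 * (c / K)⁻¹ := by rw [hc]; field_simp; norm_num
  · rw [div_rpow hc0.le hK.le, one_div, inv_rpow (by positivity), sq, mul_rpow hK.le hK.le,
      rpow_neg hK.le]
    field_simp

lemma exists_eventually_peak_abs_sub_le (h : SolutionPair R T l1 l2 u v) (hT : 0 < T) :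
    ∃ γ : ℝ, 0 < γ ∧ ∃ D, ∀ᶠ K : ℝ in atTop, ∀ x0 t0, Peak R T u v x0 t0 K →
      |u x0 t0 - v x0 t0| ≤ D * K ^ (-γ) := by
  obtain ⟨C, -, hC⟩ := h.exists_abs_fst_sub_snd_le hT
  have hpos : 0 < peakConst n R (max l1 l2) * exp (-C) :=
    mul_pos (peakConst_pos h.fst.radius_pos (lt_max_of_lt_left h.fst.coeff_pos)) (exp_pos _)
  obtain ⟨a, ha, haC⟩ := exists_between (lt_min one_half_pos hpos)
  obtain ⟨ha2, haC⟩ := lt_min_iff.1 haC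
  refine ⟨a / 10, by positivity,
    (C + 1) * (a / (40 * max l1 l2)) ^ (-(a / 10)), ?_⟩
  filter_upwards [h.eventually_peak_sub_le hT hC ha ha2.le haC,
    h.symm.eventually_peak_sub_le hT (fun x hx t ht => (abs_sub_comm _ _).trans_le (hC x hx t ht))
      ha ha2.le (by rwa [max_comm l2])] with K h12 h21 x0 t0 p
  have h21 := h21 x0 t0 p.symm
  rw [max_comm l2] at h21
  exact abs_sub_le_iff.2 ⟨h12 x0 t0 p, h21⟩

end SolutionPair

end Peaks

/-! ### Exponential means of boundary profiles -/

/-- A nonnegative profile `a y t`, nonincreasing in the distance `y ∈ [0, δ]` from the boundary,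
with `∂ₜ a = ∂²a/∂y² - k ∂a/∂y + S` for a drift `k ≥ 0` and a source `S ≥ 0`. The functions `ay` and
`ayy` are the derivatives of `a` in `y`, one-sided at the end points. -/
structure BoundaryProfile (δ T : ℝ) (k : ℝ → ℝ) (a ay ayy S : ℝ → ℝ → ℝ) : Prop where
  width_pos : 0 < δ
  continuousOn : ContinuousOn (fun p : ℝ × ℝ => a p.1 p.2) (Icc 0 δ ×ˢ Ico 0 T)
  nonneg : ∀ y ∈ Icc 0 δ, ∀ t ∈ Ico 0 T, 0 ≤ a y t
  antitoneOn : ∀ t ∈ Ico 0 T, AntitoneOn (fun y => a y t) (Icc 0 δ)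
  deriv_fst : ∀ t ∈ Ioo 0 T, ∀ y ∈ Icc 0 δ,
    HasDerivWithinAt (fun y => a y t) (ay y t) (Icc 0 δ) y
  deriv_deriv_fst : ∀ t ∈ Ioo 0 T, ∀ y ∈ Icc 0 δ,
    HasDerivWithinAt (fun y => ay y t) (ayy y t) (Icc 0 δ) y
  continuousOn_ayy : ∀ t ∈ Ioo 0 T, ContinuousOn (fun y => ayy y t) (Icc 0 δ)
  continuousOn_drift : ContinuousOn k (Icc 0 δ)
  continuousOn_source : ∀ t ∈ Ioo 0 T, ContinuousOn (fun y => S y t) (Icc 0 δ)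
  drift_nonneg : ∀ y ∈ Icc 0 δ, 0 ≤ k y
  source_nonneg : ∀ y ∈ Icc 0 δ, ∀ t ∈ Ioo 0 T, 0 ≤ S y t
  deriv_time : ∀ t ∈ Ioo 0 T, ∀ y ∈ Ioc 0 δ, HasDerivAt (a y) (ayy y t - k y * ay y t + S y t) t
  lipschitz_time : ∀ t ∈ Ioo 0 T, ∃ C, ∃ s ∈ 𝓝 t, ∀ y ∈ Icc 0 δ, LipschitzOnWith C (a y) s

/-- The weight `K e^{-Kz}`, shifted so as to vanish at `z = δ`. -/
noncomputable def expWeight (K δ z : ℝ) : ℝ := K * (exp (-K * z) - exp (-K * δ))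

/-- The weighted integral of a profile over `[y, δ]`; for `y = 0` an approximate average of the
profile over a boundary layer of width `1 / K`. -/
noncomputable def expMean (K δ : ℝ) (a : ℝ → ℝ → ℝ) (y t : ℝ) : ℝ :=
  ∫ z in y..δ, expWeight K δ z * a z t

lemma intervalIntegrable_right_of_continuousOn {f : ℝ → ℝ} {y δ : ℝ}
    (hf : ContinuousOn f (Icc 0 δ)) (hy : y ∈ Icc 0 δ) : IntervalIntegrable f volume y δ :=
  (hf.mono (Icc_subset_Icc_left hy.1)).intervalIntegrable_of_Icc hy.2

section ExpWeight

variable {K δ z : ℝ}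

lemma continuous_expWeight : Continuous (expWeight K δ) := by unfold expWeight; fun_prop

lemma expWeight_nonneg (hK : 0 < K) (hz : z ≤ δ) : 0 ≤ expWeight K δ z :=
  mul_nonneg hK.le (sub_nonneg.2 (exp_le_exp.2 (by nlinarith)))

lemma expWeight_le (hK : 0 < K) : expWeight K δ z ≤ K * exp (-K * z) :=
  mul_le_mul_of_nonneg_left (sub_le_self _ (exp_pos _).le) hK.le

lemma expWeight_zero : expWeight K δ 0 = K * (1 - exp (-K * δ)) := by simp [expWeight]

lemma expWeight_self : expWeight K δ δ = 0 := by simp [expWeight]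

lemma exp_mul_expWeight :
    exp (K * z) * expWeight K δ z = K * (1 - exp (-K * (δ - z))) := by
  have h1 : exp (K * z) * exp (-K * z) = 1 := by rw [← exp_add]; simp
  have h2 : exp (K * z) * exp (-K * δ) = exp (-K * (δ - z)) := by
    rw [← exp_add]; ring_nf
  unfold expWeight
  linear_combination K * h1 - K * h2

lemma hasDerivAt_expWeight : HasDerivAt (expWeight K δ) (-K ^ 2 * exp (-K * z)) z :=
  (((hasDerivAt_exp_mul (-K) z).sub_const _).const_mul K).congr_deriv (by ring)

lemma integral_mul_exp_neg_mul : ∫ z in (0 : ℝ)..δ, K * exp (-K * z) = 1 - exp (-K * δ) := by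
  rw [intervalIntegral.integral_eq_sub_of_hasDerivAt (f := fun z => -exp (-K * z))
    (fun z _ => (hasDerivAt_exp_mul (-K) z).neg.congr_deriv (by ring))
    ((by fun_prop : Continuous fun z => K * exp (-K * z)).intervalIntegrable _ _)]
  simp only [mul_zero, exp_zero]
  ring

end ExpWeight

namespace BoundaryProfile

variable {δ T K y t : ℝ} {k : ℝ → ℝ} {a ay ayy S : ℝ → ℝ → ℝ}

section Basic

variable (h : BoundaryProfile δ T k a ay ayy S)

include h

lemma continuousOn_fst (ht : t ∈ Ico 0 T) : ContinuousOn (fun z => a z t) (Icc 0 δ) :=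
  h.continuousOn.comp (f := fun z => (z, t)) (by fun_prop) fun _ hz => ⟨hz, ht⟩

lemma continuousOn_ay (ht : t ∈ Ioo 0 T) : ContinuousOn (fun z => ay z t) (Icc 0 δ) :=
  fun z hz => (h.deriv_deriv_fst t ht z hz).continuousWithinAt

lemma continuousOn_expWeight_mul (ht : t ∈ Ico 0 T) :
    ContinuousOn (fun z => expWeight K δ z * a z t) (Icc 0 δ) :=
  continuous_expWeight.continuousOn.mul (h.continuousOn_fst ht)

lemma le_boundary (ht : t ∈ Ico 0 T) (hy : y ∈ Icc 0 δ) : a y t ≤ a 0 t :=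
  h.antitoneOn t ht ⟨le_rfl, h.width_pos.le⟩ hy hy.1

lemma ay_nonpos (ht : t ∈ Ioo 0 T) (hy : y ∈ Icc 0 δ) : ay y t ≤ 0 := by
  rw [← (h.deriv_fst t ht y hy).derivWithin (uniqueDiffOn_Icc h.width_pos y hy)]
  exact (h.antitoneOn t (Ioo_subset_Ico_self ht)).derivWithin_nonpos

lemma expMean_nonneg (hK : 0 < K) (ht : t ∈ Ico 0 T) (hy : y ∈ Icc 0 δ) :
    0 ≤ expMean K δ a y t :=
  intervalIntegral.integral_nonneg hy.2 fun z hz =>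
    mul_nonneg (expWeight_nonneg hK hz.2) (h.nonneg z ⟨hy.1.trans hz.1, hz.2⟩ t ht)

lemma expMean_le_boundary (hK : 0 < K) (ht : t ∈ Ico 0 T) : expMean K δ a 0 t ≤ a 0 t := by
  have h0 : (0 : ℝ) ∈ Icc 0 δ := ⟨le_rfl, h.width_pos.le⟩
  calc expMean K δ a 0 t ≤ ∫ z in (0 : ℝ)..δ, K * exp (-K * z) * a 0 t := by
        refine intervalIntegral.integral_mono_on h.width_pos.le
          (intervalIntegrable_right_of_continuousOn (h.continuousOn_expWeight_mul ht) h0)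
          ((by fun_prop : Continuous fun z => K * exp (-K * z) * a 0 t).intervalIntegrable _ _)
          fun z hz => ?_
        exact mul_le_mul (expWeight_le hK) (h.le_boundary ht hz) (h.nonneg z hz t ht)
          (by positivity)
    _ = (1 - exp (-K * δ)) * a 0 t := by
        rw [intervalIntegral.integral_mul_const, integral_mul_exp_neg_mul]
    _ ≤ a 0 t := by nlinarith [exp_pos (-K * δ), h.nonneg 0 h0 t ht]

lemma hasDerivWithinAt_expMean_fst (ht : t ∈ Ico 0 T) (hy : y ∈ Icc 0 δ) :
    HasDerivWithinAt (fun y => expMean K δ a y t) (-(expWeight K δ y * a y t)) (Icc 0 δ) y := by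
  have hcont := h.continuousOn_expWeight_mul (K := K) ht
  have : Fact (y ∈ Icc 0 δ) := ⟨hy⟩
  exact intervalIntegral.integral_hasDerivWithinAt_left
    (intervalIntegrable_right_of_continuousOn hcont hy)
    (hcont.stronglyMeasurableAtFilter_nhdsWithin measurableSet_Icc y) (hcont y hy)

lemma continuousOn_expMean {t1 t2 : ℝ} (h1 : 0 ≤ t1) (h2 : t2 < T) (h12 : t1 ≤ t2) :
    ContinuousOn (fun p : ℝ × ℝ => expMean K δ a p.1 p.2) (Icc 0 δ ×ˢ Icc t1 t2) := by
  set aExt : ℝ × ℝ → ℝ := fun p => a (projIcc 0 δ h.width_pos.le p.1) (projIcc t1 t2 h12 p.2)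
  have hExt : Continuous aExt := h.continuousOn.comp_continuous
    (f := fun p : ℝ × ℝ => ((projIcc 0 δ h.width_pos.le p.1 : ℝ), (projIcc t1 t2 h12 p.2 : ℝ)))
    (by fun_prop) fun p => ⟨Subtype.coe_prop _,
      h1.trans (Subtype.coe_prop (projIcc t1 t2 h12 p.2)).1,
      (Subtype.coe_prop (projIcc t1 t2 h12 p.2)).2.trans_lt h2⟩
  have hInt : Continuous fun p : ℝ × ℝ =>
      ∫ z in δ..p.1, expWeight K δ z * aExt (z, p.2) :=
    intervalIntegral.continuous_parametric_intervalIntegral_of_continuous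
      ((continuous_expWeight.comp continuous_snd).mul
        (hExt.comp (by fun_prop : Continuous fun q : (ℝ × ℝ) × ℝ => (q.2, q.1.2)))) continuous_fst
  refine hInt.neg.continuousOn.congr fun p hp => ?_
  rw [Pi.neg_apply, ← intervalIntegral.integral_symm]
  refine intervalIntegral.integral_congr fun z hz => ?_
  rw [uIcc_of_le hp.1.2] at hz
  simp only [aExt, projIcc_of_mem _ (⟨hp.1.1.trans hz.1, hz.2⟩ : z ∈ Icc 0 δ),
    projIcc_of_mem _ hp.2]

lemma continuousOn_deriv_time (ht : t ∈ Ioo 0 T) :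
    ContinuousOn (fun z => expWeight K δ z * (ayy z t - k z * ay z t + S z t)) (Icc 0 δ) :=
  continuous_expWeight.continuousOn.mul (((h.continuousOn_ayy t ht).sub
    (h.continuousOn_drift.mul (h.continuousOn_ay ht))).add (h.continuousOn_source t ht))

lemma hasDerivAt_expMean_snd (hy : y ∈ Icc 0 δ) (ht : t ∈ Ioo 0 T) :
    HasDerivAt (fun t => expMean K δ a y t)
      (∫ z in y..δ, expWeight K δ z * (ayy z t - k z * ay z t + S z t)) t := by
  obtain ⟨C, s, hs, hC⟩ := h.lipschitz_time t ht
  have hmem : ∀ z ∈ uIoc y δ, z ∈ Ioc 0 δ := fun z hz => by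
    rw [uIoc_of_le hy.2] at hz
    exact ⟨hy.1.trans_lt hz.1, hz.2⟩
  have hint : ∀ t ∈ Ioo 0 T,
      IntervalIntegrable (fun z => expWeight K δ z * a z t) volume y δ := fun t ht =>
    intervalIntegrable_right_of_continuousOn
      (h.continuousOn_expWeight_mul (Ioo_subset_Ico_self ht)) hy
  refine (intervalIntegral.hasDerivAt_integral_of_dominated_loc_of_lip
    (F := fun t z => expWeight K δ z * a z t) (bound := fun z => expWeight K δ z * C) hs
    ?_ (hint t ht)
    (intervalIntegrable_right_of_continuousOn
      (h.continuousOn_deriv_time ht) hy).aestronglyMeasurable_restrict_uIoc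
    (.of_forall fun z hz => LipschitzOnWith.of_dist_le_mul fun s₁ hs₁ s₂ hs₂ => ?_)
    ((continuous_expWeight.mul continuous_const).intervalIntegrable _ _)
    (.of_forall fun z hz => (h.deriv_time t ht z (hmem z hz)).const_mul _)).2
  · filter_upwards [Ioo_mem_nhds ht.1 ht.2] with s hs
    exact (hint s hs).aestronglyMeasurable_restrict_uIoc
  · have := (hC z (Ioc_subset_Icc_self (hmem z hz))).dist_le_mul s₁ hs₁ s₂ hs₂
    rw [dist_eq_norm, ← mul_sub, norm_mul, ← dist_eq_norm, Real.coe_nnabs, abs_mul, NNReal.abs_eq,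
      mul_assoc, Real.norm_eq_abs]
    gcongr

lemma integral_expWeight_mul_ayy_sub (hy : y ∈ Icc 0 δ) (ht : t ∈ Ioo 0 T) :
    ∫ z in y..δ, (expWeight K δ z * ayy z t - K ^ 3 * exp (-K * z) * a z t) =
      K ^ 2 * exp (-K * δ) * a δ t - expWeight K δ y * ay y t - K ^ 2 * exp (-K * y) * a y t := by
  have hsub : Icc y δ ⊆ Icc 0 δ := Icc_subset_Icc_left hy.1
  have ha := h.continuousOn_fst (Ioo_subset_Ico_self ht)
  have hexp : ∀ c, ContinuousOn (fun z => c * exp (-K * z)) (Icc 0 δ) := fun c => by fun_prop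
  rw [intervalIntegral.integral_eq_sub_of_hasDerivAt_of_le hy.2
    (f := fun z => expWeight K δ z * ay z t + K ^ 2 * exp (-K * z) * a z t)
    (f' := fun z => expWeight K δ z * ayy z t - K ^ 3 * exp (-K * z) * a z t)
    (((continuous_expWeight.continuousOn.mul (h.continuousOn_ay ht)).add
      ((hexp _).mul ha)).mono hsub) (fun z hz => ?_)
    (intervalIntegrable_right_of_continuousOn
      ((continuous_expWeight.continuousOn.mul (h.continuousOn_ayy t ht)).sub
        ((hexp _).mul ha)) hy), expWeight_self]
  · ring
  · have hzδ : z ∈ Icc 0 δ := hsub (Ioo_subset_Icc_self hz)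
    have hnhds : Icc 0 δ ∈ 𝓝 z := Icc_mem_nhds (hy.1.trans_lt hz.1) hz.2
    have hay := (h.deriv_fst t ht z hzδ).hasDerivAt hnhds
    have hayy := (h.deriv_deriv_fst t ht z hzδ).hasDerivAt hnhds
    exact ((hasDerivAt_expWeight.mul hayy).add
      (((hasDerivAt_exp_mul (-K) z).const_mul (K ^ 2)).mul hay)).congr_deriv (by ring)

-- Green's formula: the drift and the source only help, and the weight vanishes at `δ`.
lemma le_integral_expWeight_mul_deriv_time (hK : 0 < K) (hy : y ∈ Icc 0 δ) (ht : t ∈ Ioo 0 T) :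
    -(expWeight K δ y * ay y t) - K ^ 2 * exp (-K * y) * a y t + K ^ 2 * expMean K δ a y t ≤
      ∫ z in y..δ, expWeight K δ z * (ayy z t - k z * ay z t + S z t) := by
  have ht' := Ioo_subset_Ico_self ht
  have hmean : IntervalIntegrable (fun z => K ^ 2 * (expWeight K δ z * a z t)) volume y δ :=
    (intervalIntegrable_right_of_continuousOn (h.continuousOn_expWeight_mul ht') hy).const_mul _
  have hgreen : IntervalIntegrable
      (fun z => expWeight K δ z * ayy z t - K ^ 3 * exp (-K * z) * a z t) volume y δ :=
    intervalIntegrable_right_of_continuousOn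
      ((continuous_expWeight.continuousOn.mul (h.continuousOn_ayy t ht)).sub
        ((by fun_prop : Continuous fun z => K ^ 3 * exp (-K * z)).continuousOn.mul
          (h.continuousOn_fst ht'))) hy
  have hle : ∀ z ∈ Icc y δ, expWeight K δ z * ayy z t - K ^ 3 * exp (-K * z) * a z t
      + K ^ 2 * (expWeight K δ z * a z t) ≤
        expWeight K δ z * (ayy z t - k z * ay z t + S z t) := fun z hz => by
    have hzδ : z ∈ Icc 0 δ := ⟨hy.1.trans hz.1, hz.2⟩
    have hhelp : 0 ≤ expWeight K δ z * (-(k z * ay z t) + S z t) :=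
      mul_nonneg (expWeight_nonneg hK hz.2) (add_nonneg
        (neg_nonneg.2 (mul_nonpos_of_nonneg_of_nonpos (h.drift_nonneg z hzδ) (h.ay_nonpos ht hzδ)))
        (h.source_nonneg z hzδ t ht))
    have hweight : K ^ 2 * (expWeight K δ z * a z t) ≤ K ^ 2 * (K * exp (-K * z) * a z t) := by
      gcongr
      · exact h.nonneg z hzδ t ht'
      · exact expWeight_le hK
    linarith
  have hmono := intervalIntegral.integral_mono_on hy.2 (hgreen.add hmean)
    (intervalIntegrable_right_of_continuousOn (h.continuousOn_deriv_time ht) hy) hle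
  rw [intervalIntegral.integral_add hgreen hmean, h.integral_expWeight_mul_ayy_sub hy ht,
    intervalIntegral.integral_const_mul] at hmono
  have : 0 ≤ K ^ 2 * exp (-K * δ) * a δ t :=
    mul_nonneg (by positivity) (h.nonneg δ ⟨h.width_pos.le, le_rfl⟩ t ht')
  unfold expMean
  linarith

end Basic

end BoundaryProfile

/-! ### Life time -/

section LifeTime

variable {X X' : ℝ → ℝ} {κ t0 t T : ℝ}

lemma mul_exp_le_of_mul_le_deriv (hX : ∀ t ∈ Ico t0 T, HasDerivAt X (X' t) t)
    (hle : ∀ t ∈ Ico t0 T, κ * X t ≤ X' t) (ht : t ∈ Ico t0 T) :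
    X t0 * exp (κ * (t - t0)) ≤ X t := by
  have hd : ∀ t ∈ Ico t0 T, HasDerivAt (fun t => X t * exp (-κ * (t - t0)))
      ((X' t - κ * X t) * exp (-κ * (t - t0))) t := fun t ht =>
    ((hX t ht).mul ((hasDerivAt_exp_mul (-κ) (t - t0)).comp_sub_const t t0)).congr_deriv (by ring)
  have hmono : MonotoneOn (fun t => X t * exp (-κ * (t - t0))) (Ico t0 T) :=
    monotoneOn_of_hasDerivWithinAt_nonneg (convex_Ico _ _)
      (fun t ht => (hd t ht).continuousAt.continuousWithinAt)
      (fun t ht => (hd t (interior_subset ht)).hasDerivWithinAt)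
      fun t ht => mul_nonneg (sub_nonneg.2 (hle t (interior_subset ht))) (exp_pos _).le
  have hmono_t := hmono ⟨le_rfl, ht.1.trans_lt ht.2⟩ ht ht.1
  simp only [sub_self, mul_zero, exp_zero, mul_one] at hmono_t
  rwa [neg_mul, exp_neg, ← div_eq_mul_inv, le_div_iff₀ (exp_pos _)] at hmono_t

lemma mul_sub_le_exp_of_mul_exp_le_deriv (hX : ∀ t ∈ Ico t0 T, HasDerivAt X (X' t) t)
    (hle : ∀ t ∈ Ico t0 T, κ * exp (X t - 1) ≤ X' t) (ht : t ∈ Ico t0 T) :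
    κ * (t - t0) ≤ exp (1 - X t0) := by
  have hd : ∀ t ∈ Ico t0 T, HasDerivAt (fun t => -exp (1 - X t) - κ * t)
      (X' t * exp (1 - X t) - κ) t := fun t ht =>
    (((hX t ht).const_sub 1).exp.neg.sub ((hasDerivAt_id t).const_mul κ)).congr_deriv (by ring)
  have hmono : MonotoneOn (fun t => -exp (1 - X t) - κ * t) (Ico t0 T) := by
    refine monotoneOn_of_hasDerivWithinAt_nonneg (convex_Ico _ _)
      (fun t ht => (hd t ht).continuousAt.continuousWithinAt)
      (fun t ht => (hd t (interior_subset ht)).hasDerivWithinAt) fun t ht => sub_nonneg.2 ?_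
    calc κ = κ * exp (X t - 1) * exp (1 - X t) := by rw [mul_assoc, ← exp_add]; simp
      _ ≤ X' t * exp (1 - X t) := by gcongr; exact hle t (interior_subset ht)
  have hmono_t := hmono ⟨le_rfl, ht.1.trans_lt ht.2⟩ ht ht.1
  simp only at hmono_t
  linarith [exp_pos (1 - X t)]

-- `X` reaches the level `1` within the time `log (1 / X t0) / κ` and then blows up within `1 / κ`.
lemma mul_sub_le_log_add_one (hκ : 0 < κ) {x0 : ℝ} (hx0 : 0 < x0) (hx1 : x0 ≤ 1)
    (hX : ∀ t ∈ Ico t0 T, HasDerivAt X (X' t) t)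
    (hle : ∀ t ∈ Ico t0 T, κ * X t ≤ X' t)
    (hexp : ∀ t ∈ Ico t0 T, 1 ≤ X t → κ * exp (X t - 1) ≤ X' t) (h0 : x0 ≤ X t0) :
    κ * (T - t0) ≤ log (1 / x0) + 1 := by
  set t1 := t0 + log (1 / x0) / κ with ht1
  have hlog : 0 ≤ log (1 / x0) := log_nonneg (one_le_one_div hx0 hx1)
  have ht01 : t0 ≤ t1 := le_add_of_nonneg_right (div_nonneg hlog hκ.le)
  have hκt1 : κ * (t1 - t0) = log (1 / x0) := by rw [ht1]; field_simp; ring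
  have hsub : Ico t1 T ⊆ Ico t0 T := Ico_subset_Ico_left ht01
  have hone : ∀ t ∈ Ico t1 T, 1 ≤ X t := fun t ht => by
    calc 1 = x0 * exp (log (1 / x0)) := by rw [exp_log (by positivity)]; field_simp
      _ ≤ X t0 * exp (κ * (t - t0)) := by
        rw [← hκt1]
        gcongr
        · exact hx0.le.trans h0
        · exact ht.1
      _ ≤ X t := mul_exp_le_of_mul_le_deriv hX hle (hsub ht)
  have hlife : T ≤ t0 + (log (1 / x0) + 1) / κ := by
    refine le_of_forall_lt_imp_le_of_dense fun t htT => ?_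
    rw [← sub_le_iff_le_add', le_div_iff₀ hκ, mul_comm]
    rcases le_total t t1 with htt | htt
    · nlinarith
    · have hblow := mul_sub_le_exp_of_mul_exp_le_deriv (fun s hs => hX s (hsub hs))
        (fun s hs => hexp s (hsub hs) (hone s hs)) ⟨htt, htT⟩
      have : exp (1 - X t1) ≤ 1 :=
        exp_le_one_iff.2 (sub_nonpos.2 (hone t1 ⟨le_rfl, htt.trans_lt htT⟩))
      linarith
  rwa [← sub_le_iff_le_add', le_div_iff₀ hκ, mul_comm] at hlife

end LifeTime

namespace BoundaryProfile

variable {δ T K t t0 : ℝ} {k : ℝ → ℝ} {a ay ayy S : ℝ → ℝ → ℝ}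

/-- The value `κ`, about `log K`, such that the time derivative of the exponential mean `E` is at
least `K ^ 2 * (exp (a - κ) - a + E)` if the flux of the profile is at least `exp a`. -/
noncomputable def layerLevel (K δ : ℝ) : ℝ := log (K / (1 - exp (-K * δ)))

lemma one_sub_exp_neg_mul_pos (hK : 0 < K) (hδ : 0 < δ) : 0 < 1 - exp (-K * δ) :=
  sub_pos.2 (exp_lt_one_iff.2 (by nlinarith))

lemma mul_exp_eq_sq_mul_exp_sub_layerLevel (hK : 0 < K) (hδ : 0 < δ) (A : ℝ) :
    K * (1 - exp (-K * δ)) * exp A = K ^ 2 * exp (A - layerLevel K δ) := by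
  have hpos := one_sub_exp_neg_mul_pos hK hδ
  rw [exp_sub, layerLevel, exp_log (by positivity)]
  field_simp

-- With `s = a - κ`, the growth rate `exp s - s + (E - κ)` is at least `1 + (E - κ)`.
lemma sq_mul_sub_le_log_add_one (h : BoundaryProfile δ T k a ay ayy S) (hK : 0 < K)
    (hflux : ∀ t ∈ Ioo 0 T, exp (a 0 t) ≤ -ay 0 t) (ht0 : 0 < t0) {x0 : ℝ} (hx0 : 0 < x0)
    (hx1 : x0 ≤ 1) (hmean : layerLevel K δ - 1 + x0 ≤ expMean K δ a 0 t0) :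
    K ^ 2 * (T - t0) ≤ log (1 / x0) + 1 := by
  set κ := layerLevel K δ
  set E' : ℝ → ℝ := fun t =>
    ∫ z in (0 : ℝ)..δ, expWeight K δ z * (ayy z t - k z * ay z t + S z t)
  have hy0 : (0 : ℝ) ∈ Icc 0 δ := ⟨le_rfl, h.width_pos.le⟩
  have htime : ∀ t ∈ Ico t0 T, t ∈ Ioo 0 T := fun t ht => ⟨ht0.trans_le ht.1, ht.2⟩
  have hE' : ∀ t ∈ Ico t0 T, K ^ 2 * (exp (a 0 t - κ) - a 0 t + expMean K δ a 0 t) ≤ E' t :=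
      fun t ht => by
    have hgreen := h.le_integral_expWeight_mul_deriv_time hK hy0 (htime t ht)
    have hfl := mul_le_mul_of_nonneg_left (hflux t (htime t ht))
      (mul_nonneg hK.le (one_sub_exp_neg_mul_pos hK h.width_pos).le)
    rw [mul_exp_eq_sq_mul_exp_sub_layerLevel hK h.width_pos] at hfl
    rw [expWeight_zero, mul_zero, exp_zero, mul_one] at hgreen
    linarith
  refine mul_sub_le_log_add_one (X := fun t => expMean K δ a 0 t - κ + 1) (by positivity) hx0 hx1
    (fun t ht => ((h.hasDerivAt_expMean_snd hy0 (htime t ht)).sub_const κ).add_const 1)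
    (fun t ht => le_trans ?_ (hE' t ht)) (fun t ht hone => le_trans ?_ (hE' t ht)) (by linarith)
  · refine mul_le_mul_of_nonneg_left ?_ (sq_nonneg K)
    linarith [add_one_le_exp (a 0 t - κ)]
  · refine mul_le_mul_of_nonneg_left ?_ (sq_nonneg K)
    have hfactor :
        exp (a 0 t - κ) = exp (expMean K δ a 0 t - κ) * exp (a 0 t - expMean K δ a 0 t) := by
      rw [← exp_add]; ring_nf
    have hge : 1 ≤ exp (expMean K δ a 0 t - κ) := one_le_exp (by linarith)
    have hEa := h.expMean_le_boundary hK (Ioo_subset_Ico_self (htime t ht))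
    rw [add_sub_cancel_right, hfactor]
    nlinarith [add_one_le_exp (a 0 t - expMean K δ a 0 t)]

end BoundaryProfile

/-! ### Comparison for the heat equation with a Robin condition -/

/-- The primitive `∫₀^ξ e^{-r²/4} dr`, a multiple of the error function. -/
noncomputable def gaussPrimitive (ξ : ℝ) : ℝ := ∫ r in (0 : ℝ)..ξ, exp (-r ^ 2 / 4)

section GaussPrimitive

variable {ξ : ℝ}

lemma hasDerivAt_gaussPrimitive (ξ : ℝ) : HasDerivAt gaussPrimitive (exp (-ξ ^ 2 / 4)) ξ :=
  (by fun_prop : Continuous fun r : ℝ => exp (-r ^ 2 / 4)).integral_hasStrictDerivAt 0 ξ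
    |>.hasDerivAt

lemma continuous_gaussPrimitive : Continuous gaussPrimitive :=
  continuous_iff_continuousAt.2 fun ξ => (hasDerivAt_gaussPrimitive ξ).continuousAt

lemma monotone_gaussPrimitive : Monotone gaussPrimitive :=
  monotone_of_hasDerivAt_nonneg hasDerivAt_gaussPrimitive fun _ => (exp_pos _).le

lemma gaussPrimitive_le_self (h : 0 ≤ ξ) : gaussPrimitive ξ ≤ ξ := by
  have hc : Continuous fun r : ℝ => exp (-r ^ 2 / 4) := by fun_prop
  have hle := intervalIntegral.integral_mono_on (μ := volume) h (hc.intervalIntegrable 0 ξ)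
    (continuous_const.intervalIntegrable 0 ξ)
    fun r _ => exp_le_one_iff.2 (by nlinarith [sq_nonneg r] : -r ^ 2 / 4 ≤ 0)
  simpa [gaussPrimitive] using hle

lemma mul_exp_le_gaussPrimitive (h : 0 ≤ ξ) : ξ * exp (-ξ ^ 2 / 4) ≤ gaussPrimitive ξ := by
  have hc : Continuous fun r : ℝ => exp (-r ^ 2 / 4) := by fun_prop
  have hle := intervalIntegral.integral_mono_on (μ := volume) h
    (continuous_const.intervalIntegrable 0 ξ) (hc.intervalIntegrable 0 ξ)
    fun r hr => exp_le_exp.2 (by nlinarith [hr.1, hr.2] : -ξ ^ 2 / 4 ≤ -r ^ 2 / 4)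
  simpa [gaussPrimitive] using hle

lemma gaussPrimitive_nonneg (h : 0 ≤ ξ) : 0 ≤ gaussPrimitive ξ :=
  (by positivity : 0 ≤ ξ * exp (-ξ ^ 2 / 4)).trans (mul_exp_le_gaussPrimitive h)

lemma half_le_gaussPrimitive (h : 1 ≤ ξ) : 1 / 2 ≤ gaussPrimitive ξ := by
  have hone := mul_exp_le_gaussPrimitive (zero_le_one' ℝ)
  have hexp := add_one_le_exp (-(1 : ℝ) ^ 2 / 4)
  linarith [monotone_gaussPrimitive h]

end GaussPrimitive

/-- The solution `gaussPrimitive ((1 + K y) / √(1 + K² s))` of the heat equation in `(y, s)`. It is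
a supersolution of the Robin condition `∂_y w = K w` at `y = 0` and decays there like `1 / √s`. -/
noncomputable def robinHeat (K y s : ℝ) : ℝ := gaussPrimitive ((1 + K * y) / √(1 + K ^ 2 * s))

/-- The `y`-derivative of `robinHeat`. -/
noncomputable def robinHeatY (K y s : ℝ) : ℝ :=
  exp (-((1 + K * y) / √(1 + K ^ 2 * s)) ^ 2 / 4) * (K / √(1 + K ^ 2 * s))

/-- The second `y`-derivative of `robinHeat`, which is also its `s`-derivative. -/
noncomputable def robinHeatYY (K y s : ℝ) : ℝ :=
  exp (-((1 + K * y) / √(1 + K ^ 2 * s)) ^ 2 / 4) *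
    (-(1 + K * y) * K ^ 2 / (2 * √(1 + K ^ 2 * s) ^ 3))

section RobinHeat

variable {K y s : ℝ}

lemma hasDerivAt_one_add_mul_div (K c y : ℝ) : HasDerivAt (fun y => (1 + K * y) / c) (K / c) y := by
  simpa using (((hasDerivAt_id y).const_mul K).const_add 1).div_const c

lemma sqrt_one_add_sq_mul_pos (hs : 0 ≤ s) : 0 < √(1 + K ^ 2 * s) := sqrt_pos.2 (by positivity)

lemma hasDerivAt_robinHeat_fst (K y s : ℝ) :
    HasDerivAt (fun y => robinHeat K y s) (robinHeatY K y s) y :=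
  (hasDerivAt_gaussPrimitive _).comp y (hasDerivAt_one_add_mul_div K _ y)

lemma hasDerivAt_robinHeatY (hs : 0 ≤ s) (y : ℝ) :
    HasDerivAt (fun y => robinHeatY K y s) (robinHeatYY K y s) y := by
  have : 0 < √(1 + K ^ 2 * s) := sqrt_one_add_sq_mul_pos hs
  refine (((((hasDerivAt_one_add_mul_div K _ y).fun_pow 2).fun_neg.div_const 4).exp).mul_const
    (K / √(1 + K ^ 2 * s))).congr_deriv ?_
  rw [robinHeatYY, mul_assoc]
  congr 1
  push_cast
  field_simp
  ring

lemma hasDerivAt_robinHeat_snd (hs : 0 ≤ s) (y : ℝ) :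
    HasDerivAt (fun s => robinHeat K y s) (robinHeatYY K y s) s := by
  have hpos : 0 < 1 + K ^ 2 * s := by positivity
  have hQ := sqrt_one_add_sq_mul_pos (K := K) hs
  have hsqrt : HasDerivAt (fun s => √(1 + K ^ 2 * s)) (K ^ 2 / (2 * √(1 + K ^ 2 * s))) s := by
    simpa using (((hasDerivAt_id s).const_mul (K ^ 2)).const_add 1).sqrt hpos.ne'
  have harg : HasDerivAt (fun s => (1 + K * y) / √(1 + K ^ 2 * s))
      (-(1 + K * y) * K ^ 2 / (2 * √(1 + K ^ 2 * s) ^ 3)) s := by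
    refine ((hasDerivAt_const s (1 + K * y)).fun_div hsqrt hQ.ne').congr_deriv ?_
    field_simp
    ring
  exact (hasDerivAt_gaussPrimitive _).comp s harg

lemma robinHeatY_nonneg (hK : 0 ≤ K) : 0 ≤ robinHeatY K y s := by
  unfold robinHeatY
  positivity

lemma robinHeat_nonneg (hK : 0 ≤ K) (hy : 0 ≤ y) : 0 ≤ robinHeat K y s :=
  gaussPrimitive_nonneg (by positivity)

lemma half_le_robinHeat_zero (hK : 0 ≤ K) (hy : 0 ≤ y) : 1 / 2 ≤ robinHeat K y 0 :=
  half_le_gaussPrimitive (by simpa using mul_nonneg hK hy)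

lemma robinHeat_boundary_le (K s : ℝ) : robinHeat K 0 s ≤ 1 / √(1 + K ^ 2 * s) := by
  simpa [robinHeat] using gaussPrimitive_le_self (by positivity : 0 ≤ 1 / √(1 + K ^ 2 * s))

lemma robinHeatY_boundary_le (hK : 0 ≤ K) : robinHeatY K 0 s ≤ K * robinHeat K 0 s := by
  have hsecant := mul_exp_le_gaussPrimitive (by simp : 0 ≤ (1 + K * 0) / √(1 + K ^ 2 * s))
  calc robinHeatY K 0 s = K * ((1 + K * 0) / √(1 + K ^ 2 * s) *
        exp (-((1 + K * 0) / √(1 + K ^ 2 * s)) ^ 2 / 4)) := by rw [robinHeatY]; ring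
    _ ≤ K * robinHeat K 0 s := mul_le_mul_of_nonneg_left hsecant hK

lemma continuousOn_robinHeat {t1 : ℝ} {D : Set ℝ} (hD : ∀ t ∈ D, t1 ≤ t) (S : Set ℝ) :
    ContinuousOn (fun p : ℝ × ℝ => robinHeat K p.1 (p.2 - t1)) (S ×ˢ D) :=
  continuous_gaussPrimitive.comp_continuousOn <| ContinuousOn.div (by fun_prop) (by fun_prop)
    fun p hp => (sqrt_one_add_sq_mul_pos (sub_nonneg.2 (hD p.2 hp.2))).ne'

end RobinHeat

/-- On `[0, ℓ] × [t1, t2]`, `q ≤ L` satisfies `q_t ≤ q_yy + F` wherever `q_y ≥ 0`, and the Robin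
inequality `q_y ≥ K (q - c)` at `y = 0`; `qy`, `qyy`, `qt` are the derivatives. -/
structure IsRobinSubsolution (K c F L ℓ t1 t2 : ℝ) (q qy qyy qt : ℝ → ℝ → ℝ) : Prop where
  continuousOn : ContinuousOn (fun p : ℝ × ℝ => q p.1 p.2) (Icc 0 ℓ ×ˢ Icc t1 t2)
  le_bound : ∀ y ∈ Icc 0 ℓ, ∀ t ∈ Icc t1 t2, q y t ≤ L
  deriv_fst : ∀ t ∈ Ioc t1 t2, ∀ y ∈ Icc 0 ℓ,
    HasDerivWithinAt (fun y => q y t) (qy y t) (Icc 0 ℓ) y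
  deriv_deriv_fst : ∀ t ∈ Ioc t1 t2, ∀ y ∈ Ioo 0 ℓ, HasDerivAt (fun y => qy y t) (qyy y t) y
  deriv_snd : ∀ t ∈ Ioc t1 t2, ∀ y ∈ Ioo 0 ℓ, HasDerivAt (q y) (qt y t) t
  robin : ∀ t ∈ Ioc t1 t2, K * (q 0 t - c) ≤ qy 0 t
  subsolution : ∀ t ∈ Ioc t1 t2, ∀ y ∈ Ioo 0 ℓ, 0 ≤ qy y t → qt y t ≤ qyy y t + F

/-- The barrier for `IsRobinSubsolution`, as a function of `y` and of the elapsed time `s`: the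
term in `robinHeat` exceeds `L` initially, the one in `A` exceeds it at the far end, and `F` takes
care of the source. -/
noncomputable def robinBarrier (K c F L A y s : ℝ) : ℝ :=
  c + 2 * L * robinHeat K y s + A * (y ^ 2 + 2 * s) + F * s

section RobinBarrier

variable {K c F L A y s : ℝ}

lemma hasDerivAt_robinBarrier_fst (K c F L A y s : ℝ) :
    HasDerivAt (fun y => robinBarrier K c F L A y s)
      (2 * L * robinHeatY K y s + A * (2 * y)) y := by
  refine (((((hasDerivAt_robinHeat_fst K y s).const_mul (2 * L)).const_add c).fun_add
    ((((hasDerivAt_id y).fun_pow 2).add_const (2 * s)).const_mul A)).add_const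
    (F * s)).congr_deriv ?_
  simp

lemma hasDerivAt_robinBarrierY (L A : ℝ) (hs : 0 ≤ s) (y : ℝ) :
    HasDerivAt (fun y => 2 * L * robinHeatY K y s + A * (2 * y))
      (2 * L * robinHeatYY K y s + A * 2) y := by
  refine (((hasDerivAt_robinHeatY hs y).const_mul (2 * L)).fun_add
    (((hasDerivAt_id y).const_mul 2).const_mul A)).congr_deriv ?_
  simp

lemma hasDerivAt_robinBarrier_snd (c F L A : ℝ) (hs : 0 ≤ s) (y : ℝ) :
    HasDerivAt (fun s => robinBarrier K c F L A y s)
      (2 * L * robinHeatYY K y s + A * 2 + F) s := by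
  have hid := hasDerivAt_id s
  refine (((((hasDerivAt_robinHeat_snd hs y).const_mul (2 * L)).const_add c).fun_add
    (((hid.const_mul 2).const_add (y ^ 2)).const_mul A)).fun_add (hid.const_mul F)).congr_deriv ?_
  simp

lemma continuousOn_robinBarrier {t1 : ℝ} {D : Set ℝ} (hD : ∀ t ∈ D, t1 ≤ t) (S : Set ℝ) :
    ContinuousOn (fun p : ℝ × ℝ => robinBarrier K c F L A p.1 (p.2 - t1)) (S ×ˢ D) := by
  have hheat := continuousOn_robinHeat (K := K) hD S
  unfold robinBarrier
  fun_prop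

lemma lt_robinBarrier_initial (hK : 0 ≤ K) (hc : 0 < c) (hL : 0 ≤ L) (hA : 0 ≤ A) (hy : 0 ≤ y) :
    L < robinBarrier K c F L A y 0 := by
  have hhalf := mul_le_mul_of_nonneg_left (half_le_robinHeat_zero hK hy)
    (mul_nonneg zero_le_two hL)
  have hspace : 0 ≤ A * y ^ 2 := by positivity
  simp only [robinBarrier, mul_zero, add_zero]
  linarith

lemma lt_robinBarrier_end (hK : 0 ≤ K) (hc : 0 < c) (hF : 0 ≤ F) (hL : 0 ≤ L) (hy : 0 < y)
    (hs : 0 ≤ s) : L < robinBarrier K c F L (L / y ^ 2) y s := by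
  have hend : L / y ^ 2 * (y ^ 2 + 2 * s) = L + L / y ^ 2 * (2 * s) := by field_simp
  have hheat := mul_nonneg (mul_nonneg zero_le_two hL) (robinHeat_nonneg (s := s) hK hy.le)
  have hspace : 0 ≤ L / y ^ 2 * (2 * s) := by positivity
  have hsource : 0 ≤ F * s := by positivity
  rw [robinBarrier, hend]
  linarith

lemma robinBarrierY_boundary_le (hK : 0 ≤ K) (hF : 0 ≤ F) (hL : 0 ≤ L) (hA : 0 ≤ A) (hs : 0 ≤ s) :
    2 * L * robinHeatY K 0 s ≤ K * (robinBarrier K c F L A 0 s - c) := by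
  have hrest : 0 ≤ K * (A * (2 * s) + F * s) := by positivity
  calc 2 * L * robinHeatY K 0 s ≤ 2 * L * (K * robinHeat K 0 s) :=
        mul_le_mul_of_nonneg_left (robinHeatY_boundary_le hK) (mul_nonneg zero_le_two hL)
    _ ≤ 2 * L * (K * robinHeat K 0 s) + K * (A * (2 * s) + F * s) := le_add_of_nonneg_right hrest
    _ = K * (robinBarrier K c F L A 0 s - c) := by rw [robinBarrier]; ring

end RobinBarrier

namespace IsRobinSubsolution

variable {K c F L ℓ t1 t2 : ℝ} {q qy qyy qt : ℝ → ℝ → ℝ}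

lemma not_touch_interior (h : IsRobinSubsolution K c F L ℓ t1 t2 q qy qyy qt) (hK : 0 ≤ K)
    (hL : 0 ≤ L) {A c' F' : ℝ} (hA : 0 ≤ A) (hF' : F < F') {y t : ℝ} (hy : y ∈ Ioo 0 ℓ)
    (ht : t ∈ Ioc t1 t2)
    (hspace : IsMaxOn (fun y => q y t - robinBarrier K c' F' L A y (t - t1)) (Icc 0 ℓ) y)
    (htime : IsMaxOn (fun t => q y t - robinBarrier K c' F' L A y (t - t1)) (Icc t1 t) t) :
    False := by
  have hts : 0 ≤ t - t1 := sub_nonneg.2 ht.1.le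
  have hloc := hspace.isLocalMax (Icc_mem_nhds hy.1 hy.2)
  have hderiv : ∀ᶠ z in 𝓝 y, HasDerivAt (fun y => q y t - robinBarrier K c' F' L A y (t - t1))
      (qy z t - (2 * L * robinHeatY K z (t - t1) + A * (2 * z))) z := by
    filter_upwards [Ioo_mem_nhds hy.1 hy.2] with z hz
    exact ((h.deriv_fst t ht z (Ioo_subset_Icc_self hz)).hasDerivAt
      (Icc_mem_nhds hz.1 hz.2)).fun_sub (hasDerivAt_robinBarrier_fst K _ _ L _ z _)
  have hcrit := hloc.hasDerivAt_eq_zero hderiv.self_of_nhds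
  have hsecond := second_deriv_nonpos_of_isLocalMax hderiv
    ((h.deriv_deriv_fst t ht y hy).fun_sub (hasDerivAt_robinBarrierY L A hts y)) hloc
  have hfirst := hasDerivWithinAt_nonneg_of_isMaxOn_Icc_right ht.1
    ((h.deriv_snd t ht y hy).fun_sub
      ((hasDerivAt_robinBarrier_snd c' F' L A hts y).comp_sub_const t t1)).hasDerivWithinAt htime
  have hYnonneg : 0 ≤ 2 * L * robinHeatY K y (t - t1) + A * (2 * y) :=
    add_nonneg (mul_nonneg (mul_nonneg zero_le_two hL) (robinHeatY_nonneg hK))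
      (mul_nonneg hA (mul_nonneg zero_le_two hy.1.le))
  linarith [h.subsolution t ht y hy (by linarith)]

lemma lt_robinBarrier (h : IsRobinSubsolution K c F L ℓ t1 t2 q qy qyy qt) (hK : 0 < K)
    (hc : 0 ≤ c) (hF : 0 ≤ F) (hL : 0 ≤ L) (hℓ : 0 < ℓ) {e : ℝ} (he : 0 < e) {y t : ℝ}
    (hy : y ∈ Icc 0 ℓ) (ht : t ∈ Icc t1 t2) :
    q y t < robinBarrier K (c + e) (F + e) L (L / ℓ ^ 2) y (t - t1) := by
  by_contra! hge
  have hA : 0 ≤ L / ℓ ^ 2 := by positivity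
  have hF' : 0 ≤ F + e := by positivity
  have hinit : ∀ y ∈ Icc 0 ℓ,
      q y t1 - robinBarrier K (c + e) (F + e) L (L / ℓ ^ 2) y (t1 - t1) < 0 := fun y hy => by
    rw [sub_self, sub_neg]
    exact (h.le_bound y hy t1 ⟨le_rfl, ht.1.trans ht.2⟩).trans_lt
      (lt_robinBarrier_initial hK.le (by positivity) hL hA hy.1)
  obtain ⟨-, y, hy, t, ht, hzero, hmax⟩ := exists_first_zero (ι := Unit) isCompact_Icc
    (f := fun _ y t => q y t - robinBarrier K (c + e) (F + e) L (L / ℓ ^ 2) y (t - t1))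
    (fun _ => h.continuousOn.sub (continuousOn_robinBarrier (fun _ hs => hs.1) _))
    (fun _ => hinit) ⟨(), y, hy, t, ht, sub_nonneg.2 hge⟩
  have hts : 0 ≤ t - t1 := sub_nonneg.2 ht.1.le
  have hspace : IsMaxOn
      (fun z => q z t - robinBarrier K (c + e) (F + e) L (L / ℓ ^ 2) z (t - t1)) (Icc 0 ℓ) y :=
    fun z hz => (hmax () z hz t ⟨ht.1.le, le_rfl⟩).trans_eq hzero.symm
  rcases hy.2.eq_or_lt with rfl | hyl
  · have hend := lt_robinBarrier_end (F := F + e) hK.le (by positivity : 0 < c + e) hF' hL hℓ hts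
    exact hend.not_ge (sub_eq_zero.1 hzero ▸ h.le_bound y hy t ⟨ht.1.le, ht.2⟩)
  rcases hy.1.eq_or_lt with rfl | hy0
  · have hslope := hasDerivWithinAt_nonpos_of_isMaxOn_Icc_left hℓ ((h.deriv_fst t ht 0 hy).fun_sub
      (hasDerivAt_robinBarrier_fst K _ _ L _ 0 _).hasDerivWithinAt) hspace
    have hbarrier := robinBarrierY_boundary_le (c := c + e) hK.le hF' hL hA hts
    have hrobin := h.robin t ht
    rw [← sub_eq_zero.1 hzero] at hbarrier
    linarith [mul_pos hK he]
  · exact h.not_touch_interior hK.le hL hA (lt_add_of_pos_right F he) ⟨hy0, hyl⟩ ht hspace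
      fun s hs => (hmax () y hy s hs).trans_eq hzero.symm

theorem boundary_le (h : IsRobinSubsolution K c F L ℓ t1 t2 q qy qyy qt) (hK : 0 < K)
    (hc : 0 ≤ c) (hF : 0 ≤ F) (hL : 0 ≤ L) (hℓ : 0 < ℓ) (ht : t1 ≤ t2) :
    q 0 t2 ≤
      c + 2 * L / √(1 + K ^ 2 * (t2 - t1)) + (2 * L / ℓ ^ 2 + F) * (t2 - t1) := by
  refine le_of_forall_pos_le_add fun e he => ?_
  have : 0 ≤ t2 - t1 := sub_nonneg.2 ht
  have hlt := (h.lt_robinBarrier hK hc hF hL hℓ (by positivity : 0 < e / (1 + (t2 - t1)))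
    ⟨le_rfl, hℓ.le⟩ ⟨ht, le_rfl⟩).le
  have hheat := mul_le_mul_of_nonneg_left (robinHeat_boundary_le K (t2 - t1))
    (mul_nonneg zero_le_two hL)
  have he' : e / (1 + (t2 - t1)) * (1 + (t2 - t1)) = e := div_mul_cancel₀ _ (by positivity)
  rw [robinBarrier] at hlt
  calc q 0 t2 ≤ _ := hlt
    _ = c + (2 * L) * robinHeat K 0 (t2 - t1) + (2 * L / ℓ ^ 2 + F) * (t2 - t1) +
        e / (1 + (t2 - t1)) * (1 + (t2 - t1)) := by ring
    _ ≤ _ := by rw [he']; linarith [mul_one_div (2 * L) (√(1 + K ^ 2 * (t2 - t1)))]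

end IsRobinSubsolution

/-! ### Gain at the boundary over the exponential mean -/

/-- The mean of `a` over `[y, δ]` with the weight `expWeight K δ`, rescaled so that the weight at
`y` is about `K`. -/
noncomputable def scaledMean (K δ : ℝ) (a : ℝ → ℝ → ℝ) (y t : ℝ) : ℝ :=
  exp (K * y) * expMean K δ a y t

/-- The `y`-derivative of `scaledMean`. -/
noncomputable def scaledMeanY (K δ : ℝ) (a : ℝ → ℝ → ℝ) (y t : ℝ) : ℝ :=
  K * scaledMean K δ a y t - K * (1 - exp (-K * (δ - y))) * a y t

/-- The second `y`-derivative of `scaledMean`. -/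
noncomputable def scaledMeanYY (K δ : ℝ) (a ay : ℝ → ℝ → ℝ) (y t : ℝ) : ℝ :=
  K * scaledMeanY K δ a y t + K ^ 2 * exp (-K * (δ - y)) * a y t -
    K * (1 - exp (-K * (δ - y))) * ay y t

/-- The `t`-derivative of `scaledMean`; `at'` stands for the `t`-derivative of `a`. -/
noncomputable def scaledMeanT (K δ : ℝ) (at' : ℝ → ℝ → ℝ) (y t : ℝ) : ℝ :=
  exp (K * y) * ∫ z in y..δ, expWeight K δ z * at' z t

namespace BoundaryProfile

variable {δ T K η L t y : ℝ} {k : ℝ → ℝ} {a ay ayy S : ℝ → ℝ → ℝ}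

lemma scaledMean_nonneg (h : BoundaryProfile δ T k a ay ayy S) (hK : 0 < K) (ht : t ∈ Ico 0 T)
    (hy : y ∈ Icc 0 δ) : 0 ≤ scaledMean K δ a y t :=
  mul_nonneg (exp_pos _).le (h.expMean_nonneg hK ht hy)

lemma hasDerivWithinAt_scaledMean_fst (h : BoundaryProfile δ T k a ay ayy S) (ht : t ∈ Ico 0 T)
    (hy : y ∈ Icc 0 δ) :
    HasDerivWithinAt (fun y => scaledMean K δ a y t) (scaledMeanY K δ a y t) (Icc 0 δ) y := by
  refine (((hasDerivAt_id y).const_mul K).exp.hasDerivWithinAt.fun_mul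
    (h.hasDerivWithinAt_expMean_fst (K := K) ht hy)).congr_deriv ?_
  rw [scaledMeanY, scaledMean, ← exp_mul_expWeight]
  simp only [id_eq]
  ring

lemma hasDerivWithinAt_scaledMeanY (h : BoundaryProfile δ T k a ay ayy S) (ht : t ∈ Ioo 0 T)
    (hy : y ∈ Icc 0 δ) :
    HasDerivWithinAt (fun y => scaledMeanY K δ a y t) (scaledMeanYY K δ a ay y t)
      (Icc 0 δ) y := by
  have hfactor : HasDerivAt (fun y => K * (1 - exp (-K * (δ - y))))
      (-(K ^ 2 * exp (-K * (δ - y)))) y := by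
    refine ((((((hasDerivAt_id y).const_sub δ).const_mul (-K)).exp).const_sub 1).const_mul
      K).congr_deriv ?_
    simp only [id_eq]
    ring
  refine (((h.hasDerivWithinAt_scaledMean_fst (Ioo_subset_Ico_self ht) hy).const_mul K).fun_sub
    (hfactor.hasDerivWithinAt.fun_mul (h.deriv_fst t ht y hy))).congr_deriv ?_
  rw [scaledMeanYY]
  ring

lemma hasDerivAt_scaledMean_snd (h : BoundaryProfile δ T k a ay ayy S) (ht : t ∈ Ioo 0 T)
    (hy : y ∈ Icc 0 δ) :
    HasDerivAt (scaledMean K δ a y)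
      (scaledMeanT K δ (fun z t => ayy z t - k z * ay z t + S z t) y t) t :=
  (h.hasDerivAt_expMean_snd hy ht).const_mul _

lemma scaledMeanYY_le (h : BoundaryProfile δ T k a ay ayy S) (hK : 0 < K) (ht : t ∈ Ioo 0 T)
    (hy : y ∈ Icc 0 δ) :
    scaledMeanYY K δ a ay y t ≤
      scaledMeanT K δ (fun z t => ayy z t - k z * ay z t + S z t) y t +
        2 * K ^ 2 * exp (-K * (δ - y)) * a y t := by
  have hgreen := mul_le_mul_of_nonneg_left (h.le_integral_expWeight_mul_deriv_time hK hy ht)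
    (exp_pos (K * y)).le
  have hinv : exp (K * y) * exp (-K * y) = 1 := by rw [← exp_add]; simp
  calc scaledMeanYY K δ a ay y t
      = exp (K * y) * (-(expWeight K δ y * ay y t) - K ^ 2 * exp (-K * y) * a y t +
          K ^ 2 * expMean K δ a y t) + 2 * K ^ 2 * exp (-K * (δ - y)) * a y t := by
        rw [scaledMeanYY, scaledMeanY, scaledMean]
        linear_combination K ^ 2 * a y t * hinv + ay y t * exp_mul_expWeight (K := K) (δ := δ)
          (z := y)
    _ ≤ _ := by gcongr; exact hgreen

lemma scaledMean_robin (h : BoundaryProfile δ T k a ay ayy S) (hK : 0 ≤ K) (ht : t ∈ Ioo 0 T)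
    (hη : η ∈ Icc 0 1) (ha : a 0 t ≤ L)
    (hflux : -ay 0 t ≤ K * (1 - η * L) + η * K * a 0 t) :
    K * (a 0 t - (1 + η) * scaledMean K δ a 0 t - (1 - η * L + 2 * exp (-K * δ) * L)) ≤
      ay 0 t - (1 + η) * scaledMeanY K δ a 0 t := by
  have ha0 := h.nonneg 0 ⟨le_rfl, h.width_pos.le⟩ t (Ioo_subset_Ico_self ht)
  have hcut : (1 + η) * a 0 t * (K * exp (-K * δ)) ≤ 2 * L * (K * exp (-K * δ)) :=
    mul_le_mul_of_nonneg_right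
      (mul_le_mul (by linarith [hη.2]) ha ha0 zero_le_two) (mul_nonneg hK (exp_pos _).le)
  rw [scaledMeanY, sub_zero]
  linarith

-- This makes the drift term harmless where the excess of `a` over the mean increases with `y`.
lemma neg_ay_le_of_excess (h : BoundaryProfile δ T k a ay ayy S) (hK : 0 < K) (ht : t ∈ Ioo 0 T)
    (hη : η ∈ Icc 0 1) (hy : y ∈ Icc 0 δ) (ha : a y t ≤ L)
    (hmono : 0 ≤ ay y t - (1 + η) * scaledMeanY K δ a y t) : -ay y t ≤ 2 * K * L := by
  have ha0 := h.nonneg y hy t (Ioo_subset_Ico_self ht)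
  have hη0 : 0 ≤ 1 + η := by linarith [hη.1]
  have hmean : 0 ≤ (1 + η) * (K * scaledMean K δ a y t) := mul_nonneg hη0
    (mul_nonneg hK.le (h.scaledMean_nonneg hK (Ioo_subset_Ico_self ht) hy))
  have hcut : 0 ≤ (1 + η) * (K * exp (-K * (δ - y)) * a y t) := by positivity
  have hbound : (1 + η) * (K * a y t) ≤ 2 * (K * L) :=
    mul_le_mul (by linarith [hη.2]) (mul_le_mul_of_nonneg_left ha hK.le) (by positivity)
      zero_le_two
  rw [scaledMeanY] at hmono
  linarith

lemma excess_subsolution (h : BoundaryProfile δ T k a ay ayy S) (hK : 0 < K) (ht : t ∈ Ioo 0 T)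
    (hη : η ∈ Icc 0 1) (hy : y ∈ Icc 0 δ) (ha : a y t ≤ L) {c S0 ℓ : ℝ} (hk : k y ≤ c)
    (hS : S y t ≤ S0) (hℓ : y ≤ ℓ)
    (hmono : 0 ≤ ay y t - (1 + η) * scaledMeanY K δ a y t) :
    ayy y t - k y * ay y t + S y t -
        (1 + η) * scaledMeanT K δ (fun z t => ayy z t - k z * ay z t + S z t) y t ≤
      ayy y t - (1 + η) * scaledMeanYY K δ a ay y t +
        (S0 + 2 * c * K * L + 4 * K ^ 2 * exp (-K * (δ - ℓ)) * L) := by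
  have ha0 := h.nonneg y hy t (Ioo_subset_Ico_self ht)
  have hL : 0 ≤ L := ha0.trans ha
  have hη0 : 0 ≤ 1 + η := by linarith [hη.1]
  have hdrift : k y * -ay y t ≤ c * (2 * K * L) :=
    (mul_le_mul_of_nonneg_left (h.neg_ay_le_of_excess hK ht hη hy ha hmono)
      (h.drift_nonneg y hy)).trans (mul_le_mul_of_nonneg_right hk (by positivity))
  have hexp : exp (-K * (δ - y)) ≤ exp (-K * (δ - ℓ)) :=
    exp_le_exp.2 (mul_le_mul_of_nonpos_left (sub_le_sub_left hℓ δ) (neg_nonpos.2 hK.le))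
  have hcut : (1 + η) * (2 * K ^ 2 * exp (-K * (δ - y)) * a y t) ≤
      2 * (2 * K ^ 2 * exp (-K * (δ - ℓ)) * L) :=
    mul_le_mul (by linarith [hη.2]) (by gcongr) (by positivity) zero_le_two
  linarith [mul_le_mul_of_nonneg_left (h.scaledMeanYY_le hK ht hy) hη0]

lemma isRobinSubsolution_excess (h : BoundaryProfile δ T k a ay ayy S) (hK : 0 < K)
    (hη : η ∈ Icc 0 1) {c S0 ℓ t1 t2 : ℝ} (ht1 : 0 < t1) (ht2 : t2 < T) (h12 : t1 ≤ t2)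
    (hℓδ : ℓ ≤ δ) (ha : ∀ t ∈ Icc t1 t2, a 0 t ≤ L) (hk : ∀ y ∈ Icc 0 δ, k y ≤ c)
    (hS : ∀ y ∈ Icc 0 δ, ∀ t ∈ Icc t1 t2, S y t ≤ S0)
    (hflux : ∀ t ∈ Icc t1 t2, -ay 0 t ≤ K * (1 - η * L) + η * K * a 0 t) :
    IsRobinSubsolution K (1 - η * L + 2 * exp (-K * δ) * L)
      (S0 + 2 * c * K * L + 4 * K ^ 2 * exp (-K * (δ - ℓ)) * L) L ℓ t1 t2
      (fun y t => a y t - (1 + η) * scaledMean K δ a y t)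
      (fun y t => ay y t - (1 + η) * scaledMeanY K δ a y t)
      (fun y t => ayy y t - (1 + η) * scaledMeanYY K δ a ay y t)
      (fun y t => ayy y t - k y * ay y t + S y t -
        (1 + η) * scaledMeanT K δ (fun z t => ayy z t - k z * ay z t + S z t) y t) := by
  have hIoo : Icc t1 t2 ⊆ Ioo 0 T := fun t ht => ⟨ht1.trans_le ht.1, ht.2.trans_lt ht2⟩
  have hIco : Icc t1 t2 ⊆ Ico 0 T := hIoo.trans Ioo_subset_Ico_self
  have hIoc : Ioc t1 t2 ⊆ Ioo 0 T := Ioc_subset_Icc_self.trans hIoo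
  have hsub : Icc 0 ℓ ⊆ Icc 0 δ := Icc_subset_Icc_right hℓδ
  have hη0 : 0 ≤ 1 + η := by linarith [hη.1]
  have haL : ∀ y ∈ Icc 0 ℓ, ∀ t ∈ Icc t1 t2, a y t ≤ L := fun y hy t ht =>
    (h.le_boundary (hIco ht) (hsub hy)).trans (ha t ht)
  refine ⟨?_, fun y hy t ht => ?_, fun t ht y hy => ?_, fun t ht y hy => ?_, fun t ht y hy => ?_,
    fun t ht => ?_, fun t ht y hy => ?_⟩
  · have hcont := h.continuousOn.mono (prod_mono hsub hIco)
    have hmean := (h.continuousOn_expMean (K := K) ht1.le ht2 h12).mono (prod_mono_left hsub)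
    simp only [scaledMean]
    fun_prop
  · have hmean := mul_nonneg hη0 (h.scaledMean_nonneg hK (hIco ht) (hsub hy))
    linarith [haL y hy t ht]
  · exact ((h.deriv_fst t (hIoc ht) y (hsub hy)).fun_sub ((h.hasDerivWithinAt_scaledMean_fst
      (Ioo_subset_Ico_self (hIoc ht)) (hsub hy)).const_mul _)).mono hsub
  · exact ((h.deriv_deriv_fst t (hIoc ht) y (hsub (Ioo_subset_Icc_self hy))).fun_sub
      ((h.hasDerivWithinAt_scaledMeanY (hIoc ht) (hsub (Ioo_subset_Icc_self hy))).const_mul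
        _)).hasDerivAt (Icc_mem_nhds hy.1 (hy.2.trans_le hℓδ))
  · exact (h.deriv_time t (hIoc ht) y ⟨hy.1, hy.2.le.trans hℓδ⟩).fun_sub
      ((h.hasDerivAt_scaledMean_snd (hIoc ht) (hsub (Ioo_subset_Icc_self hy))).const_mul _)
  · exact h.scaledMean_robin hK.le (hIoc ht) hη (ha t (Ioc_subset_Icc_self ht))
      (hflux t (Ioc_subset_Icc_self ht))
  · have hyδ := hsub (Ioo_subset_Icc_self hy)
    exact h.excess_subsolution hK (hIoc ht) hη hyδ
      (haL y (Ioo_subset_Icc_self hy) t (Ioc_subset_Icc_self ht)) (hk y hyδ)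
      (hS y hyδ t (Ioc_subset_Icc_self ht)) hy.2.le

/-- The error term in `boundary_sub_expMean_le` for a profile bounded by `L`, with drift at most `c`
and source at most `S0`, observed during a time `θ`. -/
noncomputable def excessError (K δ L c S0 θ : ℝ) : ℝ :=
  2 * exp (-K * δ) * L + 2 * L / √(1 + K ^ 2 * θ) +
    (8 * L / δ ^ 2 + S0 + 2 * c * K * L + 4 * K ^ 2 * exp (-K * (δ / 2)) * L) * θ

lemma boundary_sub_expMean_le (h : BoundaryProfile δ T k a ay ayy S) (hK : 0 < K)
    (hη : η ∈ Icc 0 1) (hηL : η * L ≤ 1) {c S0 t1 t2 : ℝ} (ht1 : 0 < t1) (ht2 : t2 < T)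
    (h12 : t1 ≤ t2) (ha : ∀ t ∈ Icc t1 t2, a 0 t ≤ L) (hk : ∀ y ∈ Icc 0 δ, k y ≤ c)
    (hS : ∀ y ∈ Icc 0 δ, ∀ t ∈ Icc t1 t2, S y t ≤ S0)
    (hflux : ∀ t ∈ Icc t1 t2, -ay 0 t ≤ K * (1 - η * L) + η * K * a 0 t) :
    a 0 t2 - (1 + η) * expMean K δ a 0 t2 ≤
      1 - η * L + excessError K δ L c S0 (t2 - t1) := by
  have hδ := h.width_pos
  have h0 : (0 : ℝ) ∈ Icc 0 δ := ⟨le_rfl, hδ.le⟩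
  have hm : t2 ∈ Icc t1 t2 := ⟨h12, le_rfl⟩
  have ht2' : t2 ∈ Ioo 0 T := ⟨ht1.trans_le h12, ht2⟩
  have hL : 0 ≤ L := (h.nonneg 0 h0 t2 (Ioo_subset_Ico_self ht2')).trans (ha t2 hm)
  have hc : 0 ≤ c := (h.drift_nonneg 0 h0).trans (hk 0 h0)
  have hS0 : 0 ≤ S0 := (h.source_nonneg 0 h0 t2 ht2').trans (hS 0 h0 t2 hm)
  have hc0 : 0 ≤ 1 - η * L + 2 * exp (-K * δ) * L :=
    add_nonneg (sub_nonneg.2 hηL) (by positivity)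
  have hle := (h.isRobinSubsolution_excess hK hη ht1 ht2 h12 (half_le_self hδ.le) ha
    hk hS hflux).boundary_le hK hc0 (by positivity) hL (half_pos hδ) h12
  have hwidth : 2 * L / (δ / 2) ^ 2 = 8 * L / δ ^ 2 := by field_simp; ring
  simp only [scaledMean, mul_zero, exp_zero, one_mul, sub_half, hwidth] at hle
  rw [excessError]
  linarith

end BoundaryProfile

/-! ### The profile of a solution along a radius -/

lemma BoundaryProfile.average {δ T : ℝ} {k : ℝ → ℝ} {a ay ayy S b b_y b_yy S' : ℝ → ℝ → ℝ}
    (h : BoundaryProfile δ T k a ay ayy S) (h' : BoundaryProfile δ T k b b_y b_yy S') :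
    BoundaryProfile δ T k (fun y t => (a y t + b y t) / 2) (fun y t => (ay y t + b_y y t) / 2)
      (fun y t => (ayy y t + b_yy y t) / 2) (fun y t => (S y t + S' y t) / 2) where
  width_pos := h.width_pos
  continuousOn := (h.continuousOn.add h'.continuousOn).div_const 2
  nonneg y hy t ht := div_nonneg (add_nonneg (h.nonneg y hy t ht) (h'.nonneg y hy t ht)) zero_le_two
  antitoneOn t ht y hy z hz hyz := div_le_div_of_nonneg_right
    (add_le_add (h.antitoneOn t ht hy hz hyz) (h'.antitoneOn t ht hy hz hyz)) zero_le_two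
  deriv_fst t ht y hy := ((h.deriv_fst t ht y hy).fun_add (h'.deriv_fst t ht y hy)).div_const 2
  deriv_deriv_fst t ht y hy :=
    ((h.deriv_deriv_fst t ht y hy).fun_add (h'.deriv_deriv_fst t ht y hy)).div_const 2
  continuousOn_ayy t ht := ((h.continuousOn_ayy t ht).add (h'.continuousOn_ayy t ht)).div_const 2
  continuousOn_drift := h.continuousOn_drift
  continuousOn_source t ht :=
    ((h.continuousOn_source t ht).add (h'.continuousOn_source t ht)).div_const 2
  drift_nonneg := h.drift_nonneg
  source_nonneg y hy t ht :=
    div_nonneg (add_nonneg (h.source_nonneg y hy t ht) (h'.source_nonneg y hy t ht)) zero_le_two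
  deriv_time t ht y hy := (((h.deriv_time t ht y hy).fun_add
    (h'.deriv_time t ht y hy)).div_const 2).congr_deriv (by ring)
  lipschitz_time t ht := by
    obtain ⟨C, s, hs, hC⟩ := h.lipschitz_time t ht
    obtain ⟨C', s', hs', hC'⟩ := h'.lipschitz_time t ht
    refine ⟨‖(1 / 2 : ℝ)‖₊ * (C + C'), s ∩ s', inter_mem hs hs', fun y hy => ?_⟩
    have hsum := ((hC y hy).mono inter_subset_left).add ((hC' y hy).mono inter_subset_right)
    simpa [div_eq_inv_mul, Function.comp_def] using
      (lipschitzWith_smul (1 / 2 : ℝ)).comp_lipschitzOnWith hsum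

/-- The point of the ray from the origin through `x0` lying at distance `y` inside the sphere of
radius `R`, where `‖x0‖ = R`. -/
noncomputable def rayPoint {n : ℕ} (R : ℝ) (x0 : Eucl n) (y : ℝ) : Eucl n :=
  x0 + (-y) • (R⁻¹ • x0)

/-- The values of `u` along the ray through `x0`, as a function of the distance to the sphere. -/
noncomputable def raySlice {n : ℕ} (R : ℝ) (x0 : Eucl n) (u : Eucl n → ℝ → ℝ) (y t : ℝ) : ℝ :=
  u (rayPoint R x0 y) t

/-- The derivative of `raySlice` in the distance to the sphere. -/
noncomputable def raySliceY {n : ℕ} (R : ℝ) (x0 : Eucl n) (u : Eucl n → ℝ → ℝ) (y t : ℝ) : ℝ :=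
  derivWithin (fun y => raySlice R x0 u y t) (Icc 0 R) y

/-- The second derivative of `raySlice` in the distance to the sphere. -/
noncomputable def raySliceYY {n : ℕ} (R : ℝ) (x0 : Eucl n) (u : Eucl n → ℝ → ℝ) (y t : ℝ) : ℝ :=
  derivWithin (fun y => raySliceY R x0 u y t) (Icc 0 R) y

section RaySlices

variable {n : ℕ} {R T l l1 l2 t y : ℝ} {u v : Eucl n → ℝ → ℝ} {x0 : Eucl n}

lemma rayPoint_zero : rayPoint R x0 0 = x0 := by simp [rayPoint]

lemma continuous_rayPoint : Continuous (rayPoint R x0) := by unfold rayPoint; fun_prop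

lemma norm_rayPoint (hR : 0 < R) (hx0 : ‖x0‖ = R) (hy : y ≤ R) : ‖rayPoint R x0 y‖ = R - y := by
  rw [rayPoint, norm_add_smul_inv_smul hR hx0 (neg_le_neg hy), sub_eq_add_neg]

lemma rayPoint_mem_closedBall (hR : 0 < R) (hx0 : ‖x0‖ = R) (hy : y ∈ Icc 0 R) :
    rayPoint R x0 y ∈ closedBall (0 : Eucl n) R := by
  rw [mem_closedBall_zero_iff, norm_rayPoint hR hx0 hy.2]
  exact sub_le_self R hy.1

namespace HalfSolution

lemma contDiffOn_raySlice (h : HalfSolution R T l u v) (hx0 : ‖x0‖ = R) (ht : t ∈ Ioo 0 T) :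
    ContDiffOn ℝ 2 (fun y => raySlice R x0 u y t) (Icc 0 R) :=
  (h.contDiffOn t ht).comp (f := rayPoint R x0) (by unfold rayPoint; fun_prop)
    fun _ hy => rayPoint_mem_closedBall h.radius_pos hx0 hy

lemma continuousOn_raySlice (h : HalfSolution R T l u v) (hx0 : ‖x0‖ = R) :
    ContinuousOn (fun p : ℝ × ℝ => raySlice R x0 u p.1 p.2) (Icc 0 R ×ˢ Ico 0 T) :=
  h.continuousOn.comp (f := fun p : ℝ × ℝ => (rayPoint R x0 p.1, p.2))
    ((continuous_rayPoint.comp continuous_fst).prodMk continuous_snd).continuousOn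
    fun _ hp => ⟨rayPoint_mem_closedBall h.radius_pos hx0 hp.1, hp.2⟩

lemma hasDerivWithinAt_raySlice (h : HalfSolution R T l u v) (hx0 : ‖x0‖ = R)
    (ht : t ∈ Ioo 0 T) (hy : y ∈ Icc 0 R) :
    HasDerivWithinAt (fun y => raySlice R x0 u y t) (raySliceY R x0 u y t) (Icc 0 R) y :=
  ((h.contDiffOn_raySlice hx0 ht).differentiableOn (by norm_num) y hy).hasDerivWithinAt

lemma contDiffOn_raySliceY (h : HalfSolution R T l u v) (hx0 : ‖x0‖ = R) (ht : t ∈ Ioo 0 T) :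
    ContDiffOn ℝ 1 (fun y => raySliceY R x0 u y t) (Icc 0 R) :=
  (h.contDiffOn_raySlice hx0 ht).derivWithin (uniqueDiffOn_Icc h.radius_pos) (by norm_num)

lemma hasDerivWithinAt_raySliceY (h : HalfSolution R T l u v) (hx0 : ‖x0‖ = R)
    (ht : t ∈ Ioo 0 T) (hy : y ∈ Icc 0 R) :
    HasDerivWithinAt (fun y => raySliceY R x0 u y t) (raySliceYY R x0 u y t) (Icc 0 R) y :=
  ((h.contDiffOn_raySliceY hx0 ht).differentiableOn (by norm_num) y hy).hasDerivWithinAt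

lemma continuousOn_raySliceYY (h : HalfSolution R T l u v) (hx0 : ‖x0‖ = R) (ht : t ∈ Ioo 0 T) :
    ContinuousOn (fun y => raySliceYY R x0 u y t) (Icc 0 R) :=
  (h.contDiffOn_raySliceY hx0 ht).continuousOn_derivWithin (uniqueDiffOn_Icc h.radius_pos) le_rfl

lemma raySliceY_zero (h : HalfSolution R T l u v) (hx0 : ‖x0‖ = R) (ht : t ∈ Ioo 0 T) :
    raySliceY R x0 u 0 t = -exp (v x0 t) := by
  have hd : HasDerivAt (fun y => raySlice R x0 u y t) (exp (v x0 t) * -1) 0 :=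
    HasDerivAt.comp (h₂ := fun s => u (x0 + s • (R⁻¹ • x0)) t) (h := fun y : ℝ => -y) (0 : ℝ)
      (by simpa using h.boundary x0 hx0 t ht) (hasDerivAt_neg' (0 : ℝ))
  rw [raySliceY, hd.hasDerivWithinAt.derivWithin
    (uniqueDiffOn_Icc h.radius_pos 0 ⟨le_rfl, h.radius_pos.le⟩), mul_neg_one]

end HalfSolution

namespace SolutionPair

lemma lap_rayPoint (h : SolutionPair R T l1 l2 u v) (hx0 : ‖x0‖ = R) (ht : t ∈ Ioo 0 T)
    (hy : y ∈ Ioo 0 R) :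
    lap (fun z => u z t) (rayPoint R x0 y) =
      raySliceYY R x0 u y t - (n - 1) / (R - y) * raySliceY R x0 u y t := by
  have hR := h.fst.radius_pos
  have hnorm : ‖rayPoint R x0 y‖ = R - y := norm_rayPoint hR hx0 hy.2.le
  have hrev : ∀ ρ, HasDerivAt (fun ρ => R - ρ) (-1) ρ := fun ρ => by
    simpa using (hasDerivAt_id ρ).const_sub R
  have hfst : ∀ ρ ∈ Ioo 0 R, HasDerivAt (fun ρ => raySlice R x0 u (R - ρ) t)
      (-raySliceY R x0 u (R - ρ) t) ρ := fun ρ hρ => by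
    have hm : R - ρ ∈ Ioo 0 R := ⟨sub_pos.2 hρ.2, sub_lt_self R hρ.1⟩
    exact (((h.fst.hasDerivWithinAt_raySlice hx0 ht (Ioo_subset_Icc_self hm)).hasDerivAt
      (Icc_mem_nhds hm.1 hm.2)).comp ρ (hrev ρ)).congr_deriv (mul_neg_one _)
  have hsnd : HasDerivAt (fun ρ => -raySliceY R x0 u (R - ρ) t) (raySliceYY R x0 u y t)
      ‖rayPoint R x0 y‖ := by
    have hd := (h.fst.hasDerivWithinAt_raySliceY hx0 ht (Ioo_subset_Icc_self hy)).hasDerivAt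
      (Icc_mem_nhds hy.1 hy.2)
    rw [← sub_sub_cancel R y, ← hnorm] at hd
    refine (hd.comp _ (hrev _)).fun_neg.congr_deriv ?_
    rw [hnorm, sub_sub_cancel]
    ring
  have hball : rayPoint R x0 y ∈ ball (0 : Eucl n) R := by
    rw [mem_ball_zero_iff, hnorm]
    exact sub_lt_self R hy.1
  rw [lap_of_radial (by rw [hnorm]; exact sub_pos.2 hy.2) ?_
    (Eventually.mono (Ioo_mem_nhds (by rw [hnorm]; exact sub_pos.2 hy.2)
      (by rw [hnorm]; exact sub_lt_self R hy.1)) hfst) hsnd, hnorm, sub_sub_cancel]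
  · ring
  · filter_upwards [isOpen_ball.mem_nhds hball] with z hz
    refine h.eq_of_norm_eq (ball_subset_closedBall hz) ?_ (Ioo_subset_Ico_self ht)
    rw [norm_rayPoint hR hx0 (sub_le_self R (norm_nonneg z)), sub_sub_cancel]

lemma exists_lipschitzOnWith_time (h : SolutionPair R T l1 l2 u v) (ht : t ∈ Ioo 0 T) :
    ∃ C, ∃ s ∈ 𝓝 t, ∀ x ∈ closedBall (0 : Eucl n) R, LipschitzOnWith C (u x) s := by
  obtain ⟨C, hC, hle⟩ := h.exists_abs_sub_le (a := t / 2) (t2 := (t + T) / 2)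
    ⟨half_pos ht.1, by linarith [ht.1, ht.2]⟩ (by linarith [ht.2])
  refine ⟨⟨C, hC⟩, Icc (t / 2) ((t + T) / 2),
    Icc_mem_nhds (half_lt_self ht.1) (by linarith [ht.2]), fun x hx =>
      LipschitzOnWith.of_dist_le_mul fun r hr s hs => ?_⟩
  wlog hrs : r ≤ s generalizing r s
  · rw [dist_comm, dist_comm r]
    exact this s hs r hr (le_of_not_ge hrs)
  rw [dist_comm, dist_comm r, Real.dist_eq, Real.dist_eq, abs_of_nonneg (sub_nonneg.2 hrs)]
  exact hle x hx r hr s hs hrs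

lemma hasDerivAt_raySlice_time (h : SolutionPair R T l1 l2 u v) (hx0 : ‖x0‖ = R)
    (ht : t ∈ Ioo 0 T) (hy : y ∈ Ioo 0 R) :
    HasDerivAt (raySlice R x0 u y) (raySliceYY R x0 u y t -
      (n - 1) / (R - y) * raySliceY R x0 u y t + l1 * exp (raySlice R x0 v y t)) t := by
  rw [← h.lap_rayPoint hx0 ht hy]
  refine h.fst.interior _ ?_ t ht
  rw [mem_ball_zero_iff, norm_rayPoint h.fst.radius_pos hx0 hy.2.le]
  exact sub_lt_self R hy.1

lemma boundaryProfile_raySlice (h : SolutionPair R T l1 l2 u v) (hx0 : ‖x0‖ = R) :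
    BoundaryProfile (R / 2) T (fun y => (n - 1) / (R - y)) (raySlice R x0 u) (raySliceY R x0 u)
      (raySliceYY R x0 u) (fun y t => l1 * exp (raySlice R x0 v y t)) := by
  have hR := h.fst.radius_pos
  have hn : (1 : ℝ) ≤ n := by
    have hpos : 0 < ‖x0‖ := hx0 ▸ hR
    rw [Nat.one_le_cast, Nat.one_le_iff_ne_zero]
    rintro rfl
    exact hpos.ne' (by rw [Subsingleton.elim x0 0, norm_zero])
  have hsub : Icc 0 (R / 2) ⊆ Icc 0 R := Icc_subset_Icc_right (half_le_self hR.le)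
  have hdist : ∀ y ∈ Icc 0 (R / 2), 0 < R - y := fun y hy => by linarith [hy.2]
  exact {
    width_pos := half_pos hR
    continuousOn := (h.fst.continuousOn_raySlice hx0).mono (prod_mono_left hsub)
    nonneg y hy t ht := h.fst.nonneg (rayPoint_mem_closedBall hR hx0 (hsub hy)) ht
    antitoneOn t ht y hy z hz hyz := by
      have hy' := rayPoint_mem_closedBall hR hx0 (hsub hy)
      refine h.mono_norm ?_ (mem_closedBall_zero_iff.1 hy') ht
      rw [norm_rayPoint hR hx0 (hsub hy).2, norm_rayPoint hR hx0 (hsub hz).2]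
      exact sub_le_sub_left hyz R
    deriv_fst t ht y hy := (h.fst.hasDerivWithinAt_raySlice hx0 ht (hsub hy)).mono hsub
    deriv_deriv_fst t ht y hy := (h.fst.hasDerivWithinAt_raySliceY hx0 ht (hsub hy)).mono hsub
    continuousOn_ayy t ht := (h.fst.continuousOn_raySliceYY hx0 ht).mono hsub
    continuousOn_drift := continuousOn_const.div (by fun_prop) fun y hy => (hdist y hy).ne'
    continuousOn_source t ht := continuousOn_const.mul
      ((h.snd.contDiffOn_raySlice hx0 ht).continuousOn.mono hsub).rexp
    drift_nonneg y hy := div_nonneg (sub_nonneg.2 hn) (hdist y hy).le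
    source_nonneg y _ t _ := mul_nonneg h.fst.coeff_pos.le (exp_pos _).le
    deriv_time t ht y hy := h.hasDerivAt_raySlice_time hx0 ht ⟨hy.1, by linarith [hy.2]⟩
    lipschitz_time t ht := by
      obtain ⟨C, s, hs, hC⟩ := h.exists_lipschitzOnWith_time ht
      exact ⟨C, s, hs, fun y hy => hC _ (rayPoint_mem_closedBall hR hx0 (hsub hy))⟩ }

end SolutionPair

end RaySlices

/-! ### Size of the error terms -/

lemma tendsto_log_pow_mul_rpow_neg (k : ℕ) {s : ℝ} (hs : 0 < s) :
    Tendsto (fun K : ℝ => log K ^ k * K ^ (-s)) atTop (𝓝 0) := by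
  refine (isLittleO_log_rpow_rpow_atTop k hs).tendsto_div_nhds_zero.congr' ?_
  filter_upwards [eventually_gt_atTop 0] with K hK
  rw [rpow_natCast, rpow_neg hK.le, div_eq_mul_inv]

lemma tendsto_log_pow_mul_rpow_mul_exp_neg (k : ℕ) (p : ℝ) {b : ℝ} (hb : 0 < b) :
    Tendsto (fun K : ℝ => log K ^ k * (K ^ p * exp (-b * K))) atTop (𝓝 0) := by
  have hprod := (tendsto_log_pow_mul_rpow_neg k one_pos).mul
    (tendsto_rpow_mul_exp_neg_mul_atTop_nhds_zero (p + 1) b hb)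
  rw [mul_zero] at hprod
  refine hprod.congr' ?_
  filter_upwards [eventually_gt_atTop 0] with K hK
  rw [rpow_add hK, rpow_one, rpow_neg hK.le, rpow_one]
  field_simp

lemma tendsto_log_sq_div_sqrt {s : ℝ} (hs : 0 < s) :
    Tendsto (fun K : ℝ => log K ^ 2 / √(1 + K ^ s)) atTop (𝓝 0) := by
  refine squeeze_zero' (Eventually.of_forall fun K => by positivity) ?_
    (tendsto_log_pow_mul_rpow_neg 2 (half_pos hs))
  filter_upwards [eventually_gt_atTop 0] with K hK
  have hsqrt : K ^ (s / 2) ≤ √(1 + K ^ s) := by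
    rw [← mul_one_div, rpow_mul hK.le, ← sqrt_eq_rpow]
    exact sqrt_le_sqrt (le_add_of_nonneg_left zero_le_one)
  rw [rpow_neg hK.le, ← div_eq_mul_inv]
  gcongr

lemma tendsto_log_mul_excessError {δ : ℝ} (hδ : 0 < δ) (c l : ℝ) :
    Tendsto (fun K : ℝ => log K *
      BoundaryProfile.excessError K δ (log K) c (l * K) (K ^ (-(3 / 2) : ℝ))) atTop (𝓝 0) := by
  have hlim := ((((((tendsto_log_pow_mul_rpow_mul_exp_neg 2 0 hδ).const_mul 2).add
    ((tendsto_log_sq_div_sqrt (by norm_num : (0 : ℝ) < 1 / 2)).const_mul 2)).add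
    ((tendsto_log_pow_mul_rpow_neg 2 (by norm_num : (0 : ℝ) < 3 / 2)).const_mul (8 / δ ^ 2))).add
    ((tendsto_log_pow_mul_rpow_neg 1 (by norm_num : (0 : ℝ) < 1 / 2)).const_mul l)).add
    ((tendsto_log_pow_mul_rpow_neg 2 (by norm_num : (0 : ℝ) < 1 / 2)).const_mul (2 * c))).add
    ((tendsto_log_pow_mul_rpow_mul_exp_neg 2 (1 / 2) (half_pos hδ)).const_mul 4)
  simp only [mul_zero, add_zero] at hlim
  refine hlim.congr' ?_
  filter_upwards [eventually_gt_atTop 0] with K hK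
  have hone : K * K ^ (-(3 / 2) : ℝ) = K ^ (-(1 / 2) : ℝ) := by
    rw [← rpow_one_add' hK.le (by norm_num)]
    norm_num
  have htwo : K ^ 2 * K ^ (-(3 / 2) : ℝ) = K ^ (1 / 2 : ℝ) := by
    rw [← rpow_natCast K 2, ← rpow_add hK]
    norm_num
  have hexp : ∀ b, exp (-K * b) = exp (-b * K) := fun b => by ring_nf
  rw [BoundaryProfile.excessError, hexp, hexp, htwo, ← hone, ← htwo, rpow_zero]
  ring

/-! ### Life time of a profile that reaches a high boundary value -/

-- With `x = L - w` this is `exp (-x) ≤ 1 / (1 + x) ≤ 1 - x / (2 L)`, valid for `0 ≤ x ≤ 2 L - 1`.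
lemma exp_le_exp_mul_chord {L w : ℝ} (hL : 1 ≤ L) (h0 : 0 ≤ w) (h1 : w ≤ L) :
    exp w ≤ exp L * (1 - 1 / (2 * L) * L) + 1 / (2 * L) * exp L * w := by
  have : 0 < L := one_pos.trans_le hL
  have hinv : exp (-(L - w)) ≤ 1 / (1 + (L - w)) := by
    rw [exp_neg, ← one_div]
    exact one_div_le_one_div_of_le (by linarith) (by linarith [add_one_le_exp (L - w)])
  have hchord : 1 / (1 + (L - w)) ≤ 1 - (L - w) / (2 * L) := by
    have hgap : (1 - (L - w) / (2 * L)) * (1 + (L - w)) =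
        1 + (L - w) * (L - 1 + w) / (2 * L) := by field_simp; ring
    rw [div_le_iff₀ (by linarith), hgap, le_add_iff_nonneg_right]
    exact div_nonneg (mul_nonneg (by linarith) (by linarith)) (by linarith)
  calc exp w = exp L * exp (-(L - w)) := by rw [← exp_add]; ring_nf
    _ ≤ exp L * (1 - (L - w) / (2 * L)) :=
        mul_le_mul_of_nonneg_left (hinv.trans hchord) (exp_pos L).le
    _ = exp L * (1 - 1 / (2 * L) * L) + 1 / (2 * L) * exp L * w := by field_simp; ring

lemma neg_log_one_sub_le {ε : ℝ} (h0 : 0 ≤ ε) (h1 : ε ≤ 1 / 2) : -log (1 - ε) ≤ 2 * ε := by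
  have hpos : 0 < 1 - ε := by linarith
  have hinv : (1 - ε)⁻¹ ≤ 1 + 2 * ε := by
    rw [inv_le_iff_one_le_mul₀ hpos]
    nlinarith
  linarith [one_sub_inv_le_log_of_pos hpos]

namespace BoundaryProfile

variable {δ T K θ t0 c S0 : ℝ} {k : ℝ → ℝ} {a ay ayy S : ℝ → ℝ → ℝ}

lemma layerLevel_le (hK : 0 < K) (hKδ : exp (-K * δ) ≤ 1 / 2) :
    layerLevel K δ ≤ log K + 2 * exp (-K * δ) := by
  rw [layerLevel, log_div hK.ne' (by linarith)]
  linarith [neg_log_one_sub_le (exp_pos (-K * δ)).le hKδ]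

-- The factor `1 + η` with `η = 1 / (2 L)` leaves a gain of `1 / (2 L) - 1 / (4 L) - 1 / (8 L)`.
lemma add_one_div_le_of_gain {L A E d ε : ℝ} (hL : 1 ≤ L) (hε : 0 ≤ ε)
    (hgain : A - (1 + 1 / (2 * L)) * E ≤ 1 / 2 + d) (hd : L * (L - A + d + 4 * ε) ≤ 1 / 4) :
    L + 2 * ε - 1 + 1 / (8 * L) ≤ E := by
  have hL0 : 0 < L := one_pos.trans_le hL
  have herr : L - A + d + 4 * ε ≤ 1 / (4 * L) := by
    rw [le_div_iff₀ (by positivity)]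
    linarith
  have hinv : 1 / L ≤ 1 := by rw [div_le_one hL0]; exact hL
  have hexpand : (1 + 1 / (2 * L)) * (L + 2 * ε - 1 + 1 / (8 * L)) =
      L - 1 / 2 - 1 / (4 * L) + (1 / L * (1 / L - 2) / 16 + 2 * ε + ε * (1 / L)) := by
    field_simp; ring
  have hpos : 0 < 1 / L := by positivity
  refine le_of_mul_le_mul_left ?_ (by positivity : 0 < 1 + 1 / (2 * L))
  rw [hexpand]
  nlinarith

lemma sq_mul_sub_le_of_boundary (h : BoundaryProfile δ T k a ay ayy S) (hK : exp 1 ≤ K)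
    (hKδ : exp (-K * δ) ≤ 1 / 2) (hθ : 0 ≤ θ) (hθt : θ < t0) (ht0 : t0 < T)
    (hflux : ∀ t ∈ Ioo 0 T, exp (a 0 t) ≤ -ay 0 t)
    (hflux' : ∀ t ∈ Icc (t0 - θ) t0, -ay 0 t ≤
      K * (1 - 1 / (2 * log K) * log K) + 1 / (2 * log K) * K * a 0 t)
    (ha : ∀ t ∈ Icc (t0 - θ) t0, a 0 t ≤ log K) (hk : ∀ y ∈ Icc 0 δ, k y ≤ c)
    (hS : ∀ y ∈ Icc 0 δ, ∀ t ∈ Icc (t0 - θ) t0, S y t ≤ S0)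
    (herr : log K * (log K - a 0 t0 + excessError K δ (log K) c S0 θ + 4 * exp (-K * δ)) ≤
      1 / 4) :
    K ^ 2 * (T - t0) ≤ log (8 * log K) + 1 := by
  have hK0 : 0 < K := (exp_pos 1).trans_le hK
  have hL : 1 ≤ log K := (le_log_iff_exp_le hK0).2 hK
  have : 0 < log K := one_pos.trans_le hL
  have hηL : 1 / (2 * log K) * log K = 1 / 2 := by field_simp
  have hη : 1 / (2 * log K) ∈ Icc (0 : ℝ) 1 :=
    ⟨by positivity, by rw [div_le_one (by positivity)]; linarith⟩
  have hgain := h.boundary_sub_expMean_le hK0 hη (by rw [hηL]; norm_num) (sub_pos.2 hθt) ht0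
    (sub_le_self t0 hθ) ha hk hS hflux'
  rw [hηL, sub_sub_cancel] at hgain
  have hmean := add_one_div_le_of_gain (E := expMean K δ a 0 t0) hL (exp_pos (-K * δ)).le
    (by linarith) herr
  have hlife := h.sq_mul_sub_le_log_add_one hK0 hflux (hθ.trans_lt hθt) (x0 := 1 / (8 * log K))
    (by positivity) (by rw [div_le_one (by positivity)]; linarith)
    (by linarith [layerLevel_le hK0 hKδ])
  rwa [one_div_one_div] at hlife

end BoundaryProfile

/-! ### The rate -/

lemma exp_half_add_le (a b : ℝ) : exp ((a + b) / 2) ≤ (exp a + exp b) / 2 := by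
  have hconv := convexOn_exp.2 (mem_univ a) (mem_univ b) one_half_pos.le one_half_pos.le
    (by norm_num)
  simp only [smul_eq_mul] at hconv
  calc exp ((a + b) / 2) = exp (1 / 2 * a + 1 / 2 * b) := by ring_nf
    _ ≤ 1 / 2 * exp a + 1 / 2 * exp b := hconv
    _ = (exp a + exp b) / 2 := by ring

lemma eventually_log_mul_log_add_one_le_rpow {c s : ℝ} (hc : 0 < c) (hs : 0 < s) :
    ∀ᶠ K : ℝ in atTop, log (c * log K) + 1 ≤ K ^ s := by
  have hlog := (tendsto_log_pow_mul_rpow_neg 1 hs).const_mul c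
  rw [mul_zero] at hlog
  filter_upwards [hlog.eventually (ge_mem_nhds one_pos), eventually_gt_atTop 0,
    tendsto_log_atTop.eventually_gt_atTop 0] with K hK hK0 hL
  rw [pow_one, rpow_neg hK0.le, ← mul_assoc, ← div_eq_mul_inv,
    div_le_one (rpow_pos_of_pos hK0 s)] at hK
  linarith [log_le_sub_one_of_pos (mul_pos hc hL)]

section Rate

variable {n : ℕ} {R T l1 l2 t t0 y K d θ : ℝ} {u v : Eucl n → ℝ → ℝ} {x0 x : Eucl n}

lemma raySlice_zero : raySlice R x0 u 0 t = u x0 t := by rw [raySlice, rayPoint_zero]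

namespace Peak

lemma le_log (p : Peak R T u v x0 t0 K) (hx : x ∈ closedBall (0 : Eucl n) R) (ht : t ∈ Icc 0 t0) :
    u x t ≤ log K ∧ v x t ≤ log K :=
  (p.le x hx t ht).imp (le_log_iff_exp_le p.pos).2 (le_log_iff_exp_le p.pos).2

lemma log_sub_average_le (p : Peak R T u v x0 t0 K) (hd : |u x0 t0 - v x0 t0| ≤ d) :
    log K - (u x0 t0 + v x0 t0) / 2 ≤ d / 2 := by
  have hclose := abs_le.1 hd
  rcases p.eq with heq | heq <;> rw [← heq, log_exp] <;> linarith [hclose.1, hclose.2]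

end Peak

namespace SolutionPair

lemma exp_average_le_flux (h : SolutionPair R T l1 l2 u v) (hx0 : ‖x0‖ = R) (ht : t ∈ Ioo 0 T) :
    exp ((raySlice R x0 u 0 t + raySlice R x0 v 0 t) / 2) ≤
      -((raySliceY R x0 u 0 t + raySliceY R x0 v 0 t) / 2) := by
  rw [raySlice_zero, raySlice_zero, h.fst.raySliceY_zero hx0 ht, h.snd.raySliceY_zero hx0 ht]
  linarith [exp_half_add_le (u x0 t) (v x0 t)]

lemma flux_average_le (h : SolutionPair R T l1 l2 u v) (p : Peak R T u v x0 t0 K) (hK : exp 1 ≤ K)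
    (ht : t ∈ Ioc 0 t0) :
    -((raySliceY R x0 u 0 t + raySliceY R x0 v 0 t) / 2) ≤
      K * (1 - 1 / (2 * log K) * log K) +
        1 / (2 * log K) * K * ((raySlice R x0 u 0 t + raySlice R x0 v 0 t) / 2) := by
  have htT : t ∈ Ioo 0 T := ⟨ht.1, ht.2.trans_lt p.lt⟩
  have hL : 1 ≤ log K := (le_log_iff_exp_le p.pos).2 hK
  have hle := p.le_log p.mem_closedBall (Ioc_subset_Icc_self ht)
  have hu := exp_le_exp_mul_chord hL
    (h.fst.nonneg p.mem_closedBall (Ioo_subset_Ico_self htT)) hle.1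
  have hv := exp_le_exp_mul_chord hL
    (h.snd.nonneg p.mem_closedBall (Ioo_subset_Ico_self htT)) hle.2
  rw [exp_log p.pos] at hu hv
  rw [raySlice_zero, raySlice_zero, h.fst.raySliceY_zero p.norm_eq htT,
    h.snd.raySliceY_zero p.norm_eq htT]
  linarith

lemma source_average_le (h : SolutionPair R T l1 l2 u v) (p : Peak R T u v x0 t0 K)
    (hy : y ∈ Icc 0 (R / 2)) (ht : t ∈ Icc 0 t0) :
    (l1 * exp (raySlice R x0 v y t) + l2 * exp (raySlice R x0 u y t)) / 2 ≤ (l1 + l2) / 2 * K := by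
  have hR := h.fst.radius_pos
  have hle := p.le _ (rayPoint_mem_closedBall hR p.norm_eq
    (Icc_subset_Icc_right (half_le_self hR.le) hy)) t ht
  have hl1 := mul_le_mul_of_nonneg_left hle.2 h.fst.coeff_pos.le
  have hl2 := mul_le_mul_of_nonneg_left hle.1 h.snd.coeff_pos.le
  rw [raySlice, raySlice]
  linarith

lemma peak_sq_mul_sub_le (h : SolutionPair R T l1 l2 u v) (p : Peak R T u v x0 t0 K)
    (hK : exp 1 ≤ K) (hKR : exp (-K * (R / 2)) ≤ 1 / 2) (hθ : 0 ≤ θ) (hθT : θ < T / 2)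
    (hd : |u x0 t0 - v x0 t0| ≤ d)
    (herr : log K * (d / 2 + BoundaryProfile.excessError K (R / 2) (log K) (n / (R / 2))
      ((l1 + l2) / 2 * K) θ + 4 * exp (-K * (R / 2))) ≤ 1 / 4) :
    K ^ 2 * (T - t0) ≤ log (8 * log K) + 1 := by
  have hR := h.fst.radius_pos
  have hθt : θ < t0 := hθT.trans_le p.half_le
  have hL : 0 ≤ log K := zero_le_one.trans ((le_log_iff_exp_le p.pos).2 hK)
  have hpast : ∀ t ∈ Icc (t0 - θ) t0, t ∈ Ioc 0 t0 := fun t ht =>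
    ⟨(sub_pos.2 hθt).trans_le ht.1, ht.2⟩
  refine ((h.boundaryProfile_raySlice p.norm_eq).average
    (h.symm.boundaryProfile_raySlice p.norm_eq)).sq_mul_sub_le_of_boundary (c := n / (R / 2))
    hK hKR hθ hθt p.lt (fun t ht => h.exp_average_le_flux p.norm_eq ht)
    (fun t ht => h.flux_average_le p hK (hpast t ht)) (fun t ht => ?_) (fun y hy => ?_)
    (fun y hy t ht => h.source_average_le p hy (Ioc_subset_Icc_self (hpast t ht)))
    (le_trans ?_ herr)
  · rw [raySlice_zero, raySlice_zero]
    have hle := p.le_log p.mem_closedBall (Ioc_subset_Icc_self (hpast t ht))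
    linarith [hle.1, hle.2]
  · have := hy.2
    gcongr <;> linarith
  · rw [raySlice_zero, raySlice_zero]
    gcongr
    exact p.log_sub_average_le hd

lemma eventually_peak_sq_mul_sub_le (h : SolutionPair R T l1 l2 u v) (hT : 0 < T) :
    ∀ᶠ K in atTop, ∀ x0 t0, Peak R T u v x0 t0 K → K ^ 2 * (T - t0) ≤ log (8 * log K) + 1 := by
  obtain ⟨γ, hγ, D, hclose⟩ := h.exists_eventually_peak_abs_sub_le hT
  have hδ : 0 < R / 2 := half_pos h.fst.radius_pos
  have herr := (((tendsto_log_pow_mul_rpow_neg 1 hγ).const_mul (D / 2)).add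
    (tendsto_log_mul_excessError hδ (n / (R / 2)) ((l1 + l2) / 2))).add
    ((tendsto_log_pow_mul_rpow_mul_exp_neg 1 0 hδ).const_mul 4)
  have hexp := tendsto_log_pow_mul_rpow_mul_exp_neg 0 0 hδ
  have hθ := tendsto_rpow_neg_atTop (by norm_num : (0 : ℝ) < 3 / 2)
  simp only [mul_zero, add_zero] at herr
  filter_upwards [hclose, eventually_ge_atTop (exp 1),
    herr.eventually (ge_mem_nhds (by norm_num : (0 : ℝ) < 1 / 4)),
    hexp.eventually (ge_mem_nhds one_half_pos), hθ.eventually (gt_mem_nhds (half_pos hT))]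
    with K hclose hK herr hexp hθ x0 t0 p
  have hswap : -(R / 2) * K = -K * (R / 2) := by ring
  rw [hswap, rpow_zero] at hexp herr
  refine h.peak_sq_mul_sub_le p hK (by simpa using hexp) (rpow_nonneg p.pos.le _) hθ
    (hclose x0 t0 p) (le_trans (le_of_eq ?_) herr)
  ring

lemma eventually_peak_mul_rpow_le_one (h : SolutionPair R T l1 l2 u v) (hT : 0 < T) {p : ℝ}
    (hp : 1 / 2 < p) :
    ∀ᶠ K in atTop, ∀ x0 t0, Peak R T u v x0 t0 K → K * (T - t0) ^ p ≤ 1 := by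
  have hp0 : 0 < p := one_half_pos.trans hp
  have hs : 0 < 2 - 1 / p := by
    rw [sub_pos, div_lt_iff₀ hp0]
    linarith
  filter_upwards [h.eventually_peak_sq_mul_sub_le hT,
    eventually_log_mul_log_add_one_le_rpow (by norm_num : (0 : ℝ) < 8) hs]
    with K hrate hlog x0 t0 hpeak
  have hK := hpeak.pos
  have hsub : 0 ≤ T - t0 := sub_nonneg.2 hpeak.lt.le
  have hbase : K ^ (1 / p) * (T - t0) ≤ 1 := by
    refine le_of_mul_le_mul_left ?_ (rpow_pos_of_pos hK (2 - 1 / p))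
    rw [← mul_assoc, ← rpow_add hK, sub_add_cancel, rpow_two, mul_one]
    exact (hrate x0 t0 hpeak).trans hlog
  calc K * (T - t0) ^ p = (K ^ (1 / p) * (T - t0)) ^ p := by
        rw [mul_rpow (rpow_nonneg hK.le _) hsub, ← rpow_mul hK.le, one_div_mul_cancel hp0.ne',
          rpow_one]
    _ ≤ 1 := rpow_le_one (by positivity) hbase hp0.le

lemma exists_max_time (h : SolutionPair R T l1 l2 u v) (hx0 : ‖x0‖ = R) (ht : t ∈ Ico 0 T) :
    ∃ s ∈ Icc 0 t, ∀ x ∈ closedBall (0 : Eucl n) R, ∀ r ∈ Icc 0 t,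
      u x r ≤ max (u x0 s) (v x0 s) ∧ v x r ≤ max (u x0 s) (v x0 s) := by
  have hx0m : x0 ∈ closedBall (0 : Eucl n) R := mem_closedBall_zero_iff.2 hx0.le
  have hmap : MapsTo (fun s : ℝ => (x0, s)) (Icc 0 t) (closedBall (0 : Eucl n) R ×ˢ Icc 0 t) :=
    fun s hs => ⟨hx0m, hs⟩
  have hu := (h.fst.continuousOn_Icc le_rfl ht.2).comp (by fun_prop) hmap
  have hv := (h.snd.continuousOn_Icc le_rfl ht.2).comp (by fun_prop) hmap
  obtain ⟨s, hs, hmax⟩ := isCompact_Icc.exists_isMaxOn (nonempty_Icc.2 ht.1) (hu.sup hv)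
  refine ⟨s, hs, fun x hx r hr => ?_⟩
  have hxx0 : ‖x‖ ≤ ‖x0‖ := hx0 ▸ mem_closedBall_zero_iff.1 hx
  have hrT : r ∈ Ico 0 T := ⟨hr.1, hr.2.trans_lt ht.2⟩
  have hmono : max (u x0 r) (v x0 r) ≤ max (u x0 s) (v x0 s) := hmax hr
  exact ⟨(h.mono_norm hxx0 hx0.le hrT).trans ((le_max_left _ _).trans hmono),
    (h.symm.mono_norm hxx0 hx0.le hrT).trans ((le_max_right _ _).trans hmono)⟩

lemma exists_peak_or_le (h : SolutionPair R T l1 l2 u v) (hT : 0 < T) :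
    ∃ M, ∀ x0 : Eucl n, ‖x0‖ = R → ∀ t ∈ Ico 0 T, ∃ m, (u x0 t ≤ m ∧ v x0 t ≤ m) ∧
      (m ≤ M ∨ ∃ t0 ≤ t, Peak R T u v x0 t0 (exp m)) := by
  obtain ⟨M, hM⟩ := h.exists_le (half_lt_self hT)
  refine ⟨M, fun x0 hx0 t ht => ?_⟩
  have hx0m : x0 ∈ closedBall (0 : Eucl n) R := mem_closedBall_zero_iff.2 hx0.le
  obtain ⟨t0, ht0, hle⟩ := h.exists_max_time hx0 ht
  refine ⟨max (u x0 t0) (v x0 t0), hle x0 hx0m t ⟨ht.1, le_rfl⟩, ?_⟩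
  rcases le_total t0 (T / 2) with hearly | hlate
  · exact Or.inl (max_le_iff.2 (hM x0 hx0m t0 ⟨ht0.1, hearly⟩))
  · refine Or.inr ⟨t0, ht0.2, hx0, hlate, ht0.2.trans_lt ht.2, fun x hx r hr => ?_, ?_⟩
    · exact (hle x hx r ⟨hr.1, hr.2.trans ht0.2⟩).imp exp_le_exp.2 exp_le_exp.2
    · exact (max_choice (u x0 t0) (v x0 t0)).imp (fun hmax => by rw [hmax])
        fun hmax => by rw [hmax]

lemma exists_le_log_sub_mul_log (h : SolutionPair R T l1 l2 u v) (hT : 0 < T) {p : ℝ}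
    (hp : 1 / 2 < p) :
    ∃ C, 0 < C ∧ ∀ t ∈ Ioo 0 T, ∀ x : Eucl n, ‖x‖ = R →
      u x t ≤ log C - p * log (T - t) ∧ v x t ≤ log C - p * log (T - t) := by
  obtain ⟨M, hM⟩ := h.exists_peak_or_le hT
  obtain ⟨K₀, hrate⟩ := eventually_atTop.1 (h.eventually_peak_mul_rpow_le_one hT hp)
  set K₁ := max K₀ (exp M)
  have : 0 < K₁ := lt_max_of_lt_right (exp_pos M)
  refine ⟨max 1 (K₁ * T ^ p), by positivity, fun t ht x hx => ?_⟩
  obtain ⟨m, hm, hcases⟩ := hM x hx t (Ioo_subset_Ico_self ht)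
  have hTt : 0 < T - t := sub_pos.2 ht.2
  have hbound : exp m * (T - t) ^ p ≤ max 1 (K₁ * T ^ p) := by
    have : 0 ≤ p := one_half_pos.le.trans hp.le
    rcases le_or_gt (exp m) K₁ with hlow | hhigh
    · refine le_max_of_le_right ?_
      gcongr
      linarith [ht.1]
    · obtain ⟨t0, ht0, hpeak⟩ := hcases.resolve_left fun hmM =>
        hhigh.not_ge (le_max_of_le_right (exp_le_exp.2 hmM))
      refine le_max_of_le_left (le_trans ?_
        (hrate (exp m) ((le_max_left _ _).trans hhigh.le) x t0 hpeak))
      gcongr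
  have hmlog : m ≤ log (max 1 (K₁ * T ^ p)) - p * log (T - t) := by
    rw [← log_rpow hTt, ← log_div (by positivity) (by positivity),
      le_log_iff_exp_le (by positivity), le_div_iff₀ (by positivity)]
    exact hbound
  exact ⟨hm.1.trans hmlog, hm.2.trans hmlog⟩

end SolutionPair

end Rate

theorem upper_blowup_rate_general {n : ℕ} {R T lam1 lam2 p : ℝ} (hR : 0 < R) (hT : 0 < T)
    (hlam1 : 0 < lam1) (hlam2 : 0 < lam2) (hp : 1 / 2 < p)
    {u v : EuclideanSpace ℝ (Fin n) → ℝ → ℝ} {u₀ v₀ : EuclideanSpace ℝ (Fin n) → ℝ}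
    (hdata : AdmissibleData n R u₀ v₀)
    (hsol : IsClassicalSolution n R T lam1 lam2 u v u₀ v₀) :
    ∃ C : ℝ, 0 < C ∧ ∀ t ∈ Ioo (0 : ℝ) T, ∀ x : EuclideanSpace ℝ (Fin n), ‖x‖ = R →
      u x t ≤ log C - p * log (T - t) ∧ v x t ≤ log C - p * log (T - t) :=
  (hsol.solutionPair hR hlam1 hlam2 hdata).exists_le_log_sub_mul_log hT hp

/-- Theorem 3.2 (upper blow-up rate): let `(u,v)` be a classical solution of problem (1.1)
blowing up at time `T < ∞`.  Then there is a constant `C > 0` such that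
`u(R,t) ≤ log C − log(T−t)` and `v(R,t) ≤ log C − log(T−t)` for all `t ∈ (0,T)`. -/
theorem upper_blowup_rate {n : ℕ} (hn : 1 ≤ n) {R T lam1 lam2 : ℝ}
    (hR : 0 < R) (hT : 0 < T) (hlam1 : 0 < lam1) (hlam2 : 0 < lam2)
    {u v : EuclideanSpace ℝ (Fin n) → ℝ → ℝ} {u₀ v₀ : EuclideanSpace ℝ (Fin n) → ℝ}
    (hdata : AdmissibleData n R u₀ v₀)
    (hsol : IsClassicalSolution n R T lam1 lam2 u v u₀ v₀)
    (hblow : BlowsUpAt n R T u v) :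
    ∃ C : ℝ, 0 < C ∧ ∀ t ∈ Ioo (0 : ℝ) T, ∀ x : EuclideanSpace ℝ (Fin n), ‖x‖ = R →
      u x t ≤ Real.log C - Real.log (T - t) ∧
      v x t ≤ Real.log C - Real.log (T - t) := by
  simpa using upper_blowup_rate_general hR hT hlam1 hlam2 one_half_lt_one hdata hsol
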